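/- arXiv:1811.04394 — 5 statements merged into one kernel-verified Lean document; each statement's English description precedes it below -/
import Mathlib

section
/- PSL(2, ℤ[ω]) has exactly two characters of Zariski-dense representations into PSL(2, ℂ), namely those of the inclusion and its complex conjugate. Precisely: for every group homomorphism ρ : PSL(2, ℤ[ω]) → PSL(2, ℂ) whose image is Zariski-dense — equivalently, since every proper Zariski-closed subgroup of PSL(2, ℂ) is virtually solvable, whose image is not virtually solvable — there exist a ring embedding σ : ℤ[ω] → ℂ and an element g ∈ PSL(2, ℂ) such that ρ(x) = g · PSL(2,σ)(x) · g⁻¹ for all x, where PSL(2,σ) is the homomorphism induced by applying σ entrywise. (ℤ[ω] has exactly two ring embeddings into ℂ, complex conjugates of each other.) -/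
/-- The Eisenstein integers `ℤ[ω]`, the ring of integers of `ℚ(ω)` with
`ω² + ω + 1 = 0`. -/
abbrev Eisenstein : Type := NumberField.RingOfIntegers (CyclotomicField 3 ℚ)

/-- `PSL(2,R)`: the quotient of `SL(2,R)` by its center. -/
abbrev PSL2 (R : Type*) [CommRing R] : Type _ :=
  Matrix.SpecialLinearGroup (Fin 2) R ⧸
    Subgroup.center (Matrix.SpecialLinearGroup (Fin 2) R)

/-- Applying a ring homomorphism entrywise maps the center of `SL(2,R)` into
the center of `SL(2,S)`. -/
lemma center_le_comap_slMap {R S : Type*} [CommRing R] [CommRing S] (f : R →+* S) :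
    Subgroup.center (Matrix.SpecialLinearGroup (Fin 2) R) ≤
      (Subgroup.center (Matrix.SpecialLinearGroup (Fin 2) S)).comap
        (Matrix.SpecialLinearGroup.map f) := by
  intro A hA
  rw [Subgroup.mem_comap, Matrix.SpecialLinearGroup.mem_center_iff]
  obtain ⟨r, hr, hrA⟩ := Matrix.SpecialLinearGroup.mem_center_iff.mp hA
  refine ⟨f r, by rw [← map_pow, hr, map_one], ?_⟩
  ext i j
  simp [← hrA, Matrix.scalar_apply, Matrix.diagonal_apply]
  aesop

/-- The homomorphism `PSL(2,R) → PSL(2,S)` induced by applying a ring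
homomorphism `f : R → S` entrywise. -/
def PSL2Map {R S : Type*} [CommRing R] [CommRing S] (f : R →+* S) :
    PSL2 R →* PSL2 S :=
  QuotientGroup.map _ _ (Matrix.SpecialLinearGroup.map f) (center_le_comap_slMap f)

/-- A group is virtually solvable if it has a solvable subgroup of finite
index. -/
def VirtuallySolvable (G : Type*) [Group G] : Prop :=
  ∃ H : Subgroup G, IsSolvable H ∧ H.FiniteIndex

/-!
Write `S = !![0, -1; 1, 0]`, `U x = !![1, x; 0, 1]` and `D u = !![u, 0; 0, u⁻¹]`. As `ℤ[ω]` is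
Euclidean, `S`, `U 1` and `D ω` generate `SL(2, ℤ[ω])`, so a representation is determined by the
images `s`, `u`, `d` of these three elements.

If `d` and `u` commute, then `U (ω - 1)` lies in the kernel, and if `u ^ 2 = 1`, then `U 2` does.
Every residue class modulo `ω - 1` or `2` contains `0` or a unit, so in both cases the image is
covered by the images of the Bruhat cells `B` and `B S B`, of which only finitely many elements
remain, and the image is finite.

Otherwise `d ^ 3 = 1` allows us to conjugate `d` to `D w` with `w` a primitive cube root of unity.
The relations `(u * d) ^ 3 = (u * d⁻¹) ^ 3 = 1` say that the products of a lift of `u` with `D w`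
and `D w⁻¹` have trace `±1`. As the lift of `u` has nonzero trace, this forces equal diagonal
entries `±1`, hence a vanishing off-diagonal entry, and after a further conjugation (which may
replace `w` by `w⁻¹`) `u = U 1`. The relations `d * s * d = s` and
`s * u * s = u⁻¹ * s * u⁻¹` then force `s = S`, and the representation is induced by the embedding
sending `ω` to `w`.
-/

open Matrix MatrixGroups

section SpecialLinearGroupTwo

variable {R : Type*} [CommRing R]

lemma SL2_ext_iff {A B : SL(2, R)} :
    A = B ↔ A 0 0 = B 0 0 ∧ A 0 1 = B 0 1 ∧ A 1 0 = B 1 0 ∧ A 1 1 = B 1 1 := by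
  simp only [Matrix.SpecialLinearGroup.ext_iff A B, Fin.forall_fin_two, and_assoc]

lemma SL2_mul_sub_mul_eq_one (A : SL(2, R)) : A 0 0 * A 1 1 - A 0 1 * A 1 0 = 1 :=
  (det_fin_two A.1).symm.trans A.det_coe

/-- The upper unipotent matrices `!![1, x; 0, 1]`, as an additive character so that
Mathlib's lemmas on sums, negatives and integer multiples apply. -/
def upperUnipotent : AddChar R SL(2, R) where
  toFun := Matrix.SpecialLinearGroup.transvection zero_ne_one
  map_zero_eq_one' := Matrix.SpecialLinearGroup.transvection_coeff_zero _
  map_add_eq_mul' := Matrix.SpecialLinearGroup.transvection_add _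

/-- The diagonal torus `!![u, 0; 0, u⁻¹]` of `SL(2, R)`. -/
def diagTorus : Rˣ →* SL(2, R) where
  toFun u := ⟨!![(u : R), 0; 0, (u⁻¹ : Rˣ)], by simp⟩
  map_one' := SL2_ext_iff.2 (by simp)
  map_mul' u v := Subtype.ext <| show
    !![((u * v : Rˣ) : R), 0; 0, ((u * v)⁻¹ : Rˣ)] =
      !![(u : R), 0; 0, (u⁻¹ : Rˣ)] * !![(v : R), 0; 0, (v⁻¹ : Rˣ)] by simp [mul_comm]

variable (R) in
/-- The matrix `!![0, -1; 1, 0]`, representing the nontrivial element of the Weyl group. -/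
def weylElement : SL(2, R) := ⟨!![0, -1; 1, 0], by simp⟩

@[simp]
lemma coe_upperUnipotent (x : R) :
    (upperUnipotent x : Matrix (Fin 2) (Fin 2) R) = !![1, x; 0, 1] := by
  ext i j
  fin_cases i <;> fin_cases j <;> simp [upperUnipotent, Matrix.SpecialLinearGroup.transvection_coe]

@[simp]
lemma coe_diagTorus (u : Rˣ) :
    (diagTorus u : Matrix (Fin 2) (Fin 2) R) = !![(u : R), 0; 0, (u⁻¹ : Rˣ)] := rfl

@[simp]
lemma coe_weylElement : (weylElement R : Matrix (Fin 2) (Fin 2) R) = !![0, -1; 1, 0] := rfl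

lemma diagTorus_mul_upperUnipotent (u : Rˣ) (x : R) :
    diagTorus u * upperUnipotent x = upperUnipotent (u ^ 2 * x) * diagTorus u := by
  simp [SL2_ext_iff, pow_two, mul_right_comm]

lemma weylElement_mul_weylElement : weylElement R * weylElement R = -1 := by
  simp [SL2_ext_iff]

lemma diagTorus_mul_weylElement (u : Rˣ) :
    diagTorus u * weylElement R = weylElement R * diagTorus u⁻¹ := by
  simp [SL2_ext_iff]

lemma weylElement_mul_upperUnipotent_mul_weylElement (u : Rˣ) :
    weylElement R * upperUnipotent (u : R) * weylElement R =
      upperUnipotent (-(u⁻¹ : Rˣ) : R) * weylElement R * upperUnipotent (-u : R) *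
        diagTorus u := by
  simp [SL2_ext_iff]

lemma map_upperUnipotent {S : Type*} [CommRing S] (f : R →+* S) (x : R) :
    Matrix.SpecialLinearGroup.map f (upperUnipotent x) = upperUnipotent (f x) := by
  simp [SL2_ext_iff]

lemma map_diagTorus {S : Type*} [CommRing S] (f : R →+* S) (u : Rˣ) :
    Matrix.SpecialLinearGroup.map f (diagTorus u) = diagTorus (Units.map f u) := by
  simp [SL2_ext_iff]

lemma map_weylElement {S : Type*} [CommRing S] (f : R →+* S) :
    Matrix.SpecialLinearGroup.map f (weylElement R) = weylElement S := by
  simp [SL2_ext_iff]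

lemma exists_eq_upperUnipotent_mul_diagTorus {A : SL(2, R)} (hA : A 1 0 = 0) :
    ∃ x u, A = upperUnipotent x * diagTorus u := by
  have hdet : A 0 0 * A 1 1 = 1 := by simpa [hA] using SL2_mul_sub_mul_eq_one A
  refine ⟨A 0 1 * A 0 0, ⟨A 0 0, A 1 1, hdet, by rw [mul_comm, hdet]⟩, ?_⟩
  simp [SL2_ext_iff, hA, mul_assoc, hdet]

lemma sq_eq_trace_smul_sub_one (A : SL(2, R)) :
    (A : Matrix (Fin 2) (Fin 2) R) ^ 2 = A.1.trace • A.1 - 1 := by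
  have hdet := SL2_mul_sub_mul_eq_one A
  ext i j
  fin_cases i <;> fin_cases j <;> simp [pow_two, mul_apply, trace_fin_two] <;>
    grind

lemma cube_eq_trace_smul_sub (A : SL(2, R)) :
    (A : Matrix (Fin 2) (Fin 2) R) ^ 3 =
      (A.1.trace ^ 2 - 1) • A.1 - A.1.trace • (1 : Matrix (Fin 2) (Fin 2) R) := by
  rw [pow_succ, sq_eq_trace_smul_sub_one, sub_mul, smul_mul_assoc, one_mul, ← pow_two,
    sq_eq_trace_smul_sub_one]
  module

lemma pow_three_eq_one_of_trace_eq_neg_one {A : SL(2, R)} (hA : A.1.trace = -1) :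
    A ^ 3 = 1 :=
  Subtype.ext <| (Matrix.SpecialLinearGroup.coe_pow A 3).trans <| by
    simp [cube_eq_trace_smul_sub, hA]

lemma exists_conj_eq_upperUnipotent_mul_diagTorus {A P : SL(2, R)} {w : Rˣ}
    (hP : ∀ i, (A * P) i 0 = w * P i 0) :
    ∃ x, P⁻¹ * A * P = upperUnipotent x * diagTorus w := by
  have hdet := SL2_mul_sub_mul_eq_one P
  have h₀₀ : (P⁻¹ * (A * P)) 0 0 = w := by
    rw [Matrix.SpecialLinearGroup.coe_mul, mul_apply, Fin.sum_univ_two, hP, hP,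
      Matrix.SpecialLinearGroup.coe_inv, adjugate_fin_two]
    simp only [of_apply, cons_val', cons_val_zero, cons_val_one, cons_val_fin_one]
    linear_combination w * hdet
  have h₁₀ : (P⁻¹ * (A * P)) 1 0 = 0 := by
    rw [Matrix.SpecialLinearGroup.coe_mul, mul_apply, Fin.sum_univ_two, hP, hP,
      Matrix.SpecialLinearGroup.coe_inv, adjugate_fin_two]
    simp only [of_apply, cons_val', cons_val_zero, cons_val_one, cons_val_fin_one]
    ring
  obtain ⟨x, u, h⟩ := exists_eq_upperUnipotent_mul_diagTorus h₁₀
  obtain rfl : w = u := Units.ext (by simpa [h] using h₀₀.symm)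
  exact ⟨x, by rw [mul_assoc, h]⟩

section Field

variable {K : Type*} [Field K]

lemma exists_SL2_col_of_ne_zero {v : Fin 2 → K} (hv : v ≠ 0) :
    ∃ P : SL(2, K), P 0 0 = v 0 ∧ P 1 0 = v 1 := by
  refine IsCoprime.exists_SL2_col ?_ 0
  obtain ⟨i, hi⟩ := Function.ne_iff.1 hv
  fin_cases i
  · exact ⟨(v 0)⁻¹, 0, by simpa using inv_mul_cancel₀ hi⟩
  · exact ⟨0, (v 1)⁻¹, by simpa using inv_mul_cancel₀ hi⟩

lemma exists_mul_col_eq_smul_col {A : SL(2, K)} {w : Kˣ} (hA : A.1.trace = w + (w⁻¹ : Kˣ)) :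
    ∃ P : SL(2, K), ∀ i, (A * P) i 0 = w * P i 0 := by
  obtain ⟨v, hv, hAv⟩ : ∃ v ≠ 0, (A.1 - scalar (Fin 2) (w : K)) *ᵥ v = 0 := by
    refine exists_mulVec_eq_zero_iff.2 ?_
    have hdet := SL2_mul_sub_mul_eq_one A
    rw [trace_fin_two] at hA
    rw [det_fin_two]
    simp only [Matrix.sub_apply, scalar_apply, diagonal_apply, ↓reduceIte, zero_ne_one,
      one_ne_zero]
    linear_combination hdet - w * hA - w.mul_inv
  obtain ⟨P, hP₀, hP₁⟩ := exists_SL2_col_of_ne_zero hv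
  refine ⟨P, fun i ↦ ?_⟩
  have hi := congrFun hAv i
  rw [sub_mulVec, Pi.sub_apply, Pi.zero_apply, sub_eq_zero] at hi
  fin_cases i <;>
    simpa [mulVec, dotProduct, mul_apply, Fin.sum_univ_two, hP₀, hP₁] using hi

lemma exists_conj_eq_diagTorus {A : SL(2, K)} {w : Kˣ} (hA : A.1.trace = w + (w⁻¹ : Kˣ))
    (hw : w ^ 2 ≠ 1) : ∃ P : SL(2, K), P⁻¹ * A * P = diagTorus w := by
  obtain ⟨P, hP⟩ := exists_mul_col_eq_smul_col hA
  obtain ⟨x, hx⟩ := exists_conj_eq_upperUnipotent_mul_diagTorus hP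
  have hw' : (1 : K) - w ^ 2 ≠ 0 := sub_ne_zero.2 fun h ↦ hw (Units.ext (by simpa using h.symm))
  refine ⟨P * upperUnipotent (x / (1 - w ^ 2)), ?_⟩
  calc
    _ = upperUnipotent (-(x / (1 - w ^ 2))) * (P⁻¹ * A * P) *
        upperUnipotent (x / (1 - w ^ 2)) := by
      rw [AddChar.map_neg_eq_inv]; group
    _ = upperUnipotent (-(x / (1 - w ^ 2))) * upperUnipotent x *
        upperUnipotent (w ^ 2 * (x / (1 - w ^ 2))) * diagTorus w := by
      rw [hx, mul_assoc _ (upperUnipotent x), mul_assoc, mul_assoc,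
        diagTorus_mul_upperUnipotent]
      group
    _ = diagTorus w := by
      have hsum : -(x / (1 - (w : K) ^ 2)) + x + w ^ 2 * (x / (1 - w ^ 2)) = 0 := by
        field_simp
        ring
      rw [← AddChar.map_add_eq_mul, ← AddChar.map_add_eq_mul, hsum, AddChar.map_zero_eq_one,
        one_mul]

end Field

end SpecialLinearGroupTwo

section Generation

variable {R : Type*} [CommRing R]

/-- `N` is an integer-valued Euclidean function on `R`: it decreases strictly under a suitable
division with remainder. -/
def IsEuclideanFunction (N : R → ℕ) : Prop :=
  ∀ a c, c ≠ 0 → ∃ q, N (a - q * c) < N c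

variable {H : Subgroup SL(2, R)}

lemma diagTorus_mem (hS : weylElement R ∈ H) (hU : ∀ x, upperUnipotent x ∈ H) (u : Rˣ) :
    diagTorus u ∈ H := by
  have hSUS := H.mul_mem (H.mul_mem hS (hU u)) hS
  rw [weylElement_mul_upperUnipotent_mul_weylElement] at hSUS
  exact (H.mul_mem_cancel_left (H.mul_mem (H.mul_mem (hU _) hS) (hU _))).1 hSUS

lemma IsEuclideanFunction.subgroup_eq_top {N : R → ℕ} (hN : IsEuclideanFunction N)
    (hS : weylElement R ∈ H) (hU : ∀ x, upperUnipotent x ∈ H) : H = ⊤ := by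
  refine (Subgroup.eq_top_iff' H).2 fun A ↦ ?_
  induction hn : N (A 1 0) using Nat.strong_induction_on generalizing A with
  | _ n ih =>
    by_cases hA : A 1 0 = 0
    · obtain ⟨x, u, rfl⟩ := exists_eq_upperUnipotent_mul_diagTorus hA
      exact H.mul_mem (hU x) (diagTorus_mem hS hU u)
    · obtain ⟨q, hq⟩ := hN (A 0 0) (A 1 0) hA
      have hlower : (weylElement R * upperUnipotent (-q) * A) 1 0 = A 0 0 - q * A 1 0 := by
        simp [mul_apply, Fin.sum_univ_two, sub_eq_add_neg]
      exact (H.mul_mem_cancel_left (H.mul_mem hS (hU _))).1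
        (ih _ (hn ▸ hlower ▸ hq) _ rfl)

lemma IsEuclideanFunction.closure_eq_top {N : R → ℕ} (hN : IsEuclideanFunction N) :
    Subgroup.closure (insert (weylElement R) (Set.range upperUnipotent)) = ⊤ :=
  hN.subgroup_eq_top (Subgroup.subset_closure (Set.mem_insert _ _))
    fun x ↦ Subgroup.subset_closure (Set.mem_insert_of_mem _ ⟨x, rfl⟩)

end Generation

section FiniteImage

variable {R : Type*} [CommRing R]

variable (R) in
/-- The union of the Bruhat cells `B` and `B w B`, where `B` is the group of upper triangular
matrices of `SL(2, R)` and `w` is the Weyl element. -/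
def bruhatCells : Set SL(2, R) :=
  {A | (∃ x u, A = upperUnipotent x * diagTorus u) ∨
    ∃ x y u, A = upperUnipotent x * weylElement R * upperUnipotent y * diagTorus u}

lemma one_mem_bruhatCells : 1 ∈ bruhatCells R :=
  .inl ⟨0, 1, by simp⟩

lemma upperUnipotent_mul_mem_bruhatCells (z : R) {A : SL(2, R)} (hA : A ∈ bruhatCells R) :
    upperUnipotent z * A ∈ bruhatCells R := by
  obtain ⟨x, u, rfl⟩ | ⟨x, y, u, rfl⟩ := hA
  · exact .inl ⟨z + x, u, by rw [AddChar.map_add_eq_mul, mul_assoc]⟩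
  · exact .inr ⟨z + x, y, u, by simp only [AddChar.map_add_eq_mul, mul_assoc]⟩

lemma weylElement_mul_upperUnipotent_mul_mem_bruhatCells {v : R} (hv : v = 0 ∨ IsUnit v) (y : R)
    (u : Rˣ) :
    weylElement R * (upperUnipotent v * weylElement R * upperUnipotent y * diagTorus u) ∈
      bruhatCells R := by
  obtain rfl | ⟨v, rfl⟩ := hv
  · refine .inl ⟨y, -u, ?_⟩
    simp only [SL2_ext_iff]
    simp
  · refine .inr ⟨-(v⁻¹ : Rˣ), -v + v ^ 2 * y, v * u, ?_⟩
    calc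
      _ = weylElement R * upperUnipotent (v : R) * weylElement R *
          (upperUnipotent y * diagTorus u) := by group
      _ = upperUnipotent (-(v⁻¹ : Rˣ) : R) * weylElement R * upperUnipotent (-v : R) *
          (diagTorus v * upperUnipotent y) * diagTorus u := by
        rw [weylElement_mul_upperUnipotent_mul_weylElement]; group
      _ = _ := by
        rw [diagTorus_mul_upperUnipotent, AddChar.map_add_eq_mul, map_mul diagTorus]; group

variable {G : Type*} [Group G] {φ : SL(2, R) →* G}

lemma map_weylElement_mul_mem_image_bruhatCells
    (hφ : ∀ x, ∃ v, (v = 0 ∨ IsUnit v) ∧ φ (upperUnipotent x) = φ (upperUnipotent v))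
    {g : G} (hg : g ∈ φ '' bruhatCells R) :
    φ (weylElement R) * g ∈ φ '' bruhatCells R := by
  obtain ⟨_, ⟨x, u, rfl⟩ | ⟨x, y, u, rfl⟩, rfl⟩ := hg
  · exact ⟨_, .inr ⟨0, x, u, rfl⟩, by simp [mul_assoc]⟩
  · obtain ⟨v, hv, hxv⟩ := hφ x
    exact ⟨_, weylElement_mul_upperUnipotent_mul_mem_bruhatCells hv y u, by simp [hxv]⟩

lemma map_mem_image_bruhatCells
    (hR : Subgroup.closure (insert (weylElement R) (Set.range upperUnipotent)) = ⊤)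
    (hφ : ∀ x, ∃ v, (v = 0 ∨ IsUnit v) ∧ φ (upperUnipotent x) = φ (upperUnipotent v))
    (A : SL(2, R)) : φ A ∈ φ '' bruhatCells R := by
  have hU (x : R) {g : G} : g ∈ φ '' bruhatCells R →
      φ (upperUnipotent x) * g ∈ φ '' bruhatCells R := by
    rintro ⟨B, hB, rfl⟩
    exact ⟨_, upperUnipotent_mul_mem_bruhatCells x hB, map_mul _ _ _⟩
  have hS {g : G} := map_weylElement_mul_mem_image_bruhatCells (g := g) hφ
  have hinv : (weylElement R)⁻¹ = weylElement R * (weylElement R * weylElement R) := by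
    simp only [weylElement_mul_weylElement, inv_eq_iff_mul_eq_one, ← mul_assoc]
    simp
  induction hR ▸ Subgroup.mem_top A using Subgroup.closure_induction_left with
  | one => exact ⟨1, one_mem_bruhatCells, rfl⟩
  | mul_left g hg B _ hB =>
    rw [map_mul]
    obtain rfl | ⟨x, rfl⟩ := hg
    exacts [hS hB, hU x hB]
  | inv_mul_cancel g hg B _ hB =>
    rw [map_mul]
    obtain rfl | ⟨x, rfl⟩ := hg
    · simpa only [hinv, map_mul, mul_assoc] using hS (hS (hS hB))
    · simpa only [AddChar.map_neg_eq_inv] using hU (-x) hB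

lemma finite_image_bruhatCells [Finite Rˣ]
    (hφ : ∀ x, ∃ v, (v = 0 ∨ IsUnit v) ∧ φ (upperUnipotent x) = φ (upperUnipotent v)) :
    (φ '' bruhatCells R).Finite := by
  have hT : (Set.range fun x : R ↦ φ (upperUnipotent x)).Finite := by
    refine ((Set.finite_range ((↑) : Rˣ → R)).insert 0 |>.image fun v ↦ φ (upperUnipotent v)).subset
      ?_
    rintro _ ⟨x, rfl⟩
    obtain ⟨v, hv, hxv⟩ := hφ x
    exact ⟨v, hv, hxv.symm⟩
  have hD : (Set.range fun u : Rˣ ↦ φ (diagTorus u)).Finite := Set.finite_range _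
  refine ((hT.mul hD).union (((hT.mul (Set.finite_singleton (φ (weylElement R)))).mul hT).mul
    hD)).subset ?_
  rintro _ ⟨_, ⟨x, u, rfl⟩ | ⟨x, y, u, rfl⟩, rfl⟩ <;> simp only [map_mul]
  · exact .inl (Set.mul_mem_mul ⟨x, rfl⟩ ⟨u, rfl⟩)
  · exact .inr (Set.mul_mem_mul (Set.mul_mem_mul (Set.mul_mem_mul ⟨x, rfl⟩ rfl) ⟨y, rfl⟩) ⟨u, rfl⟩)

lemma finite_range_of_forall_upperUnipotent [Finite Rˣ]
    (hR : Subgroup.closure (insert (weylElement R) (Set.range upperUnipotent)) = ⊤)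
    (hφ : ∀ x, ∃ v, (v = 0 ∨ IsUnit v) ∧ φ (upperUnipotent x) = φ (upperUnipotent v)) :
    Finite φ.range :=
  (finite_image_bruhatCells hφ).subset
    (Set.range_subset_iff.2 (map_mem_image_bruhatCells hR hφ)) |>.to_subtype

lemma finite_range_of_upperUnipotent_eq_one [Finite Rˣ] {p : R}
    (hR : Subgroup.closure (insert (weylElement R) (Set.range upperUnipotent)) = ⊤)
    (hp : ∀ x, ∃ v, (v = 0 ∨ IsUnit v) ∧ p ∣ x - v)
    (hφ : ∀ y, φ (upperUnipotent (p * y)) = 1) : Finite φ.range := by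
  refine finite_range_of_forall_upperUnipotent hR fun x ↦ ?_
  obtain ⟨v, hv, y, hy⟩ := hp x
  refine ⟨v, hv, ?_⟩
  rw [sub_eq_iff_eq_add.1 hy, AddChar.map_add_eq_mul, map_mul, hφ, one_mul]

end FiniteImage

namespace PSL2

section CommRing

variable {R : Type*} [CommRing R]

/-- The projection `SL(2, R) → PSL(2, R)`. -/
def mk : SL(2, R) →* PSL2 R := QuotientGroup.mk' _

lemma mk_surjective : Function.Surjective (mk : SL(2, R) →* PSL2 R) :=
  QuotientGroup.mk'_surjective _

lemma map_mk {S : Type*} [CommRing S] (f : R →+* S) (A : SL(2, R)) :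
    PSL2Map f (mk A) = mk (Matrix.SpecialLinearGroup.map f A) := rfl

lemma mk_neg (A : SL(2, R)) : mk (-A) = mk A := by
  refine (QuotientGroup.mk'_eq_mk' _).2 ⟨-1, ?_, by simp⟩
  exact Subgroup.mem_center_iff.2 fun B ↦ by simp

variable [IsDomain R]

lemma eq_one_or_eq_neg_one_of_mem_center {Z : SL(2, R)} (hZ : Z ∈ Subgroup.center SL(2, R)) :
    Z = 1 ∨ Z = -1 := by
  obtain ⟨r, hr, hrZ⟩ := Matrix.SpecialLinearGroup.mem_center_iff.1 hZ
  rw [Fintype.card_fin, sq_eq_one_iff] at hr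
  simp only [SL2_ext_iff, ← hrZ]
  obtain rfl | rfl := hr <;> simp

lemma mk_eq_mk {A B : SL(2, R)} : mk A = mk B ↔ A = B ∨ A = -B := by
  refine ⟨fun h ↦ ?_, by rintro (rfl | rfl) <;> simp [mk_neg]⟩
  obtain ⟨Z, hZ, rfl⟩ := (QuotientGroup.mk'_eq_mk' _).1 h
  obtain rfl | rfl := eq_one_or_eq_neg_one_of_mem_center hZ <;> simp

lemma mk_eq_one {A : SL(2, R)} : mk A = 1 ↔ A = 1 ∨ A = -1 := by
  rw [← map_one mk, mk_eq_mk]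

lemma mk_eq_one_of_eq_zero {A : SL(2, R)} (h₀₁ : A 0 1 = 0) (h₁₀ : A 1 0 = 0)
    (h : A 0 0 = A 1 1) : mk A = 1 := by
  have hdet := SL2_mul_sub_mul_eq_one A
  rw [h₀₁, h, zero_mul, sub_zero, mul_self_eq_one_iff] at hdet
  refine mk_eq_one.2 (hdet.imp (fun h₁ ↦ ?_) fun h₁ ↦ ?_) <;>
  · rw [SL2_ext_iff]
    simp [h₀₁, h₁₀, h, h₁]

lemma trace_sq_eq_one_of_mk_pow_three_eq_one {A : SL(2, R)} (h : mk A ^ 3 = 1) (hA : mk A ≠ 1) :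
    A.1.trace ^ 2 = 1 := by
  by_contra ht
  refine hA ?_
  obtain ⟨r, hr⟩ : ∃ r : R, (A : Matrix (Fin 2) (Fin 2) R) ^ 3 = r • 1 := by
    rw [← map_pow, mk_eq_one] at h
    obtain h | h := h <;> have := congrArg (fun B : SL(2, R) ↦ B.1) h
    · exact ⟨1, by simpa using this⟩
    · exact ⟨-1, by simpa using this⟩
  rw [cube_eq_trace_smul_sub, sub_eq_iff_eq_add] at hr
  have hentry (i j) : (A.1.trace ^ 2 - 1) * A i j =
      (r + A.1.trace) * (1 : Matrix (Fin 2) (Fin 2) R) i j := by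
    simpa [add_mul] using congr_fun₂ hr i j
  have hcancel {x y : R} := mul_left_cancel₀ (b := x) (c := y) (sub_ne_zero.2 ht)
  exact mk_eq_one_of_eq_zero (hcancel (by simp [hentry])) (hcancel (by simp [hentry]))
    (hcancel (by simp [hentry]))

lemma mk_sq_eq_one_of_trace_eq_zero {A : SL(2, R)} (hA : A.1.trace = 0) : mk A ^ 2 = 1 := by
  rw [← map_pow, mk_eq_one]
  refine .inr (Subtype.ext ?_)
  exact (Matrix.SpecialLinearGroup.coe_pow A 2).trans <| by simp [sq_eq_trace_smul_sub_one, hA]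

end CommRing

end PSL2

section PrimitiveCubeRoot

variable {R : Type*} [CommRing R] [IsDomain R] {w : Rˣ}

lemma sq_add_self_add_one_of_isPrimitiveRoot (hw : IsPrimitiveRoot w 3) :
    (w : R) ^ 2 + w + 1 = 0 := by
  have h := (IsPrimitiveRoot.coe_units_iff.2 hw).geom_sum_eq_zero (by norm_num)
  simp only [Finset.sum_range_succ, Finset.sum_range_zero] at h
  linear_combination h

lemma add_inv_eq_neg_one_of_isPrimitiveRoot (hw : IsPrimitiveRoot w 3) :
    (w : R) + (w⁻¹ : Rˣ) = -1 := by
  linear_combination (w⁻¹ : Rˣ) * sq_add_self_add_one_of_isPrimitiveRoot hw -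
    (w + 1 : R) * w.mul_inv

lemma upperUnipotent_mul_diagTorus_pow_three (x : R) (hw : IsPrimitiveRoot w 3) :
    (upperUnipotent x * diagTorus w) ^ 3 = 1 :=
  pow_three_eq_one_of_trace_eq_neg_one <| by
    simpa [trace_fin_two] using add_inv_eq_neg_one_of_isPrimitiveRoot hw

end PrimitiveCubeRoot

namespace PSL2

variable {K : Type*} [Field K]

lemma exists_conj_eq_mk_diagTorus {d : PSL2 K} {w : Kˣ} (hw : IsPrimitiveRoot w 3)
    (hd : d ^ 3 = 1) (hd₁ : d ≠ 1) : ∃ g, MulAut.conj g d = mk (diagTorus w) := by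
  obtain ⟨A, rfl, hA⟩ : ∃ A, mk A = d ∧ A.1.trace = -1 := by
    obtain ⟨A, rfl⟩ := mk_surjective d
    obtain hA | hA := sq_eq_one_iff.1 (trace_sq_eq_one_of_mk_pow_three_eq_one hd hd₁)
    · exact ⟨-A, mk_neg A, by simp [hA]⟩
    · exact ⟨A, rfl, hA⟩
  obtain ⟨P, hP⟩ := exists_conj_eq_diagTorus
    (hA.trans (add_inv_eq_neg_one_of_isPrimitiveRoot hw).symm)
    (hw.pow_ne_one_of_pos_of_lt (by norm_num) (by norm_num))
  exact ⟨(mk P)⁻¹, by simp [← hP]⟩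

lemma eq_mk_upperUnipotent_or_of_mul_eq_zero {M : SL(2, K)} (h : M 0 0 = M 1 1)
    (h' : M 0 1 * M 1 0 = 0) :
    ∃ b, mk M = mk (upperUnipotent b) ∨
      mk M = mk (weylElement K * upperUnipotent b * (weylElement K)⁻¹) := by
  wlog h₀₀ : M 0 0 = 1 generalizing M
  · have hM := SL2_mul_sub_mul_eq_one M
    rw [← h, h', sub_zero, mul_self_eq_one_iff] at hM
    rw [← mk_neg]
    exact this (by simpa using h) (by simpa using h') (by simp [hM.resolve_left h₀₀])
  have h₁₁ := h ▸ h₀₀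
  obtain h₀₁ | h₁₀ := mul_eq_zero.1 h'
  · exact ⟨-M 1 0, .inr (congrArg mk (eq_mul_inv_iff_mul_eq.2 (SL2_ext_iff.2 (by
      simp [mul_apply, Fin.sum_univ_two, h₀₀, h₀₁, h₁₁]))))⟩
  · exact ⟨M 0 1, .inl (congrArg mk (SL2_ext_iff.2 (by simp [h₀₀, h₁₀, h₁₁])))⟩

lemma eq_mk_upperUnipotent_or {w : Kˣ} (hw : IsPrimitiveRoot w 3) {u : PSL2 K}
    (hu : u ^ 2 ≠ 1) (hud : (u * mk (diagTorus w)) ^ 3 = 1)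
    (hud' : (u * (mk (diagTorus w))⁻¹) ^ 3 = 1) (hcomm : ¬Commute (mk (diagTorus w)) u) :
    ∃ b, u = mk (upperUnipotent b) ∨
      u = mk (weylElement K * upperUnipotent b * (weylElement K)⁻¹) := by
  obtain ⟨M, rfl⟩ := mk_surjective u
  have htrace {v : Kˣ} (hv : (mk M * mk (diagTorus v)) ^ 3 = 1)
      (hv' : ¬Commute (mk (diagTorus v)) (mk M)) :
      (M 0 0 * v + M 1 1 * (v⁻¹ : Kˣ)) ^ 2 = 1 := by
    have hne : mk (M * diagTorus v) ≠ 1 := fun h ↦ hv' <| by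
      rw [map_mul, mul_eq_one_iff_eq_inv] at h
      exact h ▸ (Commute.refl _).inv_right
    simpa [trace_fin_two, mul_apply, Fin.sum_univ_two] using
      trace_sq_eq_one_of_mk_pow_three_eq_one ((map_mul mk M _).symm ▸ hv) hne
  have h₁ := htrace hud hcomm
  have h₂ := htrace (v := w⁻¹) (by simpa using hud') (by simpa using hcomm)
  rw [inv_inv] at h₂
  have hinv := add_inv_eq_neg_one_of_isPrimitiveRoot hw
  have hw' : (w : K) - (w⁻¹ : Kˣ) ≠ 0 := sub_ne_zero.2 fun h ↦
    hw.pow_ne_one_of_pos_of_lt (l := 2) (by norm_num) (by norm_num)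
      (by rw [pow_two, mul_eq_one_iff_eq_inv]; exact Units.ext h)
  have htrace_ne : M 0 0 + M 1 1 ≠ 0 := fun h ↦
    hu (mk_sq_eq_one_of_trace_eq_zero ((trace_fin_two M.1).trans h))
  have hdiag : M 0 0 = M 1 1 := by
    refine sub_eq_zero.1 (mul_right_cancel₀ htrace_ne (mul_right_cancel₀ hw' ?_))
    linear_combination (M 0 0 ^ 2 - M 1 1 ^ 2) * (w - (w⁻¹ : Kˣ)) * hinv - h₁ + h₂
  refine eq_mk_upperUnipotent_or_of_mul_eq_zero hdiag ?_
  have hsq : M 0 0 ^ 2 = 1 := by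
    rw [← hdiag, ← mul_add, hinv] at h₁
    linear_combination h₁
  linear_combination hsq - SL2_mul_sub_mul_eq_one M - M 0 0 * hdiag

lemma exists_conj_eq_mk_diagTorus_mk_upperUnipotent {w : Kˣ} (hw : IsPrimitiveRoot w 3)
    {d u : PSL2 K} (hd : d ^ 3 = 1) (hu : u ^ 2 ≠ 1) (hud : (u * d) ^ 3 = 1)
    (hud' : (u * d⁻¹) ^ 3 = 1) (hcomm : ¬Commute d u) :
    ∃ g, ∃ v : Kˣ, ∃ b, IsPrimitiveRoot v 3 ∧ MulAut.conj g d = mk (diagTorus v) ∧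
      MulAut.conj g u = mk (upperUnipotent b) := by
  obtain ⟨g, hg⟩ := exists_conj_eq_mk_diagTorus hw hd fun h ↦ hcomm (h ▸ Commute.one_left u)
  have hcomm' : ¬Commute (mk (diagTorus w)) (MulAut.conj g u) := fun h ↦
    hcomm (Commute.of_map (MulAut.conj g).injective (hg.symm ▸ h))
  obtain ⟨b, hb | hb⟩ := eq_mk_upperUnipotent_or hw (u := MulAut.conj g u)
    (by rwa [← map_pow, EmbeddingLike.map_ne_one_iff])
    (by rw [← hg, ← map_mul, ← map_pow, hud, map_one])
    (by rw [← hg, ← map_inv, ← map_mul, ← map_pow, hud', map_one]) hcomm'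
  · exact ⟨g, w, b, hw, hg, hb⟩
  · refine ⟨(mk (weylElement K))⁻¹ * g, w⁻¹, b, hw.inv, ?_, ?_⟩
    · rw [map_mul, MulAut.mul_apply, hg, MulAut.conj_apply, inv_inv, mul_assoc, ← map_mul,
        diagTorus_mul_weylElement, map_mul, inv_mul_cancel_left]
    · rw [map_mul, MulAut.mul_apply, hb]
      simp [mul_assoc]

lemma exists_conj_mk_upperUnipotent_eq [IsAlgClosed K] (w : Kˣ) {b : K} (hb : b ≠ 0) :
    ∃ g, MulAut.conj g (mk (diagTorus w)) = mk (diagTorus w) ∧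
      MulAut.conj g (mk (upperUnipotent b)) = mk (upperUnipotent 1) := by
  obtain ⟨t, ht⟩ := IsAlgClosed.exists_pow_nat_eq b⁻¹ (n := 2) (by norm_num)
  have ht₀ : t ≠ 0 := by rintro rfl; simp_all
  refine ⟨mk (diagTorus (Units.mk0 t ht₀)), ?_, ?_⟩ <;> rw [MulAut.conj_apply]
  · rw [← map_mul, ← map_mul, mul_comm, map_mul, map_mul, mul_inv_cancel_right]
  · rw [← map_mul, diagTorus_mul_upperUnipotent, map_mul, mul_inv_cancel_right, Units.val_mk0,
      ht, inv_mul_cancel₀ hb]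

lemma exists_conj_eq_mk_diagTorus_mk_upperUnipotent_one [IsAlgClosed K] {w : Kˣ}
    (hw : IsPrimitiveRoot w 3) {d u : PSL2 K} (hd : d ^ 3 = 1) (hu : u ^ 2 ≠ 1)
    (hud : (u * d) ^ 3 = 1) (hud' : (u * d⁻¹) ^ 3 = 1) (hcomm : ¬Commute d u) :
    ∃ g, ∃ v : Kˣ, IsPrimitiveRoot v 3 ∧ MulAut.conj g d = mk (diagTorus v) ∧
      MulAut.conj g u = mk (upperUnipotent 1) := by
  obtain ⟨g, v, b, hv, hgd, hgu⟩ :=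
    exists_conj_eq_mk_diagTorus_mk_upperUnipotent hw hd hu hud hud' hcomm
  have hb : b ≠ 0 := by
    rintro rfl
    rw [AddChar.map_zero_eq_one, map_one, EmbeddingLike.map_eq_one_iff] at hgu
    exact hcomm (hgu ▸ Commute.one_right d)
  obtain ⟨k, hkd, hku⟩ := exists_conj_mk_upperUnipotent_eq v hb
  exact ⟨k * g, v, hv, by rw [map_mul, MulAut.mul_apply, hgd, hkd],
    by rw [map_mul, MulAut.mul_apply, hgu, hku]⟩

lemma diag_eq_zero_of_mk_mul_mk_mul_mk {w : Kˣ} (hw : IsPrimitiveRoot w 3) {M : SL(2, K)}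
    (hM : mk (diagTorus w) * mk M * mk (diagTorus w) = mk M) : M 0 0 = 0 ∧ M 1 1 = 0 := by
  have hcancel {v : Kˣ} (hv : IsPrimitiveRoot v 3) {x : K}
      (hx : v * x * v = x ∨ v * x * v = -x) : x = 0 := by
    have hv₁ : (v : K) - 1 ≠ 0 := sub_ne_zero.2 fun h ↦ hv.ne_one (by norm_num) (Units.ext h)
    have hv₃ : (v : K) ^ 3 = 1 := by
      rw [← Units.val_pow_eq_pow_val, hv.pow_eq_one, Units.val_one]
    refine pow_eq_zero_iff two_ne_zero |>.1 (mul_left_cancel₀ hv₁ ?_)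
    linear_combination sq_eq_sq_iff_eq_or_eq_neg.2 hx - v * x ^ 2 * hv₃
  rw [mul_assoc, ← map_mul, ← map_mul, mk_eq_mk] at hM
  have h₀₀ : w * M 0 0 * w = M 0 0 ∨ w * M 0 0 * w = -M 0 0 := hM.imp
    (fun h ↦ by simpa [mul_apply, Fin.sum_univ_two, mul_assoc] using (SL2_ext_iff.1 h).1)
    fun h ↦ by simpa [mul_apply, Fin.sum_univ_two, mul_assoc] using (SL2_ext_iff.1 h).1
  have h₁₁ : (w⁻¹ : Kˣ) * M 1 1 * (w⁻¹ : Kˣ) = M 1 1 ∨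
      (w⁻¹ : Kˣ) * M 1 1 * (w⁻¹ : Kˣ) = -M 1 1 := hM.imp
    (fun h ↦ by simpa [mul_apply, Fin.sum_univ_two, mul_assoc] using (SL2_ext_iff.1 h).2.2.2)
    fun h ↦ by simpa [mul_apply, Fin.sum_univ_two, mul_assoc] using (SL2_ext_iff.1 h).2.2.2
  exact ⟨hcancel hw h₀₀, hcancel hw.inv h₁₁⟩

lemma eq_mk_weylElement {w : Kˣ} (hw : IsPrimitiveRoot w 3) {s : PSL2 K}
    (hd : mk (diagTorus w) * s * mk (diagTorus w) = s)
    (hu : s * mk (upperUnipotent 1) * s =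
      mk (upperUnipotent (-1)) * s * mk (upperUnipotent (-1))) :
    s = mk (weylElement K) := by
  obtain ⟨M, rfl⟩ := mk_surjective s
  obtain ⟨h₀₀, h₁₁⟩ := diag_eq_zero_of_mk_mul_mk_mul_mk hw hd
  have hdet : M 0 1 * M 1 0 = -1 := by
    linear_combination M 1 1 * h₀₀ - SL2_mul_sub_mul_eq_one M
  have h₁₀ : M 1 0 * M 1 0 = M 1 0 ∨ M 1 0 * M 1 0 = -M 1 0 := by
    rw [← map_mul, ← map_mul, ← map_mul, ← map_mul, mk_eq_mk] at hu
    refine hu.imp (fun h ↦ ?_) fun h ↦ ?_ <;>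
    · simpa [mul_apply, vecMul, dotProduct, Fin.sum_univ_two, h₀₀, h₁₁] using
        (SL2_ext_iff.1 h).2.2.1
  have h₁₀' : M 1 0 ≠ 0 := fun h ↦ by simp [h] at hdet
  rw [mul_eq_left₀ h₁₀', ← mul_neg_one, mul_right_inj' h₁₀'] at h₁₀
  rw [mk_eq_mk, SL2_ext_iff, SL2_ext_iff]
  refine h₁₀.imp (fun h ↦ ?_) fun h ↦ ?_ <;> rw [h] at hdet <;>
  · simp [h₀₀, h₁₁, h]; simpa using hdet

end PSL2

section ComplexEisensteinLattice

variable {w : ℂ}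

lemma re_eq_and_im_sq_eq_of_sq_add_self_add_one (hw : w ^ 2 + w + 1 = 0) :
    w.re = -1 / 2 ∧ w.im ^ 2 = 3 / 4 := by
  have hre : w.re * w.re - w.im * w.im + w.re + 1 = 0 := by
    simpa [pow_two] using congrArg Complex.re hw
  have him : w.im * (2 * w.re + 1) = 0 := by
    have h : w.re * w.im + w.im * w.re + w.im = 0 := by simpa [pow_two] using congrArg Complex.im hw
    linear_combination h
  obtain him | him := mul_eq_zero.1 him
  · rw [him] at hre
    nlinarith [sq_nonneg (w.re + 1 / 2)]
  · have hre' : w.re = -1 / 2 := by linarith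
    rw [hre'] at hre
    exact ⟨hre', by linarith⟩

lemma normSq_add_mul (hw : w ^ 2 + w + 1 = 0) (p r : ℝ) :
    Complex.normSq (p + r * w) = p ^ 2 - p * r + r ^ 2 := by
  obtain ⟨hre, him⟩ := re_eq_and_im_sq_eq_of_sq_add_self_add_one hw
  simp only [Complex.normSq_apply, Complex.add_re, Complex.ofReal_re, Complex.re_ofReal_mul, hre,
    Complex.add_im, Complex.ofReal_im, Complex.im_ofReal_mul, zero_add]
  linear_combination r ^ 2 * him

lemma exists_eq_add_mul (hw : w ^ 2 + w + 1 = 0) (z : ℂ) : ∃ p r : ℝ, z = p + r * w := by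
  obtain ⟨hre, him⟩ := re_eq_and_im_sq_eq_of_sq_add_self_add_one hw
  have him₀ : w.im ≠ 0 := fun h ↦ by norm_num [h] at him
  refine ⟨z.re + z.im / w.im / 2, z.im / w.im, Complex.ext ?_ ?_⟩
  · simp only [Complex.add_re, Complex.ofReal_re, Complex.re_ofReal_mul, hre]
    ring
  · simp [him₀]

lemma exists_normSq_sub_lt_one (hw : w ^ 2 + w + 1 = 0) (z : ℂ) :
    ∃ m n : ℤ, Complex.normSq (z - (m + n * w)) < 1 := by
  obtain ⟨p, r, rfl⟩ := exists_eq_add_mul hw z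
  have hround (x : ℝ) : |2 * (x - round x)| ≤ 1 := by
    rw [abs_mul, abs_two]
    linarith [abs_sub_round x]
  refine ⟨round p, round r, ?_⟩
  calc
    _ = Complex.normSq ((p - round p : ℝ) + (r - round r : ℝ) * w) := by
      push_cast
      congr 1
      ring
    _ = (p - round p) ^ 2 - (p - round p) * (r - round r) + (r - round r) ^ 2 :=
      normSq_add_mul hw _ _
    _ < 1 := by
      nlinarith [(sq_le_one_iff_abs_le_one _).2 (hround p),
        (sq_le_one_iff_abs_le_one _).2 (hround r), sq_nonneg ((p - round p) + (r - round r))]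

end ComplexEisensteinLattice

namespace Eisenstein

-- Instance search finds the `ℚ`-algebra structure `DivisionRing.toRatAlgebra`, which agrees with
-- that of `CyclotomicField` only after unfolding both.
instance isCyclotomicExtension : IsCyclotomicExtension {3} ℚ (CyclotomicField 3 ℚ) :=
  CyclotomicField.isCyclotomicExtension 3 ℚ

lemma isPrimitiveRoot_zeta :
    IsPrimitiveRoot (IsCyclotomicExtension.zeta 3 ℚ (CyclotomicField 3 ℚ)) 3 :=
  IsCyclotomicExtension.zeta_spec 3 ℚ _

/-- The cube root of unity `ω`, as a unit of the ring of Eisenstein integers. -/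
noncomputable def omega : Eisensteinˣ :=
  (isPrimitiveRoot_zeta.toInteger_isPrimitiveRoot.isUnit (by norm_num)).unit

lemma coe_omega : (omega : Eisenstein) = isPrimitiveRoot_zeta.toInteger := rfl

lemma isPrimitiveRoot_omega : IsPrimitiveRoot omega 3 :=
  IsPrimitiveRoot.coe_units_iff.1 isPrimitiveRoot_zeta.toInteger_isPrimitiveRoot

lemma omega_sq_add_omega_add_one : (omega : Eisenstein) ^ 2 + omega + 1 = 0 :=
  sq_add_self_add_one_of_isPrimitiveRoot isPrimitiveRoot_omega

lemma exists_eq_add_mul_omega (x : Eisenstein) : ∃ m n : ℤ, x = m + n * omega := by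
  have hdim : isPrimitiveRoot_zeta.integralPowerBasis.dim = 2 := by
    rw [IsPrimitiveRoot.integralPowerBasis_dim]
    rfl
  have hx := isPrimitiveRoot_zeta.integralPowerBasis.basis.sum_repr x
  rw [← Equiv.sum_comp (finCongr hdim.symm), Fin.sum_univ_two] at hx
  simp only [Fin.isValue, finCongr_apply, PowerBasis.basis_eq_pow,
    IsPrimitiveRoot.integralPowerBasis_gen, ← coe_omega, Fin.val_cast, Fin.coe_ofNat_eq_mod,
    Nat.zero_mod, pow_zero, zsmul_eq_mul, mul_one, Nat.mod_succ, pow_one] at hx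
  exact ⟨_, _, hx.symm⟩

lemma exists_ringHom_map_omega {K : Type*} [Field K] [CharZero K] {w : Kˣ}
    (hw : IsPrimitiveRoot w 3) :
    ∃ σ : Eisenstein →+* K, Function.Injective σ ∧ Units.map σ omega = w := by
  let e := isPrimitiveRoot_zeta.embeddingsEquivPrimitiveRoots K
    (Polynomial.cyclotomic.irreducible_rat (by norm_num))
  let f := e.symm ⟨w, (mem_primitiveRoots (by norm_num)).2 (IsPrimitiveRoot.coe_units_iff.2 hw)⟩
  refine ⟨f.toRingHom.comp (algebraMap Eisenstein (CyclotomicField 3 ℚ)),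
    f.toRingHom.injective.comp NumberField.RingOfIntegers.coe_injective, Units.ext ?_⟩
  have hf : (e f : K) = w := by simp [f]
  rwa [IsPrimitiveRoot.embeddingsEquivPrimitiveRoots_apply_coe] at hf

instance finite_units : Finite Eisensteinˣ :=
  Set.finite_univ_iff.1 <| (List.finite_toSet _).subset fun u _ ↦
    IsCyclotomicExtension.Rat.Three.Units.mem isPrimitiveRoot_zeta u

lemma exists_isEuclideanFunction : ∃ N : Eisenstein → ℕ, IsEuclideanFunction N := by
  obtain ⟨w, hw⟩ := HasEnoughRootsOfUnity.exists_primitiveRoot ℂ 3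
  obtain ⟨w, rfl⟩ := hw.isUnit (by norm_num)
  rw [IsPrimitiveRoot.coe_units_iff] at hw
  have hw₀ := sq_add_self_add_one_of_isPrimitiveRoot hw
  obtain ⟨σ, hσ, hσw⟩ := exists_ringHom_map_omega hw
  replace hσw : σ omega = w := congrArg Units.val hσw
  have hnat (x : Eisenstein) : ∃ n : ℕ, (n : ℝ) = Complex.normSq (σ x) := by
    obtain ⟨m, n, rfl⟩ := exists_eq_add_mul_omega x
    refine ⟨(m ^ 2 - m * n + n ^ 2).toNat, ?_⟩
    have hnonneg : 0 ≤ m ^ 2 - m * n + n ^ 2 := by nlinarith [sq_nonneg (m - n), sq_nonneg (m + n)]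
    have h := normSq_add_mul hw₀ m n
    rw [map_add, map_mul, map_intCast, map_intCast, hσw, ← Complex.ofReal_intCast,
      ← Complex.ofReal_intCast, h]
    exact_mod_cast congrArg ((↑) : ℤ → ℝ) (Int.toNat_of_nonneg hnonneg)
  choose N hN using hnat
  refine ⟨N, fun a c hc ↦ ?_⟩
  have hσc : σ c ≠ 0 := (map_ne_zero_iff σ hσ).2 hc
  obtain ⟨m, n, hmn⟩ := exists_normSq_sub_lt_one hw₀ (σ a / σ c)
  refine ⟨m + n * omega, ?_⟩
  rify
  calc
    (N (a - (m + n * omega) * c) : ℝ) =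
        Complex.normSq (σ a / σ c - (m + n * w)) * Complex.normSq (σ c) := by
      rw [hN, ← map_mul, sub_mul, div_mul_cancel₀ _ hσc]
      simp [hσw]
    _ < 1 * Complex.normSq (σ c) := by gcongr; exact Complex.normSq_pos.2 hσc
    _ = N c := by rw [one_mul, hN]

lemma exists_omega_sub_one_dvd_sub (x : Eisenstein) :
    ∃ v, (v = 0 ∨ IsUnit v) ∧ (omega - 1 : Eisenstein) ∣ x - v := by
  obtain h | h | h := IsCyclotomicExtension.Rat.Three.lambda_dvd_or_dvd_sub_one_or_dvd_add_one
    isPrimitiveRoot_zeta x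
  · exact ⟨0, .inl rfl, by rwa [sub_zero]⟩
  · exact ⟨1, .inr isUnit_one, h⟩
  · exact ⟨-1, .inr isUnit_one.neg, by rwa [sub_neg_eq_add]⟩

lemma exists_two_dvd_sub (x : Eisenstein) : ∃ v, (v = 0 ∨ IsUnit v) ∧ 2 ∣ x - v := by
  obtain ⟨m, n, rfl⟩ := exists_eq_add_mul_omega x
  obtain ⟨k, hk | hk⟩ := m.even_or_odd' <;> obtain ⟨l, hl | hl⟩ := n.even_or_odd' <;>
    subst hk hl
  · exact ⟨0, .inl rfl, k + l * omega, by push_cast; ring⟩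
  · exact ⟨omega, .inr omega.isUnit, k + l * omega, by push_cast; ring⟩
  · exact ⟨1, .inr isUnit_one, k + l * omega, by push_cast; ring⟩
  · refine ⟨-(omega ^ 2 : Eisensteinˣ), .inr (Units.isUnit _).neg, k + l * omega, ?_⟩
    push_cast
    linear_combination omega_sq_add_omega_add_one

lemma upperUnipotent_omega_mul (x : Eisenstein) :
    upperUnipotent (omega * x) = (diagTorus omega)⁻¹ * upperUnipotent x * diagTorus omega := by
  have h := diagTorus_mul_upperUnipotent omega (omega * x)
  rw [← mul_assoc, ← pow_succ, ← Units.val_pow_eq_pow_val, isPrimitiveRoot_omega.pow_eq_one,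
    Units.val_one, one_mul] at h
  rw [mul_assoc, ← h, inv_mul_cancel_left]

lemma closure_eq_top : Subgroup.closure
    {weylElement Eisenstein, upperUnipotent 1, diagTorus omega} = ⊤ := by
  obtain ⟨N, hN⟩ := exists_isEuclideanFunction
  set H := Subgroup.closure {weylElement Eisenstein, upperUnipotent 1, diagTorus omega}
  have hU : upperUnipotent 1 ∈ H := Subgroup.subset_closure (by simp)
  have hD : diagTorus omega ∈ H := Subgroup.subset_closure (by simp)
  have hUω : upperUnipotent (omega * 1 : Eisenstein) ∈ H :=
    upperUnipotent_omega_mul 1 ▸ H.mul_mem (H.mul_mem (H.inv_mem hD) hU) hD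
  refine hN.subgroup_eq_top (Subgroup.subset_closure (by simp)) fun x ↦ ?_
  obtain ⟨m, n, rfl⟩ := exists_eq_add_mul_omega x
  rw [← mul_one (m : Eisenstein), ← mul_one (omega : Eisenstein), ← zsmul_eq_mul,
    ← zsmul_eq_mul, AddChar.map_add_eq_mul, AddChar.map_zsmul_eq_zpow, AddChar.map_zsmul_eq_zpow]
  exact H.mul_mem (H.zpow_mem hU m) (H.zpow_mem hUω n)

section FiniteRange

variable {G : Type*} [Group G] {φ : SL(2, Eisenstein) →* G}

lemma map_upperUnipotent_mul_eq_one {p : Eisenstein} (hp : φ (upperUnipotent p) = 1)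
    (y : Eisenstein) : φ (upperUnipotent (p * y)) = 1 := by
  have hωp : φ (upperUnipotent (omega * p)) = 1 := by
    rw [upperUnipotent_omega_mul, map_mul, map_mul, hp, mul_one, ← map_mul, inv_mul_cancel,
      map_one]
  obtain ⟨m, n, rfl⟩ := exists_eq_add_mul_omega y
  rw [show p * (m + n * omega) = m • p + n • (omega * p) by simp only [zsmul_eq_mul]; ring,
    AddChar.map_add_eq_mul, AddChar.map_zsmul_eq_zpow, AddChar.map_zsmul_eq_zpow, map_mul,
    map_zpow, map_zpow, hp, hωp, _root_.one_zpow, _root_.one_zpow, one_mul]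

lemma finite_range_of_map_upperUnipotent_eq_one {p : Eisenstein}
    (hp : ∀ x, ∃ v, (v = 0 ∨ IsUnit v) ∧ p ∣ x - v) (hφ : φ (upperUnipotent p) = 1) :
    Finite φ.range :=
  let ⟨_, hN⟩ := exists_isEuclideanFunction
  finite_range_of_upperUnipotent_eq_one hN.closure_eq_top hp (map_upperUnipotent_mul_eq_one hφ)

lemma finite_range_of_sq_eq_one (h : φ (upperUnipotent 1) ^ 2 = 1) : Finite φ.range := by
  refine finite_range_of_map_upperUnipotent_eq_one exists_two_dvd_sub ?_
  rwa [← one_add_one_eq_two (R := Eisenstein), AddChar.map_add_eq_mul, map_mul, ← pow_two]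

lemma finite_range_of_commute (h : Commute (φ (diagTorus omega)) (φ (upperUnipotent 1))) :
    Finite φ.range := by
  refine finite_range_of_map_upperUnipotent_eq_one exists_omega_sub_one_dvd_sub ?_
  rw [sub_eq_add_neg, AddChar.map_add_eq_mul, AddChar.map_neg_eq_inv, map_mul, map_inv,
    ← mul_one (omega : Eisenstein), upperUnipotent_omega_mul, map_mul, map_mul, map_inv,
    mul_assoc _ (φ _) (φ _), ← h.eq, inv_mul_cancel_left, mul_inv_cancel]

end FiniteRange

variable {K : Type*} [Field K]

lemma eq_mk_comp_map {ψ : SL(2, Eisenstein) →* PSL2 K} {w : Kˣ} (hw : IsPrimitiveRoot w 3)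
    {σ : Eisenstein →+* K} (hσ : Units.map σ omega = w)
    (hD : ψ (diagTorus omega) = PSL2.mk (diagTorus w))
    (hU : ψ (upperUnipotent 1) = PSL2.mk (upperUnipotent 1)) :
    ψ = PSL2.mk.comp (Matrix.SpecialLinearGroup.map σ) := by
  have hS : ψ (weylElement Eisenstein) = PSL2.mk (weylElement K) := by
    refine PSL2.eq_mk_weylElement hw ?_ ?_
    · rw [← hD, ← map_mul, ← map_mul, diagTorus_mul_weylElement, mul_assoc, ← map_mul diagTorus,
        inv_mul_cancel, map_one, mul_one]
    · rw [AddChar.map_neg_eq_inv, map_inv, ← hU, ← map_inv, ← AddChar.map_neg_eq_inv]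
      simpa only [Units.val_one, inv_one, map_one, mul_one, map_mul] using
        congrArg ψ (weylElement_mul_upperUnipotent_mul_weylElement 1)
  refine MonoidHom.eq_of_eqOn_dense closure_eq_top ?_
  rintro _ (rfl | rfl | rfl) <;> rw [MonoidHom.comp_apply]
  · rw [hS, map_weylElement]
  · rw [hU, map_upperUnipotent, map_one σ]
  · rw [hD, map_diagTorus, hσ]

lemma exists_conj_map_eq [IsAlgClosed K] [CharZero K] (φ : SL(2, Eisenstein) →* PSL2 K)
    (hφ : Infinite φ.range) :
    ∃ σ : Eisenstein →+* K, Function.Injective σ ∧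
      ∃ g, ∀ A, MulAut.conj g (φ A) = PSL2.mk (Matrix.SpecialLinearGroup.map σ A) := by
  obtain ⟨w, hw⟩ := HasEnoughRootsOfUnity.exists_primitiveRoot K 3
  obtain ⟨w, rfl⟩ := hw.isUnit (by norm_num)
  obtain ⟨g, v, hv, hD, hU⟩ := PSL2.exists_conj_eq_mk_diagTorus_mk_upperUnipotent_one
    (IsPrimitiveRoot.coe_units_iff.1 hw) (d := φ (diagTorus omega)) (u := φ (upperUnipotent 1))
    (by rw [← map_pow, ← map_pow, isPrimitiveRoot_omega.pow_eq_one, map_one, map_one])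
    (fun h ↦ not_finite_iff_infinite.2 hφ (finite_range_of_sq_eq_one h))
    (by rw [← map_mul, ← map_pow,
      upperUnipotent_mul_diagTorus_pow_three 1 isPrimitiveRoot_omega, map_one])
    (by rw [← map_inv, ← map_inv, ← map_mul, ← map_pow,
      upperUnipotent_mul_diagTorus_pow_three 1 isPrimitiveRoot_omega.inv, map_one])
    (fun h ↦ not_finite_iff_infinite.2 hφ (finite_range_of_commute h))
  obtain ⟨σ, hσ, hσv⟩ := exists_ringHom_map_omega hv
  exact ⟨σ, hσ, g, DFunLike.congr_fun <|
    eq_mk_comp_map (ψ := (MulAut.conj g).toMonoidHom.comp φ) hv hσv hD hU⟩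

end Eisenstein

lemma virtuallySolvable_of_finite (G : Type*) [Group G] [Finite G] : VirtuallySolvable G :=
  ⟨⊥, (inferInstance : Group.IsSolvable (⊥ : Subgroup G)), inferInstance⟩

theorem bianchi_two_characters_general {K : Type*} [Field K] [IsAlgClosed K] [CharZero K]
    (ρ : PSL2 Eisenstein →* PSL2 K) (hρ : Infinite ρ.range) :
    ∃ σ : Eisenstein →+* K, Function.Injective σ ∧
      ∃ g : PSL2 K, ∀ x : PSL2 Eisenstein, ρ x = g * PSL2Map σ x * g⁻¹ := by
  have hrange : (ρ.comp PSL2.mk).range = ρ.range := by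
    rw [MonoidHom.range_comp, MonoidHom.range_eq_top.2 PSL2.mk_surjective, MonoidHom.range_eq_map]
  obtain ⟨σ, hσ, g, hg⟩ := Eisenstein.exists_conj_map_eq (ρ.comp PSL2.mk) (hrange ▸ hρ)
  refine ⟨σ, hσ, g⁻¹, fun x ↦ ?_⟩
  obtain ⟨A, rfl⟩ := PSL2.mk_surjective x
  rw [PSL2.map_mk, ← hg]
  simp [mul_assoc]

/-- `PSL(2, ℤ[ω])` has exactly two characters of Zariski-dense representations
into `PSL(2, ℂ)`: every representation with Zariski-dense image (equivalently,
image not virtually solvable) is conjugate to the homomorphism induced by one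
of the two ring embeddings `ℤ[ω] → ℂ`. -/
theorem bianchi_two_characters (ρ : PSL2 Eisenstein →* PSL2 ℂ)
    (hzar : ¬ VirtuallySolvable ρ.range) :
    ∃ σ : Eisenstein →+* ℂ, Function.Injective σ ∧
      ∃ g : PSL2 ℂ, ∀ x : PSL2 Eisenstein, ρ x = g * PSL2Map σ x * g⁻¹ :=
  bianchi_two_characters_general ρ <|
    not_finite_iff_infinite.1 fun _ ↦ hzar (virtuallySolvable_of_finite _)
end

section
/- Let K and K' be number fields and let τ be an injective map from the set of finite places of K' to the set of finite places of K (i.e. from the height-one prime spectrum of 𝓞_{K'} to that of 𝓞_K) such that for every finite place w of K' the completion K'_w is isomorphic to K_{τ(w)} as a topological field (there is a ring isomorphism which is a homeomorphism). Then τ is a bijection. -/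
open IsDedekindDomain

/-!
A topological isomorphism `K'_w ≃ K_v` preserves valuations, so it preserves the absolute norm and
the ramification index. If `τ` misses a place, the degree formula `∑ e f = [K : ℚ]` over one prime
gives `[K : ℚ] > [K' : ℚ]`, and hence `τ` misses a place `v_p` over every prime `p`. Expanding
Euler products, `ζ_{K'}(s) · ∑_{v missed} N(v)⁻ˢ ≤ ζ_K(s)` for `s > 1`; as both zeta functions have
a simple pole at `1`, the sum of `1 / N(v)` over the missed places is finite. In a Galois extension
`L / ℚ` containing `K`, every place `P` over `p` satisfies `N(v_p) ≤ N(P)`, and at most `[L : ℚ]`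
places lie over `p`, so `∑_P 1 / N(P)` is finite too, contradicting the pole of `ζ_L`.
-/

namespace FinitePlaces

section Valuation

open WithZero

variable {K L Γ₀ Γ₀' : Type*} [Field L] [LinearOrderedCommGroupWithZero Γ₀]
  [LinearOrderedCommGroupWithZero Γ₀'] [MulArchimedean Γ₀] [MulArchimedean Γ₀'] [Valued L Γ₀']

lemma isTopologicallyNilpotent_iff_valued_lt_one [Ring K] [Valued K Γ₀] {x : K} :
    IsTopologicallyNilpotent x ↔ Valued.v x < 1 := by
  refine ⟨fun h ↦ ?_, Valued.tendsto_zero_pow_of_v_lt_one⟩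
  obtain ⟨n, hn⟩ := h.exists_pow_mem_of_mem_nhds
    ((Valued.hasBasis_nhds_zero K Γ₀).mem_of_mem (i := 1) trivial)
  have hpow : Valued.v x ^ n < 1 := by simpa using hn
  exact lt_of_not_ge fun hx ↦ hpow.not_ge (one_le_pow₀ hx)

lemma isEquiv_comap_of_bicontinuous [Field K] [Valued K Γ₀] (e : K ≃+* L) (he : Continuous e)
    (he' : Continuous e.symm) :
    (Valued.v (R := K)).IsEquiv ((Valued.v (R := L)).comap (e : K →+* L)) := by
  refine Valuation.isEquiv_iff_val_lt_one.2 fun {x} ↦ ?_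
  simp only [Valuation.comap_apply, ← isTopologicallyNilpotent_iff_valued_lt_one]
  exact ⟨fun h ↦ h.map he, fun h ↦ by simpa using h.map he'⟩

lemma le_exp_neg_one_of_lt_one {γ : ℤᵐ⁰} (h : γ < 1) : γ ≤ exp (-1) := by
  rw [← lt_mul_exp_iff_le exp_ne_zero, ← exp_add]
  simpa

lemma eq_of_isEquiv_of_surjective {v w : Valuation L ℤᵐ⁰} (h : v.IsEquiv w)
    (hv : Function.Surjective v) (hw : Function.Surjective w) : v = w := by
  obtain ⟨π, hπ⟩ := hv (exp (-1))
  obtain ⟨ρ, hρ⟩ := hw (exp (-1))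
  have hexp : (exp (-1) : ℤᵐ⁰) < 1 := by
    rw [← exp_zero, exp_lt_exp]
    exact neg_one_lt_zero
  have hwπ : w π = exp (-1) := by
    refine (le_exp_neg_one_of_lt_one (h.lt_one_iff_lt_one.1 (hπ.trans_lt hexp))).antisymm ?_
    rw [← hρ, ← h.le_iff_le, hπ]
    exact le_exp_neg_one_of_lt_one (h.lt_one_iff_lt_one.2 (hρ.trans_lt hexp))
  ext x
  rcases eq_or_ne x 0 with rfl | hx
  · simp
  obtain ⟨n, hn⟩ : ∃ n : ℤ, v x = v (π ^ n) := by
    refine ⟨-log (v x), ?_⟩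
    rw [map_zpow₀, hπ, ← exp_zsmul, smul_eq_mul, neg_mul_neg, mul_one,
      exp_log ((Valuation.ne_zero_iff _).2 hx)]
  rw [h.eq_iff.1 hn, hn, map_zpow₀, map_zpow₀, hπ, hwπ]

end Valuation

section AdicCompletion

open WithZero

variable {R K S L : Type*} [CommRing R] [IsDedekindDomain R] [Field K] [Algebra R K]
  [IsFractionRing R K] [CommRing S] [IsDedekindDomain S] [Field L] [Algebra S L]
  [IsFractionRing S L] {v : HeightOneSpectrum R} {w : HeightOneSpectrum S}

lemma valued_map_eq_of_bicontinuous (e : v.adicCompletion K ≃+* w.adicCompletion L)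
    (he : Continuous e) (he' : Continuous e.symm) (x : v.adicCompletion K) :
    Valued.v (e x) = Valued.v x := by
  have h := eq_of_isEquiv_of_surjective (isEquiv_comap_of_bicontinuous e he he')
    (v.valuedAdicCompletion_surjective K)
    ((w.valuedAdicCompletion_surjective L).comp e.surjective)
  exact (DFunLike.congr_fun h x).symm

lemma valued_algebraMap (r : R) :
    Valued.v (algebraMap R (v.adicCompletion K) r) = v.intValuation r :=
  (v.valuedAdicCompletion_eq_valuation r).trans (v.valuation_of_algebraMap r)

lemma exists_valued_sub_algebraMap_lt_one {x : v.adicCompletion K} (hx : Valued.v x ≤ 1) :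
    ∃ r : R, Valued.v (x - algebraMap R (v.adicCompletion K) r) < 1 := by
  have hball : {y : v.adicCompletion K | Valued.v (y - x) < 1} ∈ nhds x :=
    Valued.mem_nhds.2 ⟨1, fun y hy ↦ by simpa using hy⟩
  obtain ⟨_, hk, k, rfl⟩ := mem_closure_iff_nhds.1 (v.denseRange_algebraMap K x) _ hball
  have valued_coe (a : K) : Valued.v (algebraMap K (v.adicCompletion K) a) = v.valuation K a :=
    v.valuedAdicCompletion_eq_valuation' a
  have hk1 : v.valuation K k ≤ 1 := by
    rw [← valued_coe, ← sub_add_cancel (algebraMap K (v.adicCompletion K) k) x]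
    exact Valuation.map_add_le _ (le_of_lt hk) hx
  obtain ⟨r, hr⟩ := v.exists_valuation_sub_lt_of_integer hk1 1
  refine ⟨r, ?_⟩
  rw [← valued_coe, map_sub, ← IsScalarTower.algebraMap_apply] at hr
  rw [Valuation.map_sub_swap, ← sub_add_sub_cancel _ (algebraMap K (v.adicCompletion K) k)]
  exact Valuation.map_add_lt _ hr hk

lemma mem_maximalIdeal_adicCompletionIntegers_iff {x : v.adicCompletionIntegers K} :
    x ∈ IsLocalRing.maximalIdeal (v.adicCompletionIntegers K) ↔
      Valued.v (x : v.adicCompletion K) < 1 :=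
  Valuation.mem_maximalIdeal_iff _ _

variable (K v) in
lemma residue_comp_algebraMap_surjective :
    Function.Surjective ((IsLocalRing.residue (v.adicCompletionIntegers K)).comp
      (algebraMap R (v.adicCompletionIntegers K))) := by
  intro y
  obtain ⟨x, rfl⟩ := IsLocalRing.residue_surjective y
  obtain ⟨r, hr⟩ := exists_valued_sub_algebraMap_lt_one x.2
  refine ⟨r, Eq.symm ?_⟩
  rwa [RingHom.comp_apply, ← sub_eq_zero, ← map_sub, IsLocalRing.residue_eq_zero_iff,
    mem_maximalIdeal_adicCompletionIntegers_iff]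

variable (K v) in
lemma ker_residue_comp_algebraMap :
    RingHom.ker ((IsLocalRing.residue (v.adicCompletionIntegers K)).comp
      (algebraMap R (v.adicCompletionIntegers K))) = v.asIdeal := by
  ext r
  rw [RingHom.mem_ker, RingHom.comp_apply, IsLocalRing.residue_eq_zero_iff,
    mem_maximalIdeal_adicCompletionIntegers_iff, ← v.intValuation_lt_one_iff_mem,
    ← valued_algebraMap (K := K)]
  rfl

variable (K v) in
lemma card_residueField_adicCompletionIntegers :
    Nat.card (IsLocalRing.ResidueField (v.adicCompletionIntegers K)) =
      Submodule.cardQuot v.asIdeal := by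
  rw [← ker_residue_comp_algebraMap K v, Submodule.cardQuot_apply]
  exact (Nat.card_congr (RingHom.quotientKerEquivOfSurjective
    (residue_comp_algebraMap_surjective K v)).toEquiv).symm

lemma cardQuot_eq_of_bicontinuous (e : v.adicCompletion K ≃+* w.adicCompletion L)
    (he : Continuous e) (he' : Continuous e.symm) :
    Submodule.cardQuot v.asIdeal = Submodule.cardQuot w.asIdeal := by
  have hint (x : v.adicCompletion K) :
      x ∈ v.adicCompletionIntegers K ↔ e x ∈ w.adicCompletionIntegers L := by
    simp only [HeightOneSpectrum.mem_adicCompletionIntegers,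
      valued_map_eq_of_bicontinuous e he he']
  rw [← card_residueField_adicCompletionIntegers K v,
    ← card_residueField_adicCompletionIntegers L w]
  exact Nat.card_congr (IsLocalRing.ResidueField.mapEquiv (e.restrict _ _ hint)).toEquiv

lemma valued_algebraMap_eq_exp_neg_ramificationIdx {A : Type*} [CommRing A] [Algebra A R] {a : A}
    [v.asIdeal.LiesOver (Ideal.span {a})] (ha : algebraMap A R a ≠ 0) :
    Valued.v (algebraMap R (v.adicCompletion K) (algebraMap A R a)) =
      exp (-(v.asIdeal.ramificationIdx A : ℤ)) := by
  have hmap : (Ideal.span {a}).map (algebraMap A R) ≠ ⊥ := by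
    simpa [Ideal.map_span] using ha
  rw [valued_algebraMap, v.intValuation_eq_exp_neg_multiplicity ha,
    Ideal.IsDedekindDomain.ramificationIdx_eq_multiplicity (Ideal.span {a}) v.asIdeal hmap,
    Ideal.map_span, Set.image_singleton]

end AdicCompletion

section LocalDegree

open scoped ENNReal

/-- The local degree `e(v) f(v)` of a finite place `v` over the base ring `A`, that is, the degree
of the extension of completions at `v`. -/
noncomputable def localDegree (A : Type*) {R : Type*} [CommRing A] [CommRing R] [Algebra A R]
    (v : HeightOneSpectrum R) : ℕ :=
  v.asIdeal.ramificationIdx A * v.asIdeal.inertiaDeg A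

lemma localDegree_pos (A : Type*) {R : Type*} [CommRing A] [CommRing R] [Algebra A R]
    [Module.Finite A R] (v : HeightOneSpectrum R) : 0 < localDegree A v :=
  Nat.mul_pos (v.asIdeal.ramificationIdx_pos A) (v.asIdeal.inertiaDeg_pos A)

/-- The set of finite places of `R` lying over the finite place `q` of `A`. -/
def placesOver {A : Type*} (R : Type*) [CommRing A] [IsDomain A] [CommRing R] [IsDomain R]
    [Algebra A R] [Algebra.IsIntegral A R] (q : HeightOneSpectrum A) : Set (HeightOneSpectrum R) :=
  HeightOneSpectrum.under A ⁻¹' {q}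

variable {A R S : Type*} [CommRing A] [IsDedekindDomain A] [CommRing R] [IsDedekindDomain R]
  [Algebra A R] [Module.Finite A R] [Module.IsTorsionFree A R] [CommRing S] [IsDedekindDomain S]
  [Algebra A S] [Module.Finite A S] [Module.IsTorsionFree A S]

lemma bijOn_asIdeal_placesOver (q : HeightOneSpectrum A) :
    Set.BijOn HeightOneSpectrum.asIdeal (placesOver R q) (q.asIdeal.primesOver R) :=
  ⟨fun v hv ↦ ⟨v.isPrime, ⟨(congrArg HeightOneSpectrum.asIdeal hv).symm⟩⟩,
    fun _ _ _ _ h ↦ HeightOneSpectrum.ext_iff.2 h,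
    fun Q hQ ↦ ⟨⟨Q, hQ.1, Ideal.ne_bot_of_mem_primesOver q.ne_bot hQ⟩,
      HeightOneSpectrum.ext_iff.2 hQ.2.over.symm, rfl⟩⟩

lemma tsum_localDegree (q : HeightOneSpectrum A) :
    ∑' v : placesOver R q, (localDegree A v.1 : ℝ≥0∞) = Module.finrank A R := by
  have : q.asIdeal.IsMaximal := q.isMaximal
  have := (IsDedekindDomain.primesOver_finite q.asIdeal R).fintype
  rw [← Ideal.sum_ramification_inertia_eq_finrank q.asIdeal R, Nat.cast_sum,
    ← tsum_fintype (L := .unconditional _)]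
  exact ((bijOn_asIdeal_placesOver q).equiv _).tsum_eq
    fun Q ↦ ((Q.1.ramificationIdx A * Q.1.inertiaDeg A : ℕ) : ℝ≥0∞)

lemma tsum_comp_under_le (h : HeightOneSpectrum A → ℝ≥0∞) :
    ∑' v : HeightOneSpectrum R, h (v.under A) ≤ Module.finrank A R * ∑' q, h q := by
  rw [← ENNReal.tsum_fiberwise _ (HeightOneSpectrum.under A), ← ENNReal.tsum_mul_left]
  refine ENNReal.tsum_le_tsum fun q ↦ ?_
  rw [← tsum_localDegree (R := R) q, ← ENNReal.tsum_mul_right]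
  refine ENNReal.tsum_le_tsum fun v : placesOver R q ↦ ?_
  rw [show v.1.under A = q from v.2]
  exact le_mul_of_one_le_left' (Nat.one_le_cast.2 (localDegree_pos A v.1))

variable {τ : HeightOneSpectrum S → HeightOneSpectrum R}

lemma finrank_eq_add_tsum_compl_range (hτ : Function.Injective τ)
    (hunder : ∀ w, (τ w).under A = w.under A)
    (hdeg : ∀ w, localDegree A (τ w) = localDegree A w) (q : HeightOneSpectrum A) :
    (Module.finrank A R : ℝ≥0∞) = Module.finrank A S + ∑' v : ↥(Set.range τ)ᶜ,
      (placesOver R q).indicator (fun v ↦ (localDegree A v : ℝ≥0∞)) v.1 := by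
  rw [← tsum_localDegree (R := R) q, ← tsum_localDegree (R := S) q,
    tsum_subtype _ fun v ↦ (localDegree A v : ℝ≥0∞),
    tsum_subtype _ fun v ↦ (localDegree A v : ℝ≥0∞),
    ← ENNReal.summable.tsum_add_tsum_compl (s := Set.range τ) ENNReal.summable, tsum_range _ hτ]
  congr 1
  refine tsum_congr fun w ↦ ?_
  classical simp only [Set.indicator_apply, placesOver, Set.mem_preimage, hunder, hdeg]

lemma exists_notMem_range_under_eq (hτ : Function.Injective τ)
    (hunder : ∀ w, (τ w).under A = w.under A)
    (hdeg : ∀ w, localDegree A (τ w) = localDegree A w) {v₀ : HeightOneSpectrum R}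
    (hv₀ : v₀ ∉ Set.range τ) (q : HeightOneSpectrum A) :
    ∃ v ∉ Set.range τ, v.under A = q := by
  have hq := finrank_eq_add_tsum_compl_range hτ hunder hdeg (v₀.under A)
  rw [finrank_eq_add_tsum_compl_range hτ hunder hdeg q,
    ENNReal.add_right_inj (ENNReal.natCast_ne_top _)] at hq
  by_contra! hmissed
  have hzero : ∀ v : ↥(Set.range τ)ᶜ,
      (placesOver R q).indicator (fun v ↦ (localDegree A v : ℝ≥0∞)) v.1 = 0 :=
    fun v ↦ Set.indicator_of_notMem (s := placesOver R q) (hmissed v.1 v.2) _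
  rw [ENNReal.tsum_eq_zero.2 hzero, eq_comm, ENNReal.tsum_eq_zero] at hq
  simpa [placesOver, (localDegree_pos A v₀).ne'] using hq ⟨v₀, hv₀⟩

end LocalDegree

section AbsNorm

lemma prime_absNorm_under {R : Type*} [CommRing R] [IsDedekindDomain R] [Algebra.IsIntegral ℤ R]
    (v : HeightOneSpectrum R) : (Ideal.absNorm (v.asIdeal.under ℤ)).Prime :=
  have : NeZero v.asIdeal := ⟨v.ne_bot⟩
  Nat.absNorm_under_prime v.asIdeal

variable {R S : Type*} [CommRing R] [IsDedekindDomain R] [CharZero R] [Module.Finite ℤ R]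
  [CommRing S] [IsDedekindDomain S] [CharZero S] [Module.Finite ℤ S]
  {v : HeightOneSpectrum R} {w : HeightOneSpectrum S}

lemma absNorm_under_pow_inertiaDeg (v : HeightOneSpectrum R) :
    Ideal.absNorm (v.asIdeal.under ℤ) ^ v.asIdeal.inertiaDeg ℤ = Ideal.absNorm v.asIdeal :=
  Ideal.pow_inertiaDeg _ _

lemma under_int_eq_of_absNorm_eq (h : Ideal.absNorm v.asIdeal = Ideal.absNorm w.asIdeal) :
    v.under ℤ = w.under ℤ := by
  have hdvd := Int.absNorm_under_dvd_absNorm v.asIdeal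
  rw [h, ← absNorm_under_pow_inertiaDeg w] at hdvd
  have hchar := (Nat.prime_dvd_prime_iff_eq (prime_absNorm_under v) (prime_absNorm_under w)).1
    ((prime_absNorm_under v).dvd_of_dvd_pow hdvd)
  refine HeightOneSpectrum.ext_iff.2 ?_
  change v.asIdeal.under ℤ = w.asIdeal.under ℤ
  rw [← Int.ideal_span_absNorm_eq_self (v.asIdeal.under ℤ), hchar,
    Int.ideal_span_absNorm_eq_self]

lemma inertiaDeg_int_eq_of_absNorm_eq (h : Ideal.absNorm v.asIdeal = Ideal.absNorm w.asIdeal) :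
    v.asIdeal.inertiaDeg ℤ = w.asIdeal.inertiaDeg ℤ := by
  have hunder : v.asIdeal.under ℤ = w.asIdeal.under ℤ :=
    HeightOneSpectrum.ext_iff.1 (under_int_eq_of_absNorm_eq h)
  rw [← absNorm_under_pow_inertiaDeg v, ← absNorm_under_pow_inertiaDeg w, hunder] at h
  exact Nat.pow_right_injective (prime_absNorm_under w).two_le h

end AbsNorm

section Bicontinuous

variable {R K S L : Type*} [CommRing R] [IsDedekindDomain R] [CharZero R] [Module.Finite ℤ R]
  [Field K] [Algebra R K] [IsFractionRing R K] [CommRing S] [IsDedekindDomain S] [CharZero S]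
  [Module.Finite ℤ S] [Field L] [Algebra S L] [IsFractionRing S L]
  {v : HeightOneSpectrum R} {w : HeightOneSpectrum S}

lemma absNorm_eq_of_bicontinuous (e : v.adicCompletion K ≃+* w.adicCompletion L)
    (he : Continuous e) (he' : Continuous e.symm) :
    Ideal.absNorm v.asIdeal = Ideal.absNorm w.asIdeal := by
  rw [Ideal.absNorm_apply, Ideal.absNorm_apply, cardQuot_eq_of_bicontinuous e he he']

lemma valued_absNorm_under (v : HeightOneSpectrum R) :
    Valued.v (Ideal.absNorm (v.asIdeal.under ℤ) : v.adicCompletion K) =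
      WithZero.exp (-(v.asIdeal.ramificationIdx ℤ : ℤ)) := by
  have hne : algebraMap ℤ R (Ideal.absNorm (v.asIdeal.under ℤ) : ℤ) ≠ 0 := by
    simpa using (prime_absNorm_under v).ne_zero
  simpa using valued_algebraMap_eq_exp_neg_ramificationIdx (K := K) hne

lemma ramificationIdx_int_eq_of_bicontinuous (e : v.adicCompletion K ≃+* w.adicCompletion L)
    (he : Continuous e) (he' : Continuous e.symm) :
    v.asIdeal.ramificationIdx ℤ = w.asIdeal.ramificationIdx ℤ := by
  have hunder : v.asIdeal.under ℤ = w.asIdeal.under ℤ :=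
    HeightOneSpectrum.ext_iff.1 (under_int_eq_of_absNorm_eq (absNorm_eq_of_bicontinuous e he he'))
  have h := valued_map_eq_of_bicontinuous e he he' (Ideal.absNorm (v.asIdeal.under ℤ))
  rw [map_natCast, valued_absNorm_under, hunder, valued_absNorm_under] at h
  simpa using h.symm

end Bicontinuous

section Galois

lemma inertiaDeg_le_of_isGaloisGroup {A R T : Type*} (G : Type*) [CommRing A] [CommRing R]
    [CommRing T] [Algebra A R] [Algebra A T] [Algebra R T] [IsScalarTower A R T]
    [Module.Finite A T] [FaithfulSMul R T] [Group G] [Finite G] [MulSemiringAction G T]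
    [IsGaloisGroup G A T] (v : Ideal R) (P : Ideal T) [v.IsPrime] [P.IsPrime]
    (h : v.under A = P.under A) : v.inertiaDeg A ≤ P.inertiaDeg A := by
  have : Module.Finite R T := Module.Finite.of_restrictScalars_finite A R T
  obtain ⟨⟨Q, hQ, _⟩⟩ := v.nonempty_primesOver (S := T)
  have : Q.LiesOver (P.under A) := by
    rw [← h]
    exact Ideal.LiesOver.trans Q v _
  rw [Ideal.inertiaDeg_eq_of_isGaloisGroup (P.under A) P Q G]
  exact Ideal.inertiaDeg_below_le v Q

lemma absNorm_le_of_isGalois {K L : Type*} [Field K] [NumberField K] [Field L] [NumberField L]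
    [Algebra K L] [IsGalois ℚ L] {v : HeightOneSpectrum (NumberField.RingOfIntegers K)}
    {P : HeightOneSpectrum (NumberField.RingOfIntegers L)} (h : v.under ℤ = P.under ℤ) :
    Ideal.absNorm v.asIdeal ≤ Ideal.absNorm P.asIdeal := by
  have hunder : v.asIdeal.under ℤ = P.asIdeal.under ℤ := HeightOneSpectrum.ext_iff.1 h
  rw [← absNorm_under_pow_inertiaDeg v, ← absNorm_under_pow_inertiaDeg P, hunder]
  exact Nat.pow_le_pow_right (prime_absNorm_under P).pos
    (inertiaDeg_le_of_isGaloisGroup Gal(L/ℚ) v.asIdeal P.asIdeal hunder)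

end Galois

section MultisetSum

open scoped ENNReal

variable {ι κ : Type*} {x : ι → ℝ≥0∞}

/-- The formal expansion of the Euler product `∏ i, (1 - x i)⁻¹`: the sum over all multisets of
indices of the corresponding monomials in the `x i`. -/
noncomputable def multisetSum (x : ι → ℝ≥0∞) : ℝ≥0∞ :=
  ∑' m : Multiset ι, (m.map x).prod

lemma multisetSum_mono {y : ι → ℝ≥0∞} (h : ∀ i, x i ≤ y i) : multisetSum x ≤ multisetSum y :=
  ENNReal.tsum_le_tsum fun _ ↦ Multiset.prod_map_le_prod_map _ _ fun i _ ↦ h i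

lemma multisetSum_comp_mul_tsum_compl_range_le {τ : κ → ι} (hτ : Function.Injective τ) :
    multisetSum (x ∘ τ) * ∑' i : ↥(Set.range τ)ᶜ, x i ≤ multisetSum x := by
  let φ (p : Multiset κ × ↥(Set.range τ)ᶜ) : Multiset ι := p.2.1 ::ₘ p.1.map τ
  have hφ : Function.Injective φ := by
    rintro ⟨m, i, hi⟩ ⟨n, j, hj⟩ h
    change i ::ₘ m.map τ = j ::ₘ n.map τ at h
    obtain rfl : i = j := by
      have hmem : i ∈ j ::ₘ n.map τ := h ▸ Multiset.mem_cons_self i _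
      refine (Multiset.mem_cons.1 hmem).resolve_right fun himg ↦ hi ?_
      obtain ⟨k, -, hk⟩ := Multiset.mem_map.1 himg
      exact ⟨k, hk⟩
    obtain rfl := Multiset.map_injective hτ ((Multiset.cons_inj_right _).1 h)
    rfl
  calc multisetSum (x ∘ τ) * ∑' i : ↥(Set.range τ)ᶜ, x i
      = ∑' p : Multiset κ × ↥(Set.range τ)ᶜ, ((φ p).map x).prod := by
        rw [multisetSum, ← ENNReal.tsum_mul_right, ENNReal.tsum_prod']
        refine tsum_congr fun m ↦ ?_
        rw [← ENNReal.tsum_mul_left]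
        refine tsum_congr fun i ↦ ?_
        rw [Multiset.map_cons, Multiset.prod_cons, Multiset.map_map, mul_comm]
    _ ≤ multisetSum x := ENNReal.tsum_comp_le_tsum_of_injective hφ _

lemma tsum_finset_prod_ne_top (hx : ∑' i, x i ≠ ∞) : ∑' s : Finset ι, ∏ i ∈ s, x i ≠ ∞ := by
  have hsummable : Summable fun i ↦ (x i).toReal := ENNReal.summable_toReal hx
  convert (summable_finsetProd_of_summable_nonneg (fun _ ↦ ENNReal.toReal_nonneg)
    hsummable).tsum_ofReal_ne_top with s
  rw [← ENNReal.toReal_prod,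
    ENNReal.ofReal_toReal (ENNReal.prod_ne_top fun i _ ↦ ENNReal.ne_top_of_tsum_ne_top hx i)]

/-- The weight `x i ^ k` of the power `(i, k)`, for encoding a multiset as a finite set of powers.
Exponent zero gets weight `0`, so that the sum over all pairs can converge. -/
noncomputable def powWeight (x : ι → ℝ≥0∞) (p : ι × ℕ) : ℝ≥0∞ :=
  if p.2 = 0 then 0 else x p.1 ^ p.2

lemma prod_map_eq_prod_graph_toFinsupp [DecidableEq ι] (m : Multiset ι) :
    (m.map x).prod = ∏ p ∈ m.toFinsupp.graph, powWeight x p := by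
  rw [Finset.prod_multiset_map_count, Finsupp.graph, Finset.prod_map]
  refine Finset.prod_congr rfl fun i hi ↦ ?_
  simp_all [powWeight]

lemma tsum_powWeight_ne_top {c : ℝ≥0∞} (hc : c < 1) (hxc : ∀ i, x i ≤ c)
    (hx : ∑' i, x i ≠ ∞) : ∑' p, powWeight x p ≠ ∞ := by
  have hgeom (i : ι) : ∑' k, powWeight x (i, k) ≤ x i * (1 - c)⁻¹ := by
    rw [tsum_eq_zero_add' ENNReal.summable, ← ENNReal.tsum_geometric, ← ENNReal.tsum_mul_left]
    simp only [powWeight, if_true, zero_add, Nat.succ_ne_zero, if_false, pow_succ']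
    gcongr
    exact hxc i
  rw [ENNReal.tsum_prod']
  refine ne_top_of_le_ne_top ?_ (ENNReal.tsum_le_tsum hgeom)
  rw [ENNReal.tsum_mul_right]
  exact ENNReal.mul_ne_top hx (ENNReal.inv_ne_top.2 (tsub_pos_of_lt hc).ne')

lemma multisetSum_ne_top {c : ℝ≥0∞} (hc : c < 1) (hxc : ∀ i, x i ≤ c)
    (hx : ∑' i, x i ≠ ∞) : multisetSum x ≠ ∞ := by
  classical
  refine ne_top_of_le_ne_top (tsum_finset_prod_ne_top (tsum_powWeight_ne_top hc hxc hx)) ?_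
  simp only [multisetSum, prod_map_eq_prod_graph_toFinsupp]
  exact ENNReal.tsum_comp_le_tsum_of_injective
    ((Finsupp.graph_injective ι ℕ).comp Multiset.toFinsupp.injective)
    fun s ↦ ∏ p ∈ s, powWeight x p

end MultisetSum

section AbsNormPow

open scoped ENNReal Topology
open UniqueFactorizationMonoid NumberField.HeightOneSpectrum

variable {R : Type*} [CommRing R] [IsDedekindDomain R]

lemma prod_map_asIdeal_ne_bot (m : Multiset (HeightOneSpectrum R)) :
    (m.map HeightOneSpectrum.asIdeal).prod ≠ ⊥ :=
  Multiset.prod_ne_zero fun h ↦ by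
    obtain ⟨v, -, hv⟩ := Multiset.mem_map.1 h
    exact v.ne_bot hv

lemma prod_map_asIdeal_injective : Function.Injective
    fun m : Multiset (HeightOneSpectrum R) ↦ (m.map HeightOneSpectrum.asIdeal).prod := by
  have hfactors (m : Multiset (HeightOneSpectrum R)) :
      normalizedFactors (m.map HeightOneSpectrum.asIdeal).prod =
        m.map HeightOneSpectrum.asIdeal := by
    refine normalizedFactors_prod_of_prime fun I hI ↦ ?_
    obtain ⟨v, -, rfl⟩ := Multiset.mem_map.1 hI
    exact v.prime
  intro m n h
  refine Multiset.map_injective (fun _ _ ↦ HeightOneSpectrum.ext_iff.2) ?_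
  rw [← hfactors m, ← hfactors n]
  exact congrArg normalizedFactors h

lemma exists_prod_map_asIdeal_eq {I : Ideal R} (hI : I ≠ ⊥) :
    ∃ m : Multiset (HeightOneSpectrum R), (m.map HeightOneSpectrum.asIdeal).prod = I := by
  have hlift : CanLift (Ideal R) (HeightOneSpectrum R) HeightOneSpectrum.asIdeal Prime :=
    ⟨fun J hJ ↦ ⟨⟨J, Ideal.isPrime_of_prime hJ, hJ.ne_zero⟩, rfl⟩⟩
  obtain ⟨m, hm⟩ : ∃ m : Multiset (HeightOneSpectrum R),
      m.map HeightOneSpectrum.asIdeal = normalizedFactors I :=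
    CanLift.prf (normalizedFactors I) prime_of_normalized_factor
  exact ⟨m, hm ▸ Ideal.prod_normalizedFactors_eq_self hI⟩

variable [CharZero R] [Module.Finite ℤ R]

/-- The weight `N(v)⁻ˢ` of a finite place `v` in the Dedekind zeta function, as an extended
nonnegative real. -/
noncomputable def absNormPow (s : ℝ) (v : HeightOneSpectrum R) : ℝ≥0∞ :=
  (Ideal.absNorm v.asIdeal : ℝ≥0∞) ^ (-s)

lemma multisetSum_absNormPow (s : ℝ) :
    multisetSum (absNormPow (R := R) s) =
      ∑' I : {I : Ideal R // I ≠ ⊥}, (Ideal.absNorm I.1 : ℝ≥0∞) ^ (-s) := by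
  let e : Multiset (HeightOneSpectrum R) ≃ {I : Ideal R // I ≠ ⊥} :=
    Equiv.ofBijective (fun m ↦ ⟨_, prod_map_asIdeal_ne_bot m⟩)
      ⟨fun _ _ h ↦ prod_map_asIdeal_injective (congrArg Subtype.val h),
        fun I ↦ (exists_prod_map_asIdeal_eq I.2).imp fun _ h ↦ Subtype.ext h⟩
  rw [multisetSum, ← e.tsum_eq]
  refine tsum_congr fun m ↦ ?_
  change _ = (Ideal.absNorm (m.map HeightOneSpectrum.asIdeal).prod : ℝ≥0∞) ^ (-s)
  induction m using Multiset.induction with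
  | empty => simp
  | cons v m ih =>
    simp only [Multiset.map_cons, Multiset.prod_cons, map_mul, Nat.cast_mul, ih, absNormPow]
    rw [ENNReal.mul_rpow_of_ne_top (ENNReal.natCast_ne_top _) (ENNReal.natCast_ne_top _)]

lemma absNormPow_le_of_le {s t : ℝ} (hst : s ≤ t) (v : HeightOneSpectrum R) :
    absNormPow t v ≤ absNormPow s v :=
  ENNReal.rpow_le_rpow_of_exponent_le (mod_cast (one_lt_absNorm v).le) (neg_le_neg hst)

lemma absNormPow_one_le_two_inv (v : HeightOneSpectrum R) : absNormPow 1 v ≤ 2⁻¹ := by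
  rw [absNormPow, ENNReal.rpow_neg_one, ENNReal.inv_le_inv]
  exact mod_cast one_lt_absNorm v

lemma continuous_absNormPow (v : HeightOneSpectrum R) :
    Continuous fun s ↦ absNormPow s v := by
  have hpos : (0 : ℝ) < Ideal.absNorm v.asIdeal := mod_cast zero_lt_one.trans (one_lt_absNorm v)
  have hofReal (s : ℝ) :
      absNormPow s v = ENNReal.ofReal ((Ideal.absNorm v.asIdeal : ℝ) ^ (-s)) := by
    rw [absNormPow, ← ENNReal.ofReal_rpow_of_pos hpos, ENNReal.ofReal_natCast]
  simp only [hofReal]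
  exact ENNReal.continuous_ofReal.comp
    ((Real.continuous_const_rpow hpos.ne').comp continuous_neg)

end AbsNormPow

section Zeta

open scoped ENNReal Topology
open Filter NumberField

variable (K : Type*) [Field K] [NumberField K]

/-- The `n`-th term of the Dirichlet series of the Dedekind zeta function at a real number `s`.
The term at `n = 0` is zero when `s ≠ 0`, since then `0 ^ s = 0`. -/
noncomputable def zetaTerm (s : ℝ) (n : ℕ) : ℝ :=
  Nat.card {I : Ideal (𝓞 K) // Ideal.absNorm I = n} / (n : ℝ) ^ s

lemma zetaTerm_nonneg (s : ℝ) (n : ℕ) : 0 ≤ zetaTerm K s n := by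
  unfold zetaTerm
  positivity

lemma dedekindZeta_eq_tsum_zetaTerm {s : ℝ} (hs : s ≠ 0) :
    dedekindZeta K s = (∑' n, zetaTerm K s n : ℝ) := by
  rw [dedekindZeta, LSeries, Complex.ofReal_tsum]
  refine tsum_congr fun n ↦ ?_
  rw [LSeries.term_of_ne_zero' (Complex.ofReal_ne_zero.2 hs), zetaTerm, Complex.ofReal_div,
    Complex.ofReal_cpow n.cast_nonneg]
  simp

lemma tsum_absNorm_fiber_eq_ofReal_zetaTerm {s : ℝ} (hs : s ≠ 0) (n : ℕ) :
    ∑' I : (fun I : {I : Ideal (𝓞 K) // I ≠ ⊥} ↦ Ideal.absNorm I.1) ⁻¹' {n},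
      (Ideal.absNorm I.1.1 : ℝ≥0∞) ^ (-s) = ENNReal.ofReal (zetaTerm K s n) := by
  rcases eq_or_ne n 0 with rfl | hn
  · have : IsEmpty ((fun I : {I : Ideal (𝓞 K) // I ≠ ⊥} ↦ Ideal.absNorm I.1) ⁻¹' {0}) :=
      ⟨fun I ↦ I.1.2 (Ideal.absNorm_eq_zero_iff.1 I.2)⟩
    simp [zetaTerm, Real.zero_rpow hs]
  let e : (fun I : {I : Ideal (𝓞 K) // I ≠ ⊥} ↦ Ideal.absNorm I.1) ⁻¹' {n} ≃
      {I : Ideal (𝓞 K) // Ideal.absNorm I = n} :=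
    Equiv.subtypeSubtypeEquivSubtype (p := (· ≠ ⊥)) (q := (Ideal.absNorm · = n)) fun {I} hI ↦ by
      rintro rfl
      exact hn (hI.symm.trans Ideal.absNorm_bot)
  have : Finite {I : Ideal (𝓞 K) // Ideal.absNorm I = n} :=
    Ideal.finite_setOfPred_absNorm_eq n
  have hpos : (0 : ℝ) < n := by positivity
  calc ∑' I : (fun I : {I : Ideal (𝓞 K) // I ≠ ⊥} ↦ Ideal.absNorm I.1) ⁻¹' {n},
        (Ideal.absNorm I.1.1 : ℝ≥0∞) ^ (-s)
      = ∑' _ : {I : Ideal (𝓞 K) // Ideal.absNorm I = n}, (n : ℝ≥0∞) ^ (-s) := by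
        rw [← e.tsum_eq]
        exact tsum_congr fun I ↦ by rw [show Ideal.absNorm I.1.1 = n from I.2]
    _ = ENNReal.ofReal (zetaTerm K s n) := by
        rw [ENNReal.tsum_const, ENat.card_eq_coe_natCard, zetaTerm, div_eq_mul_inv,
          ENNReal.ofReal_mul (Nat.cast_nonneg _), ← Real.rpow_neg hpos.le,
          ← ENNReal.ofReal_rpow_of_pos hpos, ENNReal.ofReal_natCast, ENNReal.ofReal_natCast,
          ENat.toENNReal_coe]

lemma multisetSum_absNormPow_eq_tsum_zetaTerm {s : ℝ} (hs : s ≠ 0) :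
    multisetSum (absNormPow (R := 𝓞 K) s) = ∑' n, ENNReal.ofReal (zetaTerm K s n) := by
  rw [multisetSum_absNormPow, ← ENNReal.tsum_fiberwise _ fun I ↦ Ideal.absNorm I.1]
  exact tsum_congr (tsum_absNorm_fiber_eq_ofReal_zetaTerm K hs)

lemma tendsto_sub_one_mul_tsum_zetaTerm :
    Tendsto (fun s : ℝ ↦ (s - 1) * ∑' n, zetaTerm K s n) (𝓝[>] 1)
      (𝓝 (dedekindZeta_residue K)) := by
  have h := (Complex.continuous_re.tendsto _).comp (tendsto_sub_one_mul_dedekindZeta_nhdsGT K)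
  rw [Complex.ofReal_re] at h
  refine h.congr' ?_
  filter_upwards [self_mem_nhdsWithin] with s hs
  rw [Function.comp_apply, dedekindZeta_eq_tsum_zetaTerm K (zero_lt_one.trans hs).ne']
  norm_cast

lemma tendsto_ofReal_sub_one_mul_multisetSum_absNormPow :
    Tendsto (fun s : ℝ ↦ ENNReal.ofReal (s - 1) * multisetSum (absNormPow (R := 𝓞 K) s)) (𝓝[>] 1)
      (𝓝 (ENNReal.ofReal (dedekindZeta_residue K))) := by
  have htendsto := tendsto_sub_one_mul_tsum_zetaTerm K
  refine (ENNReal.tendsto_ofReal htendsto).congr' ?_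
  filter_upwards [htendsto.eventually_const_lt (dedekindZeta_residue_pos K), self_mem_nhdsWithin]
    with s hpos hs
  -- A divergent real `tsum` would be zero, contradicting positivity near the pole.
  have hsummable : Summable (zetaTerm K s) := by
    by_contra h
    simp [tsum_eq_zero_of_not_summable h] at hpos
  rw [multisetSum_absNormPow_eq_tsum_zetaTerm K (zero_lt_one.trans hs).ne',
    ← ENNReal.ofReal_tsum_of_nonneg (zetaTerm_nonneg K s) hsummable,
    ENNReal.ofReal_mul (sub_nonneg.2 (le_of_lt hs))]

theorem tsum_absNormPow_one_eq_top : ∑' v, absNormPow (R := 𝓞 K) 1 v = ∞ := by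
  by_contra hfin
  have hC : multisetSum (absNormPow (R := 𝓞 K) 1) ≠ ∞ :=
    multisetSum_ne_top (by norm_num) absNormPow_one_le_two_inv hfin
  have hzero : Tendsto
      (fun s : ℝ ↦ ENNReal.ofReal (s - 1) * multisetSum (absNormPow (R := 𝓞 K) 1)) (𝓝[>] 1)
      (𝓝 0) := by
    have hsub : Tendsto (fun s : ℝ ↦ s - 1) (𝓝[>] 1) (𝓝 0) :=
      tendsto_nhdsWithin_of_tendsto_nhds (by simpa using (continuous_sub_right (1 : ℝ)).tendsto 1)
    simpa using ENNReal.Tendsto.mul_const (ENNReal.tendsto_ofReal hsub) (Or.inr hC)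
  have hle : ENNReal.ofReal (dedekindZeta_residue K) ≤ 0 := by
    refine le_of_tendsto_of_tendsto (tendsto_ofReal_sub_one_mul_multisetSum_absNormPow K) hzero ?_
    filter_upwards [self_mem_nhdsWithin] with s hs
    gcongr
    exact multisetSum_mono (absNormPow_le_of_le (le_of_lt hs))
  exact (ENNReal.ofReal_pos.2 (dedekindZeta_residue_pos K)).not_ge hle

variable {K} {K' : Type*} [Field K'] [NumberField K']

theorem tsum_compl_range_absNormPow_one_ne_top
    {τ : HeightOneSpectrum (𝓞 K') → HeightOneSpectrum (𝓞 K)} (hτ : Function.Injective τ)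
    (hnorm : ∀ w, Ideal.absNorm (τ w).asIdeal = Ideal.absNorm w.asIdeal) :
    ∑' v : ↥(Set.range τ)ᶜ, absNormPow 1 v.1 ≠ ∞ := by
  have hρ : ENNReal.ofReal (dedekindZeta_residue K') ≠ 0 :=
    (ENNReal.ofReal_pos.2 (dedekindZeta_residue_pos K')).ne'
  have hcomp (s : ℝ) : absNormPow s ∘ τ = absNormPow s := by
    ext w
    simp only [Function.comp_apply, absNormPow, hnorm]
  have hfinset (T : Finset ↥(Set.range τ)ᶜ) :
      ENNReal.ofReal (dedekindZeta_residue K') * ∑ v ∈ T, absNormPow 1 v.1 ≤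
        ENNReal.ofReal (dedekindZeta_residue K) := by
    have hsum : Tendsto (fun s ↦ ∑ v ∈ T, absNormPow s v.1) (𝓝[>] 1)
        (𝓝 (∑ v ∈ T, absNormPow 1 v.1)) :=
      ((continuous_finsetSum T fun v _ ↦ continuous_absNormPow v.1).tendsto 1).mono_left
        nhdsWithin_le_nhds
    refine le_of_tendsto_of_tendsto
      (ENNReal.Tendsto.mul (tendsto_ofReal_sub_one_mul_multisetSum_absNormPow K') (Or.inl hρ) hsum
        (Or.inr ENNReal.ofReal_ne_top))
      (tendsto_ofReal_sub_one_mul_multisetSum_absNormPow K) (Eventually.of_forall fun s ↦ ?_)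
    dsimp only
    rw [mul_assoc, ← hcomp s]
    gcongr
    refine le_trans ?_ (multisetSum_comp_mul_tsum_compl_range_le hτ)
    gcongr
    exact ENNReal.sum_le_tsum T
  have hle : ∑' v : ↥(Set.range τ)ᶜ, absNormPow 1 v.1 ≤
      ENNReal.ofReal (dedekindZeta_residue K) / ENNReal.ofReal (dedekindZeta_residue K') := by
    rw [ENNReal.tsum_eq_iSup_sum]
    refine iSup_le fun T ↦ ?_
    rw [ENNReal.le_div_iff_mul_le (Or.inl hρ) (Or.inl ENNReal.ofReal_ne_top), mul_comm]
    exact hfinset T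
  exact ne_top_of_le_ne_top (ENNReal.div_ne_top ENNReal.ofReal_ne_top hρ) hle

end Zeta

section MissedPlaces

open scoped ENNReal
open NumberField

universe u

lemma absNormPow_one_le_of_isGalois {K L : Type*} [Field K] [NumberField K] [Field L]
    [NumberField L] [Algebra K L] [IsGalois ℚ L] {v : HeightOneSpectrum (𝓞 K)}
    {P : HeightOneSpectrum (𝓞 L)} (h : v.under ℤ = P.under ℤ) :
    absNormPow 1 P ≤ absNormPow 1 v := by
  rw [absNormPow, absNormPow, ENNReal.rpow_neg_one, ENNReal.rpow_neg_one, ENNReal.inv_le_inv]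
  exact mod_cast absNorm_le_of_isGalois h

lemma exists_isGalois_extension (K : Type u) [Field K] [NumberField K] :
    ∃ (L : Type u) (_ : Field L) (_ : NumberField L) (_ : Algebra K L), IsGalois ℚ L := by
  have : IsAlgClosure ℚ (AlgebraicClosure K) :=
    ⟨inferInstance, Algebra.IsAlgebraic.trans ℚ K (AlgebraicClosure K)⟩
  have : Normal ℚ (AlgebraicClosure K) := IsAlgClosure.normal ℚ _
  let L := IntermediateField.normalClosure ℚ K (AlgebraicClosure K)
  have : NumberField L := ⟨⟩
  have : Normal ℚ L := by
    convert normalClosure.normal ℚ K (AlgebraicClosure K)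
    exact Subsingleton.elim _ _
  exact ⟨L, inferInstance, inferInstance, inferInstance, ⟨⟩⟩

theorem tsum_absNormPow_one_eq_top_of_under_eq {K : Type*} [Field K] [NumberField K]
    {V : HeightOneSpectrum ℤ → HeightOneSpectrum (𝓞 K)} (hV : ∀ q, (V q).under ℤ = q) :
    ∑' q, absNormPow 1 (V q) = ∞ := by
  obtain ⟨L, _, _, _, _⟩ := exists_isGalois_extension K
  by_contra hfin
  refine ENNReal.mul_ne_top (ENNReal.natCast_ne_top (Module.finrank ℤ (𝓞 L))) hfin ?_
  rw [← top_le_iff, ← tsum_absNormPow_one_eq_top L]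
  calc ∑' P : HeightOneSpectrum (𝓞 L), absNormPow 1 P
      ≤ ∑' P : HeightOneSpectrum (𝓞 L), absNormPow 1 (V (P.under ℤ)) :=
        ENNReal.tsum_le_tsum fun P ↦ absNormPow_one_le_of_isGalois (hV (P.under ℤ))
    _ ≤ Module.finrank ℤ (𝓞 L) * ∑' q, absNormPow 1 (V q) :=
        tsum_comp_under_le fun q ↦ absNormPow 1 (V q)

theorem exists_forall_under_eq_mem_range {K K' : Type*} [Field K] [NumberField K] [Field K']
    [NumberField K'] {τ : HeightOneSpectrum (𝓞 K') → HeightOneSpectrum (𝓞 K)}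
    (hτ : Function.Injective τ)
    (hnorm : ∀ w, Ideal.absNorm (τ w).asIdeal = Ideal.absNorm w.asIdeal) :
    ∃ q : HeightOneSpectrum ℤ, ∀ v, v.under ℤ = q → v ∈ Set.range τ := by
  by_contra! hmissed
  choose V hV hVmissed using hmissed
  have hVinj : Function.Injective fun q ↦ (⟨V q, hVmissed q⟩ : ↥(Set.range τ)ᶜ) :=
    fun p q h ↦ by rw [← hV p, ← hV q, show V p = V q from congrArg Subtype.val h]
  refine tsum_compl_range_absNormPow_one_ne_top hτ hnorm (top_le_iff.1 ?_)
  rw [← tsum_absNormPow_one_eq_top_of_under_eq hV]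
  exact ENNReal.tsum_comp_le_tsum_of_injective hVinj fun v ↦ absNormPow 1 v.1

end MissedPlaces

end FinitePlaces

theorem finite_places_injection_is_bijection_general
    {K K' : Type*} [Field K] [NumberField K] [Field K'] [NumberField K']
    {τ : HeightOneSpectrum (NumberField.RingOfIntegers K') →
         HeightOneSpectrum (NumberField.RingOfIntegers K)}
    (hτ : Function.Injective τ)
    (hnorm : ∀ w, Ideal.absNorm (τ w).asIdeal = Ideal.absNorm w.asIdeal)
    (hram : ∀ w, (τ w).asIdeal.ramificationIdx ℤ = w.asIdeal.ramificationIdx ℤ) :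
    Function.Bijective τ := by
  refine ⟨hτ, fun v₀ ↦ ?_⟩
  by_contra hv₀
  have hunder w : (τ w).under ℤ = w.under ℤ := FinitePlaces.under_int_eq_of_absNorm_eq (hnorm w)
  have hdeg w : FinitePlaces.localDegree ℤ (τ w) = FinitePlaces.localDegree ℤ w :=
    congrArg₂ (· * ·) (hram w) (FinitePlaces.inertiaDeg_int_eq_of_absNorm_eq (hnorm w))
  obtain ⟨q, hq⟩ := FinitePlaces.exists_forall_under_eq_mem_range hτ hnorm
  obtain ⟨v, hv, hvq⟩ := FinitePlaces.exists_notMem_range_under_eq hτ hunder hdeg hv₀ q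
  exact hv (hq v hvq)

/-- If `τ` is an injective map from the finite places of a number field `K'`
to the finite places of a number field `K` such that corresponding completions
are isomorphic as topological fields, then `τ` is a bijection. -/
theorem finite_places_injection_is_bijection
    (K K' : Type) [Field K] [NumberField K] [Field K'] [NumberField K']
    (τ : HeightOneSpectrum (NumberField.RingOfIntegers K') →
         HeightOneSpectrum (NumberField.RingOfIntegers K))
    (hinj : Function.Injective τ)
    (hiso : ∀ w : HeightOneSpectrum (NumberField.RingOfIntegers K'),
      ∃ e : w.adicCompletion K' ≃+* (τ w).adicCompletion K,
        Continuous (e : w.adicCompletion K' → (τ w).adicCompletion K) ∧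
        Continuous (e.symm : (τ w).adicCompletion K → w.adicCompletion K')) :
    Function.Bijective τ := by
  choose e he he' using hiso
  exact finite_places_injection_is_bijection_general hinj
    (fun w ↦ (FinitePlaces.absNorm_eq_of_bicontinuous (e w) (he w) (he' w)).symm)
    (fun w ↦ (FinitePlaces.ramificationIdx_int_eq_of_bicontinuous (e w) (he w) (he' w)).symm)
end

section
/- Let Γ₁ and Γ₂ be finitely generated groups having the same finite quotients. Then for every positive integer d, the number of conjugacy classes of subgroups of index d in Γ₁ equals the number of conjugacy classes of subgroups of index d in Γ₂; moreover, for every d and every n, the number of conjugacy classes of index-d subgroups consisting of exactly n subgroups is the same in Γ₁ and Γ₂. -/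
/-- Two groups have the same finite quotients. -/
def SameFiniteQuotients (G : Type*) (H : Type*) [Group G] [Group H] : Prop :=
  ∀ (Q : Type) [Group Q] [Finite Q],
    (∃ f : G →* Q, Function.Surjective f) ↔ ∃ f : H →* Q, Function.Surjective f

/-- Two subgroups are conjugate. -/
def SubgroupConj (G : Type*) [Group G] (H K : Subgroup G) : Prop :=
  ∃ g : G, Subgroup.map (MulAut.conj g).toMonoidHom H = K

/-- The set of conjugacy classes of subgroups of index `d` in `G`: each class
is the set of subgroups conjugate to some fixed subgroup of index `d`. -/
def conjClassesOfIndex (G : Type*) [Group G] (d : ℕ) : Set (Set (Subgroup G)) :=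
  {C | ∃ H : Subgroup G, H.index = d ∧ C = {K | SubgroupConj G H K}}

/-!
Pulling subgroups back along a surjection `G → Q` preserves the index, and carries conjugacy classes
to conjugacy classes of the same size. Hence each conjugacy class count of a quotient of `G` is at
most that of `G`. Conversely, any finite family of finite index subgroups is pulled back from a
single finite quotient of `G`, because the intersection of the family has a normal core of finite
index. So the count for `G`, as an element of `ℕ∞`, is the supremum of the counts for its finite
quotients.
-/

open Function Set

universe w

theorem encard_le_of_forall_finite_subset {α : Type*} {s : Set α} {a : ℕ∞}
    (h : ∀ t ⊆ s, t.Finite → t.encard ≤ a) : s.encard ≤ a := by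
  refine ENat.forall_natCast_le_iff_le.mp fun k hk => ?_
  obtain ⟨t, hts, ht⟩ := exists_subset_encard_eq hk
  exact ht ▸ h t hts (finite_of_encard_eq_coe ht)

theorem exists_finite_quotient_ker_le {G : Type*} [Group G] {s : Set (Subgroup G)}
    (hs : s.Finite) (hindex : ∀ H ∈ s, H.FiniteIndex) :
    ∃ (Q : Type w) (_ : Group Q) (_ : Finite Q) (f : G →* Q),
      Surjective f ∧ ∀ H ∈ s, f.ker ≤ H := by
  have := hs.to_subtype
  have : (sInf s).FiniteIndex := by
    rw [sInf_eq_iInf']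
    exact Subgroup.finiteIndex_iInf fun H => hindex H H.2
  let N := (sInf s).normalCore
  let e : Shrink.{w} (G ⧸ N) ≃* G ⧸ N := Shrink.mulEquiv
  refine ⟨Shrink.{w} (G ⧸ N), inferInstance, inferInstance,
    e.symm.toMonoidHom.comp (QuotientGroup.mk' N),
    e.symm.surjective.comp (QuotientGroup.mk'_surjective N), fun H hH => ?_⟩
  calc (e.symm.toMonoidHom.comp (QuotientGroup.mk' N)).ker
      = N := by rw [MulEquiv.toMonoidHom_eq_coe, MonoidHom.ker_mulEquiv_comp,
          QuotientGroup.ker_mk']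
    _ ≤ sInf s := Subgroup.normalCore_le _
    _ ≤ H := sInf_le hH

section ConjugacyClasses

variable {G Q : Type*} [Group G] [Group Q]

/-- The conjugacy class of a subgroup, as a set of subgroups. -/
def subgroupConjClass (H : Subgroup G) : Set (Subgroup G) :=
  {K | SubgroupConj G H K}

/-- The conjugacy classes of subgroups of index `d` whose number of members lies in `S`: the choices
`S = univ` and `S = {n}` give the two families to be counted. For `d ≠ 0` every class is finite, so
that `Nat.card` is its true size. -/
def conjClassesOfIndexWithCard (G : Type*) [Group G] (d : ℕ) (S : Set ℕ) :
    Set (Set (Subgroup G)) :=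
  {C ∈ conjClassesOfIndex G d | Nat.card C ∈ S}

theorem conjClassesOfIndexWithCard_eq_image (d : ℕ) (S : Set ℕ) :
    conjClassesOfIndexWithCard G d S =
      subgroupConjClass '' {H | H.index = d ∧ Nat.card (subgroupConjClass H) ∈ S} := by
  ext C
  constructor
  · rintro ⟨⟨H, hH, rfl⟩, hcard⟩
    exact ⟨H, ⟨hH, hcard⟩, rfl⟩
  · rintro ⟨H, ⟨hH, hcard⟩, rfl⟩
    exact ⟨⟨H, hH, rfl⟩, hcard⟩

theorem map_conj_comap (f : G →* Q) (g : G) (H : Subgroup Q) :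
    (H.comap f).map (MulAut.conj g).toMonoidHom =
      (H.map (MulAut.conj (f g)).toMonoidHom).comap f := by
  ext x
  simp only [Subgroup.mem_map_equiv, Subgroup.mem_comap, MulAut.conj_symm_apply, map_mul, map_inv]

theorem subgroupConjClass_comap {f : G →* Q} (hf : Surjective f) (H : Subgroup Q) :
    subgroupConjClass (H.comap f) = Subgroup.comap f '' subgroupConjClass H := by
  ext K
  constructor
  · rintro ⟨g, rfl⟩
    exact ⟨_, ⟨f g, rfl⟩, (map_conj_comap f g H).symm⟩
  · rintro ⟨_, ⟨q, rfl⟩, rfl⟩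
    obtain ⟨g, rfl⟩ := hf q
    exact ⟨g, map_conj_comap f g H⟩

theorem card_subgroupConjClass_comap {f : G →* Q} (hf : Surjective f) (H : Subgroup Q) :
    Nat.card (subgroupConjClass (H.comap f)) = Nat.card (subgroupConjClass H) := by
  rw [subgroupConjClass_comap hf, Nat.card_image_of_injective (Subgroup.comap_injective hf)]

theorem encard_conjClassesOfIndexWithCard_le_of_surjective {f : G →* Q} (hf : Surjective f)
    (d : ℕ) (S : Set ℕ) :
    (conjClassesOfIndexWithCard Q d S).encard ≤ (conjClassesOfIndexWithCard G d S).encard := by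
  have hinj : Injective (image (Subgroup.comap f)) :=
    image_injective.2 (Subgroup.comap_injective hf)
  rw [← hinj.encard_image]
  refine encard_le_encard ?_
  simp only [conjClassesOfIndexWithCard_eq_image]
  rintro _ ⟨_, ⟨H, ⟨hH, hcard⟩, rfl⟩, rfl⟩
  exact ⟨H.comap f, ⟨(H.index_comap_of_surjective hf).trans hH,
    (card_subgroupConjClass_comap hf H).symm ▸ hcard⟩, subgroupConjClass_comap hf H⟩

theorem subgroupConjClass_mem_image_of_ker_le {f : G →* Q} (hf : Surjective f) {H : Subgroup G}
    (hker : f.ker ≤ H) {S : Set ℕ} (hcard : Nat.card (subgroupConjClass H) ∈ S) :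
    subgroupConjClass H ∈
      image (Subgroup.comap f) '' conjClassesOfIndexWithCard Q H.index S := by
  have hcomap : (H.map f).comap f = H := Subgroup.comap_map_eq_self hker
  rw [conjClassesOfIndexWithCard_eq_image]
  refine ⟨_, ⟨H.map f, ⟨H.index_map_eq hf hker, ?_⟩, rfl⟩, ?_⟩
  · rwa [← card_subgroupConjClass_comap hf, hcomap]
  · rw [← subgroupConjClass_comap hf, hcomap]

theorem exists_finite_quotient_encard_le {d : ℕ} (hd : d ≠ 0) {S : Set ℕ}
    {t : Set (Set (Subgroup G))} (ht : t.Finite) (htG : t ⊆ conjClassesOfIndexWithCard G d S) :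
    ∃ (Q : Type w) (_ : Group Q) (_ : Finite Q) (f : G →* Q),
      Surjective f ∧ t.encard ≤ (conjClassesOfIndexWithCard Q d S).encard := by
  rw [conjClassesOfIndexWithCard_eq_image] at htG
  obtain ⟨s, hs, hsfin, rfl⟩ := exists_subset_image_finite_and.1 ⟨t, htG, ht, rfl⟩
  obtain ⟨Q, _, _, f, hf, hker⟩ :=
    exists_finite_quotient_ker_le hsfin fun H hH => ⟨(hs hH).1.trans_ne hd⟩
  refine ⟨Q, inferInstance, inferInstance, f, hf, ?_⟩
  calc (subgroupConjClass '' s).encard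
      ≤ (image (Subgroup.comap f) '' conjClassesOfIndexWithCard Q d S).encard := by
        refine encard_le_encard (image_subset_iff.2 fun H hH => ?_)
        obtain ⟨rfl, hcard⟩ := hs hH
        exact subgroupConjClass_mem_image_of_ker_le hf (hker H hH) hcard
    _ ≤ (conjClassesOfIndexWithCard Q d S).encard := encard_image_le _ _

theorem encard_conjClassesOfIndexWithCard_le {G' : Type*} [Group G']
    (hquot : ∀ (Q : Type) [Group Q] [Finite Q],
      (∃ f : G →* Q, Surjective f) → ∃ f : G' →* Q, Surjective f)
    {d : ℕ} (hd : d ≠ 0) (S : Set ℕ) :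
    (conjClassesOfIndexWithCard G d S).encard ≤ (conjClassesOfIndexWithCard G' d S).encard := by
  refine encard_le_of_forall_finite_subset fun t htG ht => ?_
  obtain ⟨Q, _, _, f, hf, hle⟩ := exists_finite_quotient_encard_le hd ht htG
  obtain ⟨f', hf'⟩ := hquot Q ⟨f, hf⟩
  exact hle.trans (encard_conjClassesOfIndexWithCard_le_of_surjective hf' d S)

theorem conj_class_counts_eq_general {Γ₁ Γ₂ : Type*} [Group Γ₁] [Group Γ₂]
    (hfq : SameFiniteQuotients Γ₁ Γ₂) {d : ℕ} (hd : d ≠ 0) (S : Set ℕ) :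
    (conjClassesOfIndexWithCard Γ₁ d S).encard = (conjClassesOfIndexWithCard Γ₂ d S).encard :=
  le_antisymm (encard_conjClassesOfIndexWithCard_le (fun Q _ _ => (hfq Q).1) hd S)
    (encard_conjClassesOfIndexWithCard_le (fun Q _ _ => (hfq Q).2) hd S)

end ConjugacyClasses

/-- Finitely generated groups with the same finite quotients have, for each
positive index `d`, the same number of conjugacy classes of index-`d`
subgroups; moreover, for each `n`, the same number of such classes of size
exactly `n`. -/
theorem conj_class_counts_eq (Γ₁ Γ₂ : Type) [Group Γ₁] [Group Γ₂]
    [Group.FG Γ₁] [Group.FG Γ₂] (hfq : SameFiniteQuotients Γ₁ Γ₂)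
    (d : ℕ) (hd : 0 < d) :
    Nat.card (conjClassesOfIndex Γ₁ d) = Nat.card (conjClassesOfIndex Γ₂ d) ∧
      ∀ n : ℕ,
        Nat.card {C : Set (Subgroup Γ₁) //
            C ∈ conjClassesOfIndex Γ₁ d ∧ Nat.card C = n} =
        Nat.card {C : Set (Subgroup Γ₂) //
            C ∈ conjClassesOfIndex Γ₂ d ∧ Nat.card C = n} := by
  have hcard := fun S => congrArg ENat.toNat (conj_class_counts_eq_general hfq hd.ne' S)
  exact ⟨by simpa [conjClassesOfIndexWithCard, ncard_def] using hcard univ, fun n => hcard {n}⟩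
end

section
/- If Γ₁ and Γ₂ are finitely generated groups having the same finite quotients, then their abelianizations are isomorphic: H₁(Γ₁, ℤ) ≅ H₁(Γ₂, ℤ), i.e. Abelianization Γ₁ ≃* Abelianization Γ₂. -/
/-!
Write `A` and `B` for the two abelianizations. For `n ≠ 0` the group `A / Aⁿ` is a finite quotient
of `Γ₁`, hence of `Γ₂`; being abelian of exponent dividing `n`, it is a quotient of `B / Bⁿ`. By
symmetry `[A : Aⁿ] = [B : Bⁿ]` for all `n ≠ 0`, and these indices determine a finitely generated
abelian group: if `A ≅ ∏ᵢ ℤ/qᵢ` with each `qᵢ` zero or a prime power, then `[A : Aⁿ] = ∏ᵢ gcd(n,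
qᵢ)`, and passing from `n = pᵏ` to `n = pᵏ⁺¹` multiplies this by `p ^ #{i | pᵏ⁺¹ ∣ qᵢ}`. The
counts `#{i | pᵏ ∣ qᵢ}` in turn determine how often each prime power and `0` occur among the `qᵢ`.
-/

open Finset Function

section PrimePowerFamilies

theorem gcd_prime_pow_succ {p : ℕ} (hp : p.Prime) (k m : ℕ) :
    (p ^ (k + 1)).gcd m = (p ^ k).gcd m * if p ^ (k + 1) ∣ m then p else 1 := by
  have hdvd : p ^ k ∣ p ^ (k + 1) := pow_dvd_pow p k.le_succ
  split_ifs with h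
  · rw [Nat.gcd_eq_left h, Nat.gcd_eq_left (hdvd.trans h), pow_succ]
  · rw [mul_one]
    refine Nat.dvd_antisymm (Nat.dvd_gcd ?_ (Nat.gcd_dvd_right _ _))
      (Nat.gcd_dvd_gcd_of_dvd_left _ hdvd)
    obtain ⟨l, hl, hgcd⟩ := (Nat.dvd_prime_pow hp).1 (Nat.gcd_dvd_left (p ^ (k + 1)) m)
    have hne : l ≠ k + 1 := by
      rintro rfl
      exact h (hgcd ▸ Nat.gcd_dvd_right _ _)
    exact hgcd ▸ pow_dvd_pow p (by omega)

theorem prime_pow_dvd_iff_eq_or_pow_succ_dvd {p k m : ℕ} (hp : p.Prime) (hk : k ≠ 0)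
    (hm : m = 0 ∨ IsPrimePow m) : p ^ k ∣ m ↔ m = p ^ k ∨ p ^ (k + 1) ∣ m := by
  refine ⟨fun h ↦ ?_, ?_⟩
  · obtain rfl | hm := hm
    · exact Or.inr (dvd_zero _)
    · obtain ⟨l, e, hl, -, rfl⟩ := (isPrimePow_nat_iff _).1 hm
      obtain rfl : p = l :=
        (Nat.prime_dvd_prime_iff_eq hp hl).1 (hp.dvd_of_dvd_pow ((dvd_pow_self p hk).trans h))
      obtain rfl | hlt := ((Nat.pow_dvd_pow_iff_le_right hp.one_lt).1 h).eq_or_lt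
      exacts [Or.inl rfl, Or.inr (pow_dvd_pow p hlt)]
  · rintro (rfl | h)
    exacts [dvd_rfl, (pow_dvd_pow p k.le_succ).trans h]

theorem exists_prime_forall_dvd_iff_eq_zero (s : Finset ℕ) :
    ∃ p : ℕ, p.Prime ∧ ∀ m ∈ s, p ∣ m ↔ m = 0 := by
  obtain ⟨p, hlt, hp⟩ := Nat.exists_infinite_primes (s.sup id + 1)
  refine ⟨p, hp, fun m hm ↦ ⟨fun h ↦ Nat.eq_zero_of_dvd_of_lt h ?_, fun h ↦ h ▸ dvd_zero p⟩⟩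
  exact (Nat.lt_succ_of_le (le_sup (f := id) hm)).trans_le hlt

variable {ι κ : Type*} [Fintype ι] [Fintype κ]

theorem prod_gcd_prime_pow_succ (q : ι → ℕ) {p : ℕ} (hp : p.Prime) (k : ℕ) :
    ∏ i, (p ^ (k + 1)).gcd (q i) = (∏ i, (p ^ k).gcd (q i)) * p ^ #{i | p ^ (k + 1) ∣ q i} := by
  simp only [gcd_prime_pow_succ hp, prod_mul_distrib, prod_ite, prod_const, one_pow, mul_one]

theorem card_filter_prime_pow_dvd (q : ι → ℕ) (hq : ∀ i, q i = 0 ∨ IsPrimePow (q i))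
    {p k : ℕ} (hp : p.Prime) (hk : k ≠ 0) :
    #{i | p ^ k ∣ q i} = #{i | q i = p ^ k} + #{i | p ^ (k + 1) ∣ q i} := by
  classical
  simp only [prime_pow_dvd_iff_eq_or_pow_succ_dvd hp hk (hq _)]
  rw [filter_or, card_union_of_disjoint]
  refine disjoint_filter.2 fun i _ heq hdvd ↦ k.lt_irrefl ?_
  rwa [heq, Nat.pow_dvd_pow_iff_le_right hp.one_lt] at hdvd

theorem card_filter_prime_pow_dvd_eq_of_prod_gcd_eq {q : ι → ℕ} {r : κ → ℕ}
    (h : ∀ n ≠ 0, ∏ i, n.gcd (q i) = ∏ j, n.gcd (r j)) {p k : ℕ} (hp : p.Prime) (hk : k ≠ 0) :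
    #{i | p ^ k ∣ q i} = #{j | p ^ k ∣ r j} := by
  obtain ⟨k, rfl⟩ := Nat.exists_eq_succ_of_ne_zero hk
  have hpow (l : ℕ) : p ^ l ≠ 0 := pow_ne_zero l hp.ne_zero
  have hsucc := h _ (hpow (k + 1))
  rw [prod_gcd_prime_pow_succ q hp, prod_gcd_prime_pow_succ r hp, h _ (hpow k)] at hsucc
  have hpos : 0 < ∏ j, (p ^ k).gcd (r j) :=
    prod_pos fun j _ ↦ Nat.gcd_pos_of_pos_left _ (hpow k).bot_lt
  exact Nat.pow_right_injective hp.two_le (Nat.eq_of_mul_eq_mul_left hpos hsucc)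

theorem card_fiber_eq_of_prod_gcd_eq {q : ι → ℕ} {r : κ → ℕ}
    (hq : ∀ i, q i = 0 ∨ IsPrimePow (q i)) (hr : ∀ j, r j = 0 ∨ IsPrimePow (r j))
    (h : ∀ n ≠ 0, ∏ i, n.gcd (q i) = ∏ j, n.gcd (r j)) (v : ℕ) :
    #{i | q i = v} = #{j | r j = v} := by
  classical
  by_cases hv : v = 0 ∨ IsPrimePow v
  · obtain rfl | hv := hv
    · obtain ⟨p, hp, hdvd⟩ := exists_prime_forall_dvd_iff_eq_zero (univ.image q ∪ univ.image r)
      have hqp (i : ι) : p ∣ q i ↔ q i = 0 := hdvd _ (by simp)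
      have hrp (j : κ) : p ∣ r j ↔ r j = 0 := hdvd _ (by simp)
      simpa only [pow_one, hqp, hrp] using
        card_filter_prime_pow_dvd_eq_of_prod_gcd_eq h hp one_ne_zero
    · obtain ⟨p, k, hp, hk, rfl⟩ := (isPrimePow_nat_iff _).1 hv
      have hk_count := card_filter_prime_pow_dvd_eq_of_prod_gcd_eq h hp hk.ne'
      have hsucc_count := card_filter_prime_pow_dvd_eq_of_prod_gcd_eq h hp k.succ_ne_zero
      rw [card_filter_prime_pow_dvd q hq hp hk.ne', card_filter_prime_pow_dvd r hr hp hk.ne',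
        hsucc_count] at hk_count
      exact Nat.add_right_cancel hk_count
  · rw [card_filter_eq_zero_iff.2 fun i _ (hi : q i = v) ↦ hv (hi ▸ hq i),
      card_filter_eq_zero_iff.2 fun j _ (hj : r j = v) ↦ hv (hj ▸ hr j)]

theorem exists_equiv_of_card_fiber_eq {α : Type*} [DecidableEq α] {q : ι → α} {r : κ → α}
    (h : ∀ v, #{i | q i = v} = #{j | r j = v}) : ∃ σ : ι ≃ κ, ∀ i, r (σ i) = q i := by
  have hfiber (v : α) : Nonempty ({i // q i = v} ≃ {j // r j = v}) := by
    rw [← Fintype.card_eq, Fintype.card_subtype, Fintype.card_subtype, h v]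
  exact ⟨Equiv.ofFiberEquiv fun v ↦ (hfiber v).some, Equiv.ofFiberEquiv_map _⟩

end PrimePowerFamilies

section FinitelyGeneratedAbelianGroups

theorem nonempty_addEquiv_pi_subtype {ι : Type*} {M : ι → Type*} [∀ i, AddZeroClass (M i)]
    {P : ι → Prop} (hP : ∀ i, ¬ P i → Subsingleton (M i)) :
    Nonempty ((∀ i, M i) ≃+ ∀ i : {i // P i}, M i) := by
  classical
  let restrict : (∀ i, M i) →+ ∀ i : {i // P i}, M i :=
    AddMonoidHom.pi fun i ↦ Pi.evalAddMonoidHom M i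
  refine ⟨AddEquiv.ofBijective restrict ⟨fun x y hxy ↦ funext fun i ↦ ?_, fun y ↦ ?_⟩⟩
  · by_cases hi : P i
    · exact congrFun hxy ⟨i, hi⟩
    · exact (hP i hi).elim _ _
  · exact ⟨fun i ↦ if hi : P i then y ⟨i, hi⟩ else 0, funext fun i ↦ dif_pos i.2⟩

theorem exists_addEquiv_pi_zmod (A : Type*) [AddCommGroup A] [AddGroup.FG A] :
    ∃ (ι : Type) (_ : Fintype ι) (q : ι → ℕ), (∀ i, q i = 0 ∨ IsPrimePow (q i)) ∧
      Nonempty (A ≃+ ∀ i, ZMod (q i)) := by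
  classical
  obtain ⟨n, ι, _, p, hp, e, ⟨E⟩⟩ := AddCommGroup.equiv_free_prod_directSum_zmod A
  let q : Fin n ⊕ ι → ℕ := Sum.elim (fun _ ↦ 0) fun i ↦ p i ^ e i
  let free : (Fin n →₀ ℤ) ≃+ ∀ i : Fin n, ZMod (q (Sum.inl i)) := Finsupp.addEquivFunOnFinite
  let torsion : (DirectSum ι fun i ↦ ZMod (p i ^ e i)) ≃+ ∀ i : ι, ZMod (q (Sum.inr i)) :=
    DirectSum.addEquivProd _
  let glue := (LinearEquiv.sumPiEquivProdPi ℤ (Fin n) ι fun s ↦ ZMod (q s)).toAddEquiv.symm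
  obtain ⟨dropTrivial⟩ := nonempty_addEquiv_pi_subtype (M := fun s ↦ ZMod (q s))
    (P := fun s ↦ q s ≠ 1) fun s hs ↦ ZMod.subsingleton_iff.2 (not_not.1 hs)
  refine ⟨{s // q s ≠ 1}, inferInstance, fun s ↦ q s, ?_,
    ⟨((E.trans (free.prodCongr torsion)).trans glue).trans dropTrivial⟩⟩
  rintro ⟨s | i, hs⟩
  · exact Or.inl rfl
  · exact Or.inr ((hp i).isPrimePow.pow fun he ↦ hs (by simp [q, he]))

theorem index_range_nsmulAddMonoidHom_congr {A B : Type*} [AddCommGroup A] [AddCommGroup B]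
    (e : A ≃+ B) (n : ℕ) :
    (nsmulAddMonoidHom n : A →+ A).range.index = (nsmulAddMonoidHom n : B →+ B).range.index := by
  rw [← e.map_range_nsmulAddMonoidHom, AddSubgroup.index_map_equiv]

theorem index_range_nsmulAddMonoidHom_zmod (m n : ℕ) :
    (nsmulAddMonoidHom n : ZMod m →+ ZMod m).range.index = n.gcd m := by
  cases m with
  | zero =>
    change (nsmulAddMonoidHom n : ℤ →+ ℤ).range.index = _
    rw [Int.range_nsmulAddMonoidHom, Int.index_zmultiples, Int.natAbs_natCast, Nat.gcd_zero_right]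
  | succ m =>
    rw [IsAddCyclic.index_nsmulAddMonoidHom_range, Nat.card_zmod, Nat.gcd_comm]

theorem index_range_nsmulAddMonoidHom_pi {ι : Type*} [Fintype ι] (A : ι → Type*)
    [∀ i, AddCommGroup (A i)] (n : ℕ) :
    (nsmulAddMonoidHom n : (∀ i, A i) →+ ∀ i, A i).range.index =
      ∏ i, (nsmulAddMonoidHom n : A i →+ A i).range.index := by
  simp only [AddSubgroup.index_eq_card, ← Nat.card_pi]
  exact Nat.card_congr (QuotientAddGroup.addEquivPiModRangeNSMulAddMonoidHom A n).toEquiv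

theorem nonempty_addEquiv_of_index_range_nsmulAddMonoidHom_eq {A B : Type*}
    [AddCommGroup A] [AddCommGroup B] [AddGroup.FG A] [AddGroup.FG B]
    (h : ∀ n ≠ 0, (nsmulAddMonoidHom n : A →+ A).range.index =
      (nsmulAddMonoidHom n : B →+ B).range.index) :
    Nonempty (A ≃+ B) := by
  obtain ⟨ι, _, q, hq, ⟨E⟩⟩ := exists_addEquiv_pi_zmod A
  obtain ⟨κ, _, r, hr, ⟨F⟩⟩ := exists_addEquiv_pi_zmod B
  have hgcd (n : ℕ) (hn : n ≠ 0) : ∏ i, n.gcd (q i) = ∏ j, n.gcd (r j) := by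
    simpa only [index_range_nsmulAddMonoidHom_congr E, index_range_nsmulAddMonoidHom_congr F,
      index_range_nsmulAddMonoidHom_pi, index_range_nsmulAddMonoidHom_zmod] using h n hn
  obtain ⟨σ, hσ⟩ := exists_equiv_of_card_fiber_eq (card_fiber_eq_of_prod_gcd_eq hq hr hgcd)
  obtain rfl : r ∘ σ = q := funext hσ
  exact ⟨(E.trans (RingEquiv.piCongrLeft (fun j ↦ ZMod (r j)) σ).toAddEquiv).trans F.symm⟩

theorem nonempty_mulEquiv_of_index_range_powMonoidHom_eq {A B : Type*}
    [CommGroup A] [CommGroup B] [Group.FG A] [Group.FG B]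
    (h : ∀ n ≠ 0, (powMonoidHom n : A →* A).range.index = (powMonoidHom n : B →* B).range.index) :
    Nonempty (A ≃* B) :=
  (nonempty_addEquiv_of_index_range_nsmulAddMonoidHom_eq (A := Additive A) (B := Additive B)
    h).map MulEquiv.toAdditive.symm

end FinitelyGeneratedAbelianGroups

section FiniteQuotients

theorem index_range_powMonoidHom_dvd_of_surjective {A B : Type*} [CommGroup A] [CommGroup B]
    {n : ℕ} (f : B →* A ⧸ (powMonoidHom n : A →* A).range) (hf : Surjective f) :
    (powMonoidHom n : A →* A).range.index ∣ (powMonoidHom n : B →* B).range.index := by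
  have hker : (powMonoidHom n : B →* B).range ≤ f.ker := by
    rintro _ ⟨b, rfl⟩
    obtain ⟨a, ha⟩ := QuotientGroup.mk_surjective (f b)
    rw [MonoidHom.mem_ker, powMonoidHom_apply, map_pow, ← ha, ← QuotientGroup.mk_pow,
      QuotientGroup.eq_one_iff]
    exact ⟨a, rfl⟩
  have hindex : f.ker.index = (powMonoidHom n : A →* A).range.index := by
    rw [Subgroup.index_ker, MonoidHom.range_eq_top.2 hf, Subgroup.card_top, Subgroup.index_eq_card]
  exact hindex ▸ Subgroup.index_dvd_of_le hker

theorem exists_surjective_abelianization_iff {G A : Type*} [Group G] [CommGroup A] :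
    (∃ f : Abelianization G →* A, Surjective f) ↔ ∃ f : G →* A, Surjective f := by
  refine ⟨fun ⟨f, hf⟩ ↦ ⟨f.comp Abelianization.of, hf.comp QuotientGroup.mk_surjective⟩,
    fun ⟨f, hf⟩ ↦ ⟨Abelianization.lift f, fun a ↦ ?_⟩⟩
  obtain ⟨g, rfl⟩ := hf a
  exact ⟨Abelianization.of g, Abelianization.lift_apply_of f g⟩

theorem exists_surjective_of_finite {G H : Type*} [Group G] [Group H]
    (h : ∀ (Q : Type) [CommGroup Q] [Finite Q],
      (∃ f : G →* Q, Surjective f) → ∃ f : H →* Q, Surjective f)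
    {Q : Type*} [CommGroup Q] [Finite Q] (hQ : ∃ f : G →* Q, Surjective f) :
    ∃ f : H →* Q, Surjective f := by
  obtain ⟨f, hf⟩ := hQ
  let e : Shrink.{0} Q ≃* Q := Shrink.mulEquiv
  have : Finite (Shrink.{0} Q) := Finite.of_equiv Q e.symm
  obtain ⟨g, hg⟩ := h (Shrink.{0} Q) ⟨e.symm.toMonoidHom.comp f, e.symm.surjective.comp hf⟩
  exact ⟨e.toMonoidHom.comp g, e.surjective.comp hg⟩

theorem index_range_powMonoidHom_abelianization_dvd {G H : Type*} [Group G] [Group H]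
    [Group.FG (Abelianization G)]
    (h : ∀ (Q : Type) [CommGroup Q] [Finite Q],
      (∃ f : G →* Q, Surjective f) → ∃ f : H →* Q, Surjective f) {n : ℕ} (hn : n ≠ 0) :
    (powMonoidHom n : Abelianization G →* Abelianization G).range.index ∣
      (powMonoidHom n : Abelianization H →* Abelianization H).range.index := by
  have := Subgroup.finiteIndex_range_powMonoidHom_of_fg (Abelianization G) hn
  obtain ⟨f, hf⟩ := exists_surjective_abelianization_iff.2 <| exists_surjective_of_finite h <|
    exists_surjective_abelianization_iff.1 ⟨_, QuotientGroup.mk'_surjective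
      (powMonoidHom n : Abelianization G →* Abelianization G).range⟩
  exact index_range_powMonoidHom_dvd_of_surjective f hf

end FiniteQuotients

theorem abelianization_eq_of_same_finite_quotients_general {Γ₁ Γ₂ : Type*}
    [Group Γ₁] [Group Γ₂] [Group.FG (Abelianization Γ₁)] [Group.FG (Abelianization Γ₂)]
    (hfq : ∀ (Q : Type) [CommGroup Q] [Finite Q],
      (∃ f : Γ₁ →* Q, Surjective f) ↔ ∃ f : Γ₂ →* Q, Surjective f) :
    Nonempty (Abelianization Γ₁ ≃* Abelianization Γ₂) :=
  nonempty_mulEquiv_of_index_range_powMonoidHom_eq fun _ hn ↦ Nat.dvd_antisymm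
    (index_range_powMonoidHom_abelianization_dvd (fun Q _ _ ↦ (hfq Q).1) hn)
    (index_range_powMonoidHom_abelianization_dvd (fun Q _ _ ↦ (hfq Q).2) hn)

/-- Finitely generated groups with the same finite quotients have isomorphic
abelianizations: `H₁(Γ₁, ℤ) ≅ H₁(Γ₂, ℤ)`. -/
theorem abelianization_eq_of_same_finite_quotients (Γ₁ Γ₂ : Type)
    [Group Γ₁] [Group Γ₂] [Group.FG Γ₁] [Group.FG Γ₂]
    (hfq : SameFiniteQuotients Γ₁ Γ₂) :
    Nonempty (Abelianization Γ₁ ≃* Abelianization Γ₂) := by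
  have (Γ : Type) [Group Γ] [Group.FG Γ] : Group.FG (Abelianization Γ) := QuotientGroup.fg _
  exact abelianization_eq_of_same_finite_quotients_general fun Q _ _ ↦ hfq Q
end

section
/- Every subgroup Δ of PSL(2, ℤ[ω]) of finite index at most 12 has first Betti number b₁(Δ) ≤ 1; equivalently, no subgroup of PSL(2, ℤ[ω]) of finite index at most 12 admits a surjective homomorphism onto ℤ × ℤ. -/
/-!
The group `G = PSL(2, ℤ[ω])` is generated by two copies `A = ⟨x, t⟩` and `B = ⟨x, s⟩` of `A₄`, with
`(st)³ = 1`. A homomorphism `F : Δ → ℚ` extends to a `Δ`-equivariant function on `G`, which may be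
averaged over `A` or over `B` because both are finite. The difference of the two averages is a
function on `G ⧸ Δ`; it is `x`-invariant, `(st)³ = 1` makes an alternating sum of it vanish, and
`F = 0` if it is the sum of an `A`-invariant and a `B`-invariant function. It therefore suffices
that the functions with the first two properties have dimension at most one modulo such sums.

If `x` or `t` fixes a point of `G ⧸ Δ`, then, as there are at most `12` points, `x` or `t` fixes a
point in every `A`-orbit, so that every `A`-orbit splits into at most two `x`-orbits, and likewise
for `B`; counting orbits gives the bound. Otherwise `A` and `B` both act simply transitively on `12`
points, and the finitely many ways in which the two actions can share `x` are enumerated.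
-/

namespace EisensteinPSL2

open Subgroup MulAction
open scoped Matrix

theorem card_orbits_le_two_mul {H K X : Type*} [Group H] [Group K] [MulAction H X] [MulAction K X]
    [Finite X] (hcover : ∀ p : X, ∃ r₁ r₂, orbit K p ⊆ orbit H r₁ ∪ orbit H r₂) :
    Nat.card (orbitRel.Quotient H X) ≤ 2 * Nat.card (orbitRel.Quotient K X) := by
  choose r₁ r₂ hr using hcover
  let f : Bool × orbitRel.Quotient K X → orbitRel.Quotient H X := fun c ↦
    Quotient.mk'' (bif c.1 then r₁ c.2.out else r₂ c.2.out)
  have hf : Function.Surjective f := by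
    intro o
    induction o using Quotient.inductionOn' with | h q =>
    have hq : q ∈ orbit K (Quotient.mk'' q : orbitRel.Quotient K X).out :=
      orbitRel_apply.mp (Quotient.exact' (Quotient.out_eq' _).symm)
    rcases hr _ hq with hq | hq
    · exact ⟨(true, Quotient.mk'' q), (Quotient.sound' (orbitRel_apply.mpr hq)).symm⟩
    · exact ⟨(false, Quotient.mk'' q), (Quotient.sound' (orbitRel_apply.mpr hq)).symm⟩
  simpa [Nat.card_prod] using Nat.card_le_card_of_surjective f hf

theorem pow_smul_mem_orbit_zpowers {G X : Type*} [Group G] [MulAction G X] (x : G) (n : ℕ)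
    (p : X) : x ^ n • p ∈ orbit (zpowers x) p :=
  ⟨⟨_, npow_mem_zpowers x n⟩, rfl⟩

/-- Elements satisfying the presentation `⟨x, t | x³ = t² = (tx)³ = 1⟩` of `A₄`, the rotation group
of the tetrahedron. -/
structure IsTetrahedralPair {G : Type*} [Group G] (x t : G) : Prop where
  pow_three : x ^ 3 = 1
  mul_self : t * t = 1
  mul_pow_three : (t * x) ^ 3 = 1

/-- The twelve darts (directed edges) of the tetrahedron, on which `A₄` acts simply transitively:
`(c, i)` is the `i`-th dart at the vertex `c`. -/
abbrev Dart : Type := Option (Fin 3) × Fin 3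

namespace Dart

/-- The rotation about the initial vertex of a dart, by which `x` acts. -/
def rot : Equiv.Perm Dart := (Equiv.refl _).prodCongr (Equiv.addRight 1)

/-- The map underlying `reverse`. -/
def reverseFun : Dart → Dart
  | (none, i) => (some i, 0)
  | (some j, i) => if i = 0 then (none, j) else (some (j - i), -i)

theorem reverseFun_involutive : Function.Involutive reverseFun := by
  unfold Function.Involutive
  decide

/-- The reversal of darts, by which `t` acts. -/
def reverse : Equiv.Perm Dart := reverseFun_involutive.toPerm

theorem induction {P : Dart → Prop} (base : P (none, 0)) (rot : ∀ d, P d → P (rot d))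
    (reverse : ∀ d, P d → P (reverse d)) (d : Dart) : P d := by
  have hrot (c : Option (Fin 3)) (h : P (c, 0)) (i : Fin 3) : P (c, i) := by
    fin_cases i
    exacts [h, rot _ h, rot _ (rot _ h)]
  rcases d with ⟨_ | j, i⟩
  · exact hrot _ base i
  · exact hrot _ (reverse _ (hrot _ base j)) i

/-- The permutation that moves the darts at `c` to `π c`, rotating them by `a c`. These are the
permutations commuting with `rot`. -/
def shear (π : Equiv.Perm (Option (Fin 3))) (a : Option (Fin 3) → Fin 3) : Equiv.Perm Dart :=
  Equiv.prodShear π fun c ↦ Equiv.addLeft (a c)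

theorem exists_eq_shear {σ : Equiv.Perm Dart} (hσ : ∀ d, σ (rot d) = rot (σ d)) :
    ∃ π a, σ = shear π a := by
  have apply_eq (c : Option (Fin 3)) (i : Fin 3) : σ (c, i) = ((σ (c, 0)).1, (σ (c, 0)).2 + i) := by
    have h1 := hσ (c, 0)
    have h2 := (hσ (c, 1)).trans (congrArg rot h1)
    fin_cases i
    · exact Prod.ext rfl (add_zero _).symm
    · exact h1
    · exact h2.trans (Prod.ext rfl (add_assoc _ 1 1))
  have hinj : Function.Injective fun c ↦ (σ (c, 0)).1 := by
    intro c c' hcc'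
    have : σ (c, 0) = σ (c', (σ (c, 0)).2 - (σ (c', 0)).2) := by
      rw [apply_eq c', add_sub_cancel]
      exact Prod.ext hcc' rfl
    exact congrArg Prod.fst (σ.injective this)
  refine ⟨Equiv.ofBijective _ hinj.bijective_of_finite, fun c ↦ (σ (c, 0)).2, ?_⟩
  ext1 ⟨c, i⟩
  exact apply_eq c i

/-- The coefficients of the alternating sum at `d`, for `t` acting as `reverse` and `s` as `S`,
applied to a function of the vertex alone. They sum to zero over the four vertices, so that at
`none` is omitted. -/
def altRow (S : Equiv.Perm Dart) (d : Dart) (j : Fin 3) : ℚ :=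
  ∑ k ∈ Finset.range 3, ((if (((S * reverse) ^ k) d).1 = some j then 1 else 0) -
    if (reverse (((S * reverse) ^ k) d)).1 = some j then 1 else 0)

-- If `σ` relates the labellings by darts coming from the two copies of `A₄`, then `s` acts as
-- `σ * reverse * σ⁻¹`, and `σ` is a shear because the copies share `x`. The last hypothesis is
-- `(st)³ = 1`.
set_option maxRecDepth 100000 in
theorem exists_cross_altRow_ne_zero : ∀ π : Equiv.Perm (Option (Fin 3)), π none = none →
    ∀ a : Option (Fin 3) → Fin 3, a none = 0 →
      (∀ d, ((shear π a * reverse * (shear π a)⁻¹ * reverse) ^ 3) d = d) →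
        ∃ d d', altRow (shear π a * reverse * (shear π a)⁻¹) d ⨯₃
          altRow (shear π a * reverse * (shear π a)⁻¹) d' ≠ 0 := by
  decide +kernel

variable {G : Type*} [Group G]

/-- The element of `⟨x, t⟩` labelled by a dart, with `(none, 0)` labelling `1`: left multiplication
by `x` and `t` becomes `rot` and `reverse`. -/
def word (x t : G) : Dart → G
  | (none, i) => x ^ i.val
  | (some j, i) => x ^ i.val * t * x ^ j.val

theorem word_mem_closure (x t : G) (d : Dart) : word x t d ∈ closure {x, t} := by
  have hx : x ∈ closure {x, t} := subset_closure (by simp)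
  have ht : t ∈ closure {x, t} := subset_closure (by simp)
  rcases d with ⟨_ | j, i⟩
  · exact pow_mem hx _
  · exact mul_mem (mul_mem (pow_mem hx _) ht) (pow_mem hx _)

end Dart

open Dart

namespace IsTetrahedralPair

variable {G : Type*} [Group G] {x t : G}

theorem pow_fin_add (h : IsTetrahedralPair x t) (i j : Fin 3) :
    x ^ (i + j).val = x ^ i.val * x ^ j.val := by
  rw [Fin.val_add, ← pow_eq_pow_mod _ h.pow_three, pow_add]

theorem mul_word_eq_word_rot (h : IsTetrahedralPair x t) (d : Dart) :
    x * word x t d = word x t (rot d) := by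
  have (i : Fin 3) : x * x ^ i.val = x ^ (i + 1).val := by
    simp [add_comm i, h.pow_fin_add]
  rcases d with ⟨_ | j, i⟩ <;> simp [word, rot, ← this, mul_assoc]

theorem mul_pow_mul (h : IsTetrahedralPair x t) {i : Fin 3} (hi : i ≠ 0) :
    t * x ^ i.val * t = x ^ (-i).val * t * x ^ (-i).val := by
  have ht : t⁻¹ = t := inv_eq_of_mul_eq_one_left h.mul_self
  have hx : x ^ 2 = x⁻¹ := eq_inv_of_mul_eq_one_left (pow_succ x 2 ▸ h.pow_three)
  have txt : t * x * t = x⁻¹ * t * x⁻¹ := by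
    have : (t * x) ^ 2 = (t * x)⁻¹ :=
      eq_inv_of_mul_eq_one_left (pow_succ (t * x) 2 ▸ h.mul_pow_three)
    rw [mul_inv_rev, ht, sq] at this
    rw [eq_mul_inv_iff_mul_eq, ← this, mul_assoc]
  have txt' : t * x⁻¹ * t = x * t * x := by
    simpa only [mul_inv_rev, ht, inv_inv, mul_assoc] using congrArg (·⁻¹) txt
  fin_cases i
  · exact absurd rfl hi
  · simpa [Fin.neg_def, hx] using txt
  · simpa [Fin.neg_def, hx] using txt'

theorem mul_word_eq_word_reverse (h : IsTetrahedralPair x t) (d : Dart) :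
    t * word x t d = word x t (reverse d) := by
  rcases d with ⟨_ | j, i⟩
  · simp [word, reverse, reverseFun]
  · by_cases hi : i = 0
    · simp [word, reverse, reverseFun, hi, ← mul_assoc, h.mul_self]
    · simp [word, reverse, reverseFun, hi,
        ← mul_assoc, h.mul_pow_mul hi, sub_eq_neg_add j, h.pow_fin_add]

theorem closure_subset_range_word (h : IsTetrahedralPair x t) :
    (closure {x, t} : Set G) ⊆ Set.range (word x t) := by
  intro g hg
  induction hg using closure_induction_left with
  | one => exact ⟨(none, 0), by simp [word]⟩
  | mul_left y hy g _ ih =>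
    obtain ⟨d, rfl⟩ := ih
    rcases hy with rfl | rfl
    · exact ⟨_, (h.mul_word_eq_word_rot d).symm⟩
    · exact ⟨_, (h.mul_word_eq_word_reverse d).symm⟩
  | inv_mul_cancel y hy g _ ih =>
    obtain ⟨d, rfl⟩ := ih
    rcases hy with rfl | rfl
    · refine ⟨rot.symm d, ?_⟩
      rw [eq_inv_mul_iff_mul_eq, h.mul_word_eq_word_rot, Equiv.apply_symm_apply]
    · refine ⟨reverse.symm d, ?_⟩
      rw [eq_inv_mul_iff_mul_eq, h.mul_word_eq_word_reverse, Equiv.apply_symm_apply]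

theorem finite_closure (h : IsTetrahedralPair x t) : Finite (closure {x, t}) :=
  ((Set.finite_range (word x t)).subset h.closure_subset_range_word).to_subtype

variable {X : Type*} [MulAction G X] {p : X}

theorem smul_eq_of_pow_smul_eq (h : IsTetrahedralPair x t) {i : Fin 3} (hi : i ≠ 0)
    (hp : x ^ i.val • p = p) : x • p = p := by
  fin_cases i
  · exact absurd rfl hi
  · simpa using hp
  · change x ^ 2 • p = p at hp
    rw [← hp, smul_smul, ← pow_succ', h.pow_three, one_smul, hp]

theorem smul_smul_pow_smul_eq (h : IsTetrahedralPair x t) {i : Fin 3} (hi : i ≠ 0)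
    (hp : x ^ i.val • t • p = p) : x • t • x ^ i.val • p = t • x ^ i.val • p := by
  have htp : t • p = x ^ (-i).val • p := by
    conv_rhs => rw [← hp, smul_smul, ← h.pow_fin_add]
    simp
  have neg_add_neg : ∀ k : Fin 3, -k + -k = k := by decide
  refine h.smul_eq_of_pow_smul_eq hi ?_
  calc x ^ i.val • t • x ^ i.val • p
      = (t * x ^ (-i).val * t) • p := by
        rw [h.mul_pow_mul (neg_ne_zero.mpr hi), neg_neg, mul_smul, mul_smul]
    _ = t • (x ^ (-i).val * x ^ (-i).val) • p := by simp only [mul_smul, htp]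
    _ = t • x ^ i.val • p := by rw [← h.pow_fin_add, neg_add_neg]

theorem exists_fixed_of_word_smul_eq (h : IsTetrahedralPair x t) {d : Dart} (hd : d ≠ (none, 0))
    (hp : word x t d • p = p) : ∃ q ∈ orbit (closure {x, t}) p, x • q = q ∨ t • q = q := by
  have word_mem (d : Dart) {q : X} (hq : q ∈ orbit (closure {x, t}) p) :
      word x t d • q ∈ orbit (closure {x, t}) p :=
    mem_orbit_of_mem_orbit (⟨_, word_mem_closure x t d⟩ : closure {x, t}) hq
  rcases d with ⟨_ | j, i⟩
  · exact ⟨p, mem_orbit_self p, .inl (h.smul_eq_of_pow_smul_eq (by simpa using hd) hp)⟩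
  obtain ⟨q, hq⟩ : ∃ q, q = x ^ j.val • p := ⟨_, rfl⟩
  have hqA : q ∈ orbit (closure {x, t}) p := hq ▸ word_mem (none, j) (mem_orbit_self p)
  have htq : x ^ (j + i).val • t • q = q := by
    rw [h.pow_fin_add, mul_smul, hq]
    simpa only [word, mul_smul] using congrArg (x ^ j.val • ·) hp
  by_cases hk : j + i = 0
  · exact ⟨q, hqA, .inr (by simpa [hk] using htq)⟩
  · refine ⟨_, ?_, .inl (h.smul_smul_pow_smul_eq hk htq)⟩
    simpa [word, mul_smul] using word_mem (some (j + i), 0) hqA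

theorem word_smul_injective (h : IsTetrahedralPair x t)
    (hfree : ∀ q ∈ orbit (closure {x, t}) p, x • q ≠ q ∧ t • q ≠ q) :
    Function.Injective fun d ↦ word x t d • p := by
  suffices ∀ d d', word x t d • p = word x t d' • p → d = d' from fun d d' ↦ this d d'
  intro d
  induction d using Dart.induction with
  | base =>
    intro d' hd'
    by_contra hne
    obtain ⟨q, hq, hfix⟩ := h.exists_fixed_of_word_smul_eq (Ne.symm hne)
      (by simpa [word] using hd'.symm)
    have := hfree q hq
    tauto
  | rot d ih =>
    intro d' hd'
    rw [← Equiv.apply_symm_apply rot d', ← h.mul_word_eq_word_rot, ← h.mul_word_eq_word_rot,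
      mul_smul, mul_smul, smul_left_cancel_iff] at hd'
    rw [ih _ hd', Equiv.apply_symm_apply]
  | reverse d ih =>
    intro d' hd'
    rw [← Equiv.apply_symm_apply reverse d', ← h.mul_word_eq_word_reverse,
      ← h.mul_word_eq_word_reverse, mul_smul, mul_smul, smul_left_cancel_iff] at hd'
    rw [ih _ hd', Equiv.apply_symm_apply]

theorem exists_equiv_dart [Finite X] (h : IsTetrahedralPair x t) (hX : Nat.card X ≤ 12)
    (hfree : ∀ q : X, x • q ≠ q ∧ t • q ≠ q) (p : X) :
    ∃ E : Dart ≃ X, E (none, 0) = p ∧ (∀ d, x • E d = E (rot d)) ∧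
      ∀ d, t • E d = E (reverse d) := by
  have hinj := h.word_smul_injective (p := p) fun q _ ↦ hfree q
  refine ⟨.ofBijective _ (hinj.bijective_of_nat_card_le (by simpa using hX)), ?_, ?_, ?_⟩
  · simp [word]
  · exact fun d ↦ (smul_smul ..).trans (congrArg (· • p) (h.mul_word_eq_word_rot d))
  · exact fun d ↦ (smul_smul ..).trans (congrArg (· • p) (h.mul_word_eq_word_reverse d))

theorem exists_fixed_mem_orbit [Finite X] (h : IsTetrahedralPair x t) (hX : Nat.card X ≤ 12)
    {q : X} (hq : x • q = q ∨ t • q = q) (p : X) :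
    ∃ q ∈ orbit (closure {x, t}) p, x • q = q ∨ t • q = q := by
  by_contra! hfree
  have hinj := h.word_smul_injective hfree
  obtain ⟨d, hd⟩ := (hinj.bijective_of_nat_card_le (by simpa using hX)).surjective q
  have := hfree q ⟨⟨_, word_mem_closure x t d⟩, hd⟩
  tauto

theorem exists_word_smul_eq (h : IsTetrahedralPair x t) {q : X}
    (hq : q ∈ orbit (closure {x, t}) p) : ∃ d, word x t d • p = q := by
  obtain ⟨⟨g, hg⟩, rfl⟩ := hq
  obtain ⟨d, rfl⟩ := h.closure_subset_range_word hg
  exact ⟨d, rfl⟩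

theorem exists_orbit_subset_union_of_fixed (h : IsTetrahedralPair x t)
    (hp : x • p = p ∨ t • p = p) :
    ∃ r, orbit (closure {x, t}) p ⊆ orbit (zpowers x) p ∪ orbit (zpowers x) r := by
  rcases hp with hp | hp
  · refine ⟨t • p, fun q hq ↦ ?_⟩
    obtain ⟨⟨_ | j, i⟩, rfl⟩ := h.exists_word_smul_eq hq
    · exact .inl (pow_smul_mem_orbit_zpowers x _ p)
    · have hpj : x ^ j.val • p = p := pow_mem (show x ∈ stabilizer G p from hp) _
      simpa only [word, mul_smul, hpj] using .inr (pow_smul_mem_orbit_zpowers x _ (t • p))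
  · refine ⟨t • x • p, fun q hq ↦ ?_⟩
    obtain ⟨⟨_ | j, i⟩, rfl⟩ := h.exists_word_smul_eq hq
    · exact .inl (pow_smul_mem_orbit_zpowers x _ p)
    fin_cases j
    · simpa [word, mul_smul, hp] using .inl (pow_smul_mem_orbit_zpowers x _ p)
    · simpa [word, mul_smul] using .inr (pow_smul_mem_orbit_zpowers x _ (t • x • p))
    · have htx : t • x ^ 2 • p = x • t • x • p := by
        simpa [mul_smul, hp, show (-2 : Fin 3) = 1 from rfl] using
          congrArg (· • p) (h.mul_pow_mul (i := 2) (by decide))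
      have hmem := pow_smul_mem_orbit_zpowers x (i.val + 1) (t • x • p)
      rw [pow_succ, mul_smul, ← htx] at hmem
      simpa [word, mul_smul] using .inr hmem

theorem card_orbits_zpowers_le [Finite X] (h : IsTetrahedralPair x t) (hX : Nat.card X ≤ 12)
    {q : X} (hq : x • q = q ∨ t • q = q) :
    Nat.card (orbitRel.Quotient (zpowers x) X) ≤
      2 * Nat.card (orbitRel.Quotient (closure {x, t}) X) := by
  refine card_orbits_le_two_mul fun p ↦ ?_
  obtain ⟨p', hp', hfix⟩ := h.exists_fixed_mem_orbit hX hq p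
  obtain ⟨r, hr⟩ := h.exists_orbit_subset_union_of_fixed hfix
  exact ⟨p', r, orbit_eq_iff.mpr hp' ▸ hr⟩

end IsTetrahedralPair

section Invariants

variable {G : Type*} [Group G] (H K : Subgroup G) (X : Type*) [MulAction G X]

/-- The rational functions on `X` that are constant on the orbits of `H`. -/
def invariants : Submodule ℚ (X → ℚ) where
  carrier := {v | ∀ g ∈ H, ∀ p, v (g • p) = v p}
  add_mem' hv hw g hg p := by simp only [Pi.add_apply, hv g hg p, hw g hg p]
  zero_mem' _ _ _ := rfl
  smul_mem' c v hv g hg p := by simp only [Pi.smul_apply, hv g hg p]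

variable {H K X}

theorem mem_invariants_closure {S : Set G} {v : X → ℚ} :
    v ∈ invariants (closure S) X ↔ ∀ g ∈ S, ∀ p, v (g • p) = v p := by
  refine ⟨fun hv g hg ↦ hv g (subset_closure hg), fun hv g hg ↦ ?_⟩
  induction hg using closure_induction with
  | mem g hg => exact hv g hg
  | one => simp
  | mul g g' _ _ ih ih' => simp [mul_smul, ih, ih']
  | inv g _ ih => exact fun p ↦ by rw [← ih, smul_inv_smul]

theorem invariants_anti (hHK : H ≤ K) : invariants K X ≤ invariants H X :=
  fun _ hv g hg ↦ hv g (hHK hg)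

theorem invariants_sup : invariants (H ⊔ K) X = invariants H X ⊓ invariants K X := by
  refine le_antisymm (le_inf (invariants_anti le_sup_left) (invariants_anti le_sup_right)) ?_
  rintro v ⟨hH, hK⟩
  rw [sup_eq_closure, mem_invariants_closure]
  rintro g (hg | hg)
  exacts [hH g hg, hK g hg]

theorem invariants_eq_range : invariants H X =
    (LinearMap.funLeft ℚ ℚ (Quotient.mk'' : X → orbitRel.Quotient H X)).range := by
  ext v
  refine ⟨fun hv ↦ ⟨fun o ↦ Quotient.liftOn' o v ?_, rfl⟩, ?_⟩
  · rintro _ q ⟨⟨g, hg⟩, rfl⟩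
    exact hv g hg q
  · rintro ⟨w, rfl⟩ g hg p
    exact congrArg w (Quotient.sound' ⟨⟨g, hg⟩, rfl⟩)

theorem finrank_invariants [Finite X] :
    Module.finrank ℚ (invariants H X) = Nat.card (orbitRel.Quotient H X) := by
  have := Fintype.ofFinite (orbitRel.Quotient H X)
  rw [invariants_eq_range, LinearMap.finrank_range_of_inj
    (LinearMap.funLeft_injective_of_surjective _ _ _ Quotient.mk''_surjective),
    Module.finrank_fintype_fun_eq_card, Nat.card_eq_fintype_card]

theorem finrank_invariants_top_le_one [Finite X] [IsPretransitive G X] :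
    Module.finrank ℚ (invariants (⊤ : Subgroup G) X) ≤ 1 := by
  have : IsPretransitive (⊤ : Subgroup G) X :=
    ⟨fun p q ↦ (exists_smul_eq G p q).imp' (⟨·, mem_top _⟩) fun _ ↦ id⟩
  rw [finrank_invariants, Finite.card_le_one_iff_subsingleton]
  exact (pretransitive_iff_subsingleton_quotient _ _).mp this

end Invariants

theorem exists_le_sup_span_of_finrank_le_add_one {k V : Type*} [DivisionRing k] [AddCommGroup V]
    [Module k V] {U W : Submodule k V} [FiniteDimensional k W] (hUW : U ≤ W)
    (hfin : Module.finrank k W ≤ Module.finrank k U + 1) : ∃ n, W ≤ U ⊔ Submodule.span k {n} := by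
  by_cases hWU : W ≤ U
  · exact ⟨0, hWU.trans le_sup_left⟩
  obtain ⟨n, hnW, hnU⟩ := Set.not_subset.mp hWU
  have hle : U ⊔ Submodule.span k {n} ≤ W :=
    sup_le hUW ((Submodule.span_singleton_le_iff_mem _ _).mpr hnW)
  have hlt : U < U ⊔ Submodule.span k {n} :=
    Submodule.lt_sup_iff_notMem.mpr hnU
  have : FiniteDimensional k ↥(U ⊔ Submodule.span k {n}) := Submodule.finiteDimensional_of_le hle
  have := Submodule.finrank_lt_finrank_of_lt hlt
  exact ⟨n, (Submodule.eq_of_le_of_finrank_le hle (by omega)).ge⟩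

/-- Elements satisfying the relations of three standard generators of `PSL(2, ℤ[ω])`: two
tetrahedral pairs sharing `x`, linked by `(st)³ = 1`. -/
structure IsTetrahedralTriple {G : Type*} [Group G] (x t s : G) : Prop where
  left : IsTetrahedralPair x t
  right : IsTetrahedralPair x s
  mul_pow_three : (s * t) ^ 3 = 1

section Cocycles

variable {G : Type*} [Group G] {X : Type*} [MulAction G X]

/-- The alternating sum of a function over the hexagon `p, t • p, st • p, …` closed up by
`(st)³ = 1`. -/
def altSum (t s : G) (X : Type*) [MulAction G X] : (X → ℚ) →ₗ[ℚ] X → ℚ where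
  toFun v p := ∑ k ∈ Finset.range 3, (v ((s * t) ^ k • p) - v (t • (s * t) ^ k • p))
  map_add' v w := by
    ext p
    simp only [Pi.add_apply, ← Finset.sum_add_distrib]
    exact Finset.sum_congr rfl fun _ _ ↦ by ring
  map_smul' c v := by
    ext p
    simp [Finset.mul_sum, mul_sub]

theorem altSum_apply (t s : G) (v : X → ℚ) (p : X) : altSum t s X v p =
    ∑ k ∈ Finset.range 3, (v ((s * t) ^ k • p) - v (t • (s * t) ^ k • p)) :=
  rfl

/-- The functions that can occur as the transition function, in the sense of `IsTransition`, of a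
homomorphism to `ℚ`. -/
def cocycles (x t s : G) (X : Type*) [MulAction G X] : Submodule ℚ (X → ℚ) :=
  invariants (zpowers x) X ⊓ LinearMap.ker (altSum t s X)

end Cocycles

namespace IsTetrahedralTriple

variable {G : Type*} [Group G] {x t s : G} {X : Type*} [MulAction G X]

theorem mul_mul_comm (h : IsTetrahedralTriple x t s) : s * t * s = t * s * t := by
  have ht : t⁻¹ = t := inv_eq_of_mul_eq_one_left h.left.mul_self
  have hs : s⁻¹ = s := inv_eq_of_mul_eq_one_left h.right.mul_self
  have hsq : (s * t) ^ 2 = (s * t)⁻¹ :=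
    eq_inv_of_mul_eq_one_left (pow_succ (s * t) 2 ▸ h.mul_pow_three)
  rw [mul_inv_rev, ht, hs, sq, ← mul_assoc] at hsq
  rw [← hsq, mul_assoc (s * t * s), h.left.mul_self, mul_one]

theorem exists_smul_eq_right_iff (h : IsTetrahedralTriple x t s) :
    (∃ p : X, s • p = p) ↔ ∃ p : X, t • p = p := by
  have braid (p : X) : s • t • s • p = t • s • t • p := by
    simpa only [mul_smul] using congrArg (· • p) h.mul_mul_comm
  exact ⟨fun ⟨p, hp⟩ ↦ ⟨s • t • p, by rw [← braid, hp]⟩,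
    fun ⟨p, hp⟩ ↦ ⟨t • s • p, by rw [braid, hp]⟩⟩

theorem finrank_invariants_zpowers_le (h : IsTetrahedralTriple x t s) [Finite X]
    [IsPretransitive G X] (hX : Nat.card X ≤ 12) (hgen : closure {x, t} ⊔ closure {x, s} = ⊤)
    {p : X} (hp : x • p = p ∨ t • p = p) :
    Module.finrank ℚ (invariants (zpowers x) X) ≤
      Module.finrank ℚ ↥(invariants (closure {x, t}) X ⊔ invariants (closure {x, s}) X) + 1 := by
  obtain ⟨q, hq⟩ : ∃ q : X, x • q = q ∨ s • q = q := by
    rcases hp with hp | hp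
    · exact ⟨p, .inl hp⟩
    · exact (h.exists_smul_eq_right_iff.mpr ⟨p, hp⟩).imp fun _ ↦ .inr
  have hA := h.left.card_orbits_zpowers_le hX hp
  have hB := h.right.card_orbits_zpowers_le hX hq
  rw [← finrank_invariants, ← finrank_invariants] at hA hB
  have hsum := Submodule.finrank_sup_add_finrank_inf_eq
    (invariants (closure {x, t}) X) (invariants (closure {x, s}) X)
  have htop := finrank_invariants_top_le_one (G := G) (X := X)
  rw [← hgen, invariants_sup] at htop
  omega

end IsTetrahedralTriple

theorem exists_eq_smul_cross {k : Type*} [Field k] {r q δ : Fin 3 → k} (hrq : r ⨯₃ q ≠ 0)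
    (hr : r ⬝ᵥ δ = 0) (hq : q ⬝ᵥ δ = 0) : ∃ c : k, δ = c • (r ⨯₃ q) := by
  have hcross : (r ⨯₃ q) ⨯₃ δ = 0 := by
    rw [cross_cross_eq_smul_sub_smul, hr, hq, zero_smul, zero_smul, sub_zero]
  by_contra! hne
  exact crossProduct_ne_zero_iff_linearIndependent.mpr
    ((LinearIndependent.pair_iff' hrq).mpr fun c ↦ (hne c).symm) hcross

section Marking

variable {G : Type*} [Group G] {x t s : G} {X : Type*} [MulAction G X]

theorem mul_pow_smul_marking {D : Type*} {E : D → X} {T S : Equiv.Perm D}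
    (ht : ∀ d, t • E d = E (T d)) (hs : ∀ d, s • E d = E (S d)) (k : ℕ) (d : D) :
    (s * t) ^ k • E d = E (((S * T) ^ k) d) := by
  induction k with
  | zero => simp
  | succ k ih => simp only [pow_succ', mul_smul, ih, ht, hs, Equiv.Perm.mul_apply]

theorem altSum_eq_sum_altRow (E : Dart → X) {S : Equiv.Perm Dart}
    (ht : ∀ d, t • E d = E (Dart.reverse d)) (hs : ∀ d, s • E d = E (S d))
    {v : X → ℚ} {w : Option (Fin 3) → ℚ} (hv : ∀ d, v (E d) = w d.1) (d : Dart) :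
    altSum t s X v (E d) = Dart.altRow S d ⬝ᵥ fun j ↦ w (some j) - w none := by
  have hw (c : Option (Fin 3)) :
      w c = w none + ∑ j, (if c = some j then 1 else 0) * (w (some j) - w none) := by
    cases c <;> simp
  calc altSum t s X v (E d)
      = ∑ k ∈ Finset.range 3, (w (((S * Dart.reverse) ^ k) d).1 -
          w (Dart.reverse (((S * Dart.reverse) ^ k) d)).1) := by
        simp only [altSum_apply, mul_pow_smul_marking ht hs, ht, hv]
    _ = ∑ k ∈ Finset.range 3, ∑ j, ((if (((S * Dart.reverse) ^ k) d).1 = some j then 1 else 0) -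
          if (Dart.reverse (((S * Dart.reverse) ^ k) d)).1 = some j then 1 else 0) *
            (w (some j) - w none) :=
        Finset.sum_congr rfl fun k _ ↦ by
          rw [hw (((S * Dart.reverse) ^ k) d).1, hw (Dart.reverse _).1]
          simp only [sub_mul, Finset.sum_sub_distrib, add_sub_add_left_eq_sub]
    _ = Dart.altRow S d ⬝ᵥ fun j ↦ w (some j) - w none := by
        rw [Finset.sum_comm]
        simp only [dotProduct, Dart.altRow, Finset.sum_mul]

theorem exists_cocycles_le_of_marking (E : Dart ≃ X) {S : Equiv.Perm Dart}
    (hx : ∀ d, x • E d = E (Dart.rot d)) (ht : ∀ d, t • E d = E (Dart.reverse d))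
    (hs : ∀ d, s • E d = E (S d)) {d₁ d₂ : Dart}
    (hne : Dart.altRow S d₁ ⨯₃ Dart.altRow S d₂ ≠ 0) :
    ∃ n, cocycles x t s X ≤ Submodule.span ℚ {1} ⊔ Submodule.span ℚ {n} := by
  refine ⟨fun p ↦ (E.symm p).1.elim 0 (Dart.altRow S d₁ ⨯₃ Dart.altRow S d₂), ?_⟩
  rintro v ⟨hvx, hvalt⟩
  have hv (d : Dart) : v (E d) = v (E (d.1, 0)) := by
    have hrot (d : Dart) : v (E (Dart.rot d)) = v (E d) := by
      rw [← hx]; exact hvx x (mem_zpowers x) _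
    obtain ⟨c, i⟩ := d
    have h1 := hrot (c, 0)
    have h2 := (hrot (c, 1)).trans h1
    fin_cases i
    exacts [rfl, h1, h2]
  have hrow (d : Dart) := (altSum_eq_sum_altRow E ht hs (w := fun c ↦ v (E (c, 0))) hv d).symm.trans
    (congrFun hvalt (E d))
  obtain ⟨c, hc⟩ := exists_eq_smul_cross hne (hrow d₁) (hrow d₂)
  rw [Submodule.mem_sup]
  refine ⟨v (E (none, 0)) • 1, Submodule.smul_mem _ _ (Submodule.mem_span_singleton_self _),
    c • _, Submodule.smul_mem _ _ (Submodule.mem_span_singleton_self _), ?_⟩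
  ext p
  obtain ⟨⟨_ | j, i⟩, rfl⟩ := E.surjective p
  · simp [hv (none, i)]
  · have hj : v (E (some j, 0)) - v (E (none, 0)) =
        c * (Dart.altRow S d₁ ⨯₃ Dart.altRow S d₂) j := congrFun hc j
    simp only [Pi.add_apply, Pi.smul_apply, Pi.one_apply, smul_eq_mul, mul_one,
      Equiv.symm_apply_apply, Option.elim_some, hv (some j, i)]
    linarith

end Marking

namespace IsTetrahedralTriple

variable {G : Type*} [Group G] {x t s : G} {X : Type*} [MulAction G X]

theorem exists_cocycles_le_of_free (h : IsTetrahedralTriple x t s) [Finite X] [Nonempty X]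
    (hX : Nat.card X ≤ 12) (hfree : ∀ p : X, x • p ≠ p ∧ t • p ≠ p) :
    ∃ n, cocycles x t s X ≤ Submodule.span ℚ {1} ⊔ Submodule.span ℚ {n} := by
  obtain ⟨p⟩ := ‹Nonempty X›
  have hfree' (q : X) : x • q ≠ q ∧ s • q ≠ q := by
    have := h.exists_smul_eq_right_iff (X := X)
    grind
  obtain ⟨E, hE, hEx, hEt⟩ := h.left.exists_equiv_dart hX hfree p
  obtain ⟨E', hE', hEx', hEs'⟩ := h.right.exists_equiv_dart hX hfree' p
  let σ : Equiv.Perm Dart := E'.trans E.symm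
  have hEσ (d : Dart) : E (σ d) = E' d := E.apply_symm_apply _
  have hσ (d : Dart) : σ (Dart.rot d) = Dart.rot (σ d) := E.injective <| by
    rw [hEσ, ← hEx', ← hEσ, hEx]
  have hσ0 : σ (none, 0) = (none, 0) := E.injective (by rw [hEσ, hE', hE])
  have hEs (d : Dart) : s • E d = E ((σ * Dart.reverse * σ⁻¹) d) := by
    obtain ⟨d, rfl⟩ := σ.surjective d
    simp only [hEσ, hEs', Equiv.Perm.coe_mul, Equiv.Perm.coe_inv, Function.comp_apply,
      Equiv.symm_apply_apply]
  have hcube (d : Dart) : ((σ * Dart.reverse * σ⁻¹ * Dart.reverse) ^ 3) d = d := E.injective <| by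
    rw [← mul_pow_smul_marking hEt hEs, h.mul_pow_three, one_smul]
  obtain ⟨π, a, hπ⟩ := Dart.exists_eq_shear hσ
  rw [hπ] at hσ0 hEs hcube
  obtain ⟨d₁, d₂, hne⟩ := Dart.exists_cross_altRow_ne_zero π (congrArg Prod.fst hσ0) a
    (by simpa [Dart.shear] using congrArg Prod.snd hσ0) hcube
  exact exists_cocycles_le_of_marking E hEx hEt hEs hne

theorem exists_cocycles_le (h : IsTetrahedralTriple x t s) [Finite X] [Nonempty X]
    [IsPretransitive G X] (hX : Nat.card X ≤ 12) (hgen : closure {x, t} ⊔ closure {x, s} = ⊤) :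
    ∃ n, cocycles x t s X ≤
      invariants (closure {x, t}) X ⊔ invariants (closure {x, s}) X ⊔ Submodule.span ℚ {n} := by
  by_cases hfree : ∀ p : X, x • p ≠ p ∧ t • p ≠ p
  · obtain ⟨n, hn⟩ := h.exists_cocycles_le_of_free hX hfree
    have hone : (1 : X → ℚ) ∈ invariants (closure {x, t}) X := fun _ _ _ ↦ rfl
    refine ⟨n, hn.trans (sup_le_sup_right ?_ _)⟩
    exact ((Submodule.span_singleton_le_iff_mem _ _).mpr hone).trans le_sup_left
  · obtain ⟨p, hp⟩ : ∃ p : X, x • p = p ∨ t • p = p := by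
      by_contra! hne
      exact hfree hne
    have hle (y : G) : invariants (closure {x, y}) X ≤ invariants (zpowers x) X := by
      refine invariants_anti ?_
      rw [zpowers_le]
      exact subset_closure (by simp)
    obtain ⟨n, hn⟩ := exists_le_sup_span_of_finrank_le_add_one (sup_le (hle t) (hle s))
      (h.finrank_invariants_zpowers_le hX hgen hp)
    exact ⟨n, inf_le_left.trans hn⟩

end IsTetrahedralTriple

section Potential

variable {G : Type*} [Group G] {Δ : Subgroup G} {F F' : Δ → ℚ}

/-- `φ` is equivariant for right translation by `Δ`, acting on `ℚ` through `F`; differences of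
potentials descend to `G ⧸ Δ`. -/
def IsPotential (F : Δ → ℚ) (φ : G → ℚ) : Prop :=
  ∀ g (d : Δ), φ (g * d) = φ g + F d

theorem exists_isPotential (hF : ∀ a b, F (a * b) = F a + F b) : ∃ φ, IsPotential F φ := by
  refine ⟨fun g ↦ F ⟨(g : G ⧸ Δ).out⁻¹ * g, QuotientGroup.eq.mp (Quotient.out_eq' _)⟩,
    fun g d ↦ ?_⟩
  rw [← hF]
  exact congrArg F (Subtype.ext (by simp [mul_assoc]))

theorem IsPotential.exists_mem_invariants {φ : G → ℚ} (hφ : IsPotential F φ) (A : Subgroup G)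
    [Finite A] : ∃ φ' ∈ invariants A G, IsPotential F φ' := by
  have := Fintype.ofFinite A
  refine ⟨fun g ↦ (∑ a : A, φ (a * g)) / Fintype.card A, fun b hb g ↦ ?_, fun g d ↦ ?_⟩
  · have hsum : ∑ a : A, φ (a * (b * g)) = ∑ a : A, φ (a * g) :=
      Fintype.sum_equiv (Equiv.mulRight (⟨b, hb⟩ : A)) _ _ fun a ↦ by simp [mul_assoc]
    simp only [smul_eq_mul, hsum]
  · simp only [← mul_assoc, hφ _ d, Finset.sum_add_distrib, Finset.sum_const, Finset.card_univ,
      nsmul_eq_mul]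
    field_simp

/-- `v` is the function on `G ⧸ Δ` induced by the difference of a `B`-invariant and an `A`-invariant
potential of `F`. -/
def IsTransition (A B : Subgroup G) (F : Δ → ℚ) (v : G ⧸ Δ → ℚ) : Prop :=
  ∃ φ ∈ invariants A G, ∃ ψ ∈ invariants B G,
    IsPotential F φ ∧ IsPotential F ψ ∧ ∀ g : G, v g = ψ g - φ g

variable {A B : Subgroup G} {v v' : G ⧸ Δ → ℚ}

theorem exists_isTransition [Finite A] [Finite B] (hF : ∀ a b, F (a * b) = F a + F b) :
    ∃ v, IsTransition A B F v := by
  obtain ⟨_, h⟩ := exists_isPotential hF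
  obtain ⟨φ, hφA, hφ⟩ := h.exists_mem_invariants A
  obtain ⟨ψ, hψB, hψ⟩ := h.exists_mem_invariants B
  refine ⟨fun p ↦ p.liftOn' (fun g ↦ ψ g - φ g) fun g g' hgg' ↦ ?_,
    φ, hφA, ψ, hψB, hφ, hψ, fun _ ↦ rfl⟩
  have hd := QuotientGroup.leftRel_apply.mp hgg'
  rw [← mul_inv_cancel_left g g', hφ g ⟨_, hd⟩, hψ g ⟨_, hd⟩]
  ring

namespace IsTransition

theorem linearCombination (h : IsTransition A B F v) (h' : IsTransition A B F' v') (a b : ℚ) :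
    IsTransition A B (a • F + b • F') (a • v + b • v') := by
  obtain ⟨φ, hφA, ψ, hψB, hφ, hψ, hv⟩ := h
  obtain ⟨φ', hφA', ψ', hψB', hφ', hψ', hv'⟩ := h'
  refine ⟨a • φ + b • φ', add_mem (Submodule.smul_mem _ a hφA) (Submodule.smul_mem _ b hφA'),
    a • ψ + b • ψ', add_mem (Submodule.smul_mem _ a hψB) (Submodule.smul_mem _ b hψB'),
    fun g d ↦ ?_, fun g d ↦ ?_, fun g ↦ ?_⟩ <;>
  simp only [Pi.add_apply, Pi.smul_apply, smul_eq_mul, hφ g, hφ' g, hψ g, hψ' g, hv, hv'] <;>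
  ring

theorem mem_cocycles {x t s : G} (hst : (s * t) ^ 3 = 1)
    (h : IsTransition (closure {x, t}) (closure {x, s}) F v) : v ∈ cocycles x t s (G ⧸ Δ) := by
  obtain ⟨φ, hφA, ψ, hψB, -, -, hv⟩ := h
  rw [mem_invariants_closure] at hφA hψB
  have hφx (g : G) : φ (x * g) = φ g := hφA x (by simp) g
  have hφt (g : G) : φ (t * g) = φ g := hφA t (by simp) g
  have hψx (g : G) : ψ (x * g) = ψ g := hψB x (by simp) g
  have hψs (g : G) : ψ (s * g) = ψ g := hψB s (by simp) g
  constructor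
  · rw [zpowers_eq_closure, SetLike.mem_coe, mem_invariants_closure]
    simp only [Set.mem_singleton_iff, forall_eq]
    rintro ⟨g⟩
    exact (hv (x * g)).trans (by rw [hφx, hψx]; exact (hv g).symm)
  · ext ⟨g⟩
    have hterm (k : ℕ) : v ((s * t) ^ k • (g : G ⧸ Δ)) - v (t • (s * t) ^ k • (g : G ⧸ Δ)) =
        ψ ((s * t) ^ k * g) - ψ ((s * t) ^ (k + 1) * g) := by
      have hk : ψ ((s * t) ^ (k + 1) * g) = ψ (t * ((s * t) ^ k * g)) := by
        rw [← hψs (t * _), pow_succ']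
        simp only [mul_assoc]
      simp only [MulAction.Quotient.smul_coe, smul_eq_mul, hv, hφt, hk]
      ring
    calc altSum t s (G ⧸ Δ) v g
        = ∑ k ∈ Finset.range 3, (ψ ((s * t) ^ k * g) - ψ ((s * t) ^ (k + 1) * g)) :=
          (altSum_apply ..).trans (Finset.sum_congr rfl fun k _ ↦ hterm k)
      _ = 0 := by rw [Finset.sum_range_sub' fun k ↦ ψ ((s * t) ^ k * g)]; simp [hst]

theorem eq_zero (hAB : A ⊔ B = ⊤) (h : IsTransition A B F v)
    (hv : v ∈ invariants A (G ⧸ Δ) ⊔ invariants B (G ⧸ Δ)) : F = 0 := by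
  obtain ⟨φ, hφA, ψ, hψB, hφ, -, hvφψ⟩ := h
  obtain ⟨α, hα, β, hβ, rfl⟩ := Submodule.mem_sup.mp hv
  let θ : G → ℚ := fun g ↦ φ g + α g
  have hθA : θ ∈ invariants A G := fun a ha g ↦ congrArg₂ (· + ·) (hφA a ha g) (hα a ha g)
  have hθψ : θ = fun g ↦ ψ g - β g := by
    ext g
    have := hvφψ g
    simp only [Pi.add_apply] at this
    simp only [θ]; linarith
  have hθB : θ ∈ invariants B G :=
    hθψ ▸ fun b hb g ↦ congrArg₂ (· - ·) (hψB b hb g) (hβ b hb g)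
  have hθ (g : G) : θ g = θ 1 := by
    have : θ ∈ invariants (A ⊔ B) G := by
      rw [invariants_sup]
      exact ⟨hθA, hθB⟩
    simpa using this g (hAB ▸ mem_top g) 1
  ext d
  have hα1 : α (d : G) = α (1 : G) := congrArg α (QuotientGroup.eq.mpr (by simp))
  have hφ1 : φ d = φ 1 + F d := by simpa using hφ 1 d
  have hθ1 : φ d + α (d : G) = φ 1 + α (1 : G) := hθ d
  rw [Pi.zero_apply]
  linarith

end IsTransition

end Potential

theorem exists_smul_add_smul_mem {k V : Type*} [Field k] [AddCommGroup V] [Module k V]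
    {U : Submodule k V} {n v w : V} (hv : v ∈ U ⊔ Submodule.span k {n})
    (hw : w ∈ U ⊔ Submodule.span k {n}) : ∃ a b : k, (a ≠ 0 ∨ b ≠ 0) ∧ a • v + b • w ∈ U := by
  obtain ⟨u, hu, _, hcn, rfl⟩ := Submodule.mem_sup.mp hv
  obtain ⟨u', hu', _, hcn', rfl⟩ := Submodule.mem_sup.mp hw
  obtain ⟨c, rfl⟩ := Submodule.mem_span_singleton.mp hcn
  obtain ⟨c', rfl⟩ := Submodule.mem_span_singleton.mp hcn'
  by_cases hc : c = 0
  · exact ⟨1, 0, .inl one_ne_zero, by simpa [hc] using hu⟩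
  · refine ⟨c', -c, .inr (neg_ne_zero.mpr hc), ?_⟩
    convert U.sub_mem (U.smul_mem c' hu) (U.smul_mem c hu') using 1
    module

namespace IsTetrahedralTriple

variable {G : Type*} [Group G] {x t s : G} {Δ : Subgroup G}

theorem exists_linear_relation (h : IsTetrahedralTriple x t s)
    (hgen : closure {x, t} ⊔ closure {x, s} = ⊤) [Δ.FiniteIndex] (hΔ : Δ.index ≤ 12)
    {F F' : Δ → ℚ} (hF : ∀ a b, F (a * b) = F a + F b) (hF' : ∀ a b, F' (a * b) = F' a + F' b) :
    ∃ a b : ℚ, (a ≠ 0 ∨ b ≠ 0) ∧ ∀ d, a * F d + b * F' d = 0 := by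
  have := h.left.finite_closure
  have := h.right.finite_closure
  obtain ⟨n, hn⟩ := h.exists_cocycles_le (X := G ⧸ Δ) hΔ hgen
  obtain ⟨v, hv⟩ := exists_isTransition (A := closure {x, t}) (B := closure {x, s}) hF
  obtain ⟨v', hv'⟩ := exists_isTransition (A := closure {x, t}) (B := closure {x, s}) hF'
  obtain ⟨a, b, hab, hmem⟩ := exists_smul_add_smul_mem (hn (hv.mem_cocycles h.mul_pow_three))
    (hn (hv'.mem_cocycles h.mul_pow_three))
  exact ⟨a, b, hab, congrFun ((hv.linearCombination hv' a b).eq_zero hgen hmem)⟩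

theorem not_exists_surjective (h : IsTetrahedralTriple x t s)
    (hgen : closure {x, t} ⊔ closure {x, s} = ⊤) [Δ.FiniteIndex] (hΔ : Δ.index ≤ 12) :
    ¬ ∃ f : Δ →* Multiplicative ℤ × Multiplicative ℤ, Function.Surjective f := by
  rintro ⟨f, hf⟩
  obtain ⟨a, b, hab, hzero⟩ := h.exists_linear_relation hgen hΔ
    (F := fun d ↦ (f d).1.toAdd) (F' := fun d ↦ (f d).2.toAdd) (by simp) (by simp)
  obtain ⟨d₁, hd₁⟩ := hf (.ofAdd 1, 1)
  obtain ⟨d₂, hd₂⟩ := hf (1, .ofAdd 1)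
  have ha : a = 0 := by simpa [hd₁] using hzero d₁
  have hb : b = 0 := by simpa [hd₂] using hzero d₂
  exact hab.elim (· ha) (· hb)

end IsTetrahedralTriple

section Generation

open Matrix (SpecialLinearGroup)

variable {R : Type*} [CommRing R]

/-- The standard Weyl element of `SL(2, R)`. -/
def weyl (R : Type*) [CommRing R] : SpecialLinearGroup (Fin 2) R :=
  ⟨!![0, -1; 1, 0], by simp⟩

/-- The elementary matrix `1 + c E₀₁`. -/
abbrev upperUnipotent (c : R) : SpecialLinearGroup (Fin 2) R :=
  Matrix.SpecialLinearGroup.transvection zero_ne_one c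

theorem coe_weyl : (weyl R : Matrix (Fin 2) (Fin 2) R) = !![0, -1; 1, 0] :=
  rfl

theorem coe_upperUnipotent (c : R) :
    (upperUnipotent c : Matrix (Fin 2) (Fin 2) R) = !![1, c; 0, 1] := by
  ext i j
  fin_cases i <;> fin_cases j <;> simp [Matrix.SpecialLinearGroup.transvection_coe]

theorem weyl_mul_upperUnipotent_mul_apply (c : R) (M : SpecialLinearGroup (Fin 2) R) :
    (weyl R * (upperUnipotent c * M)) 1 0 = M 0 0 + c * M 1 0 := by
  simp [coe_weyl, coe_upperUnipotent, Matrix.mul_apply, Fin.sum_univ_two, -Matrix.cons_mul]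

theorem eq_upperUnipotent_mul_of_apply_eq_zero {M : SpecialLinearGroup (Fin 2) R} (hM : M 1 0 = 0) :
    M = upperUnipotent (M 0 0) * (weyl R)⁻¹ * upperUnipotent (M 1 1) *
      weyl R * upperUnipotent (M 0 0) * weyl R *
      upperUnipotent (M 1 1 * M 0 1) := by
  have hdet : M 0 0 * M 1 1 = 1 := by
    simpa only [Matrix.det_fin_two, hM, mul_zero, sub_zero] using M.det_coe
  refine Subtype.ext ?_
  simp only [Matrix.SpecialLinearGroup.coe_mul, Matrix.SpecialLinearGroup.coe_inv, coe_weyl,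
    coe_upperUnipotent, Matrix.adjugate_fin_two_of, Matrix.mul_fin_two]
  refine (Matrix.eta_fin_two M.1).trans ?_
  congr! 4 <;> grind

theorem mem_of_upperUnipotent_mem_of_weyl_mem {N : R → ℕ}
    (hN : ∀ a b, b ≠ 0 → ∃ q, N (a - q * b) < N b) {H : Subgroup (SpecialLinearGroup (Fin 2) R)}
    (hU : ∀ c, upperUnipotent c ∈ H) (hw : weyl R ∈ H)
    (M : SpecialLinearGroup (Fin 2) R) : M ∈ H := by
  induction hk : N (M 1 0) using Nat.strong_induction_on generalizing M with
  | _ k ih =>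
    by_cases hM : M 1 0 = 0
    · rw [eq_upperUnipotent_mul_of_apply_eq_zero hM]
      simp only [H.mul_mem_cancel_right, H.inv_mem, hU, hw]
    · obtain ⟨q, hq⟩ := hN (M 0 0) (M 1 0) hM
      rw [← H.mul_mem_cancel_left (hU (-q)), ← H.mul_mem_cancel_left hw]
      refine ih _ ?_ _ rfl
      rwa [weyl_mul_upperUnipotent_mul_apply, neg_mul, ← sub_eq_add_neg, ← hk]

end Generation

section Euclid

theorem quadraticNorm_pos {z : QuadraticAlgebra ℤ (-1) (-1)} (hz : z ≠ 0) : 0 < z.norm := by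
  have hne : z.re ≠ 0 ∨ z.im ≠ 0 := by
    contrapose! hz
    exact QuadraticAlgebra.ext hz.1 hz.2
  rw [QuadraticAlgebra.norm_def]
  rcases hne with h | h <;>
    nlinarith [sq_pos_of_ne_zero h, sq_nonneg (2 * z.re - z.im), sq_nonneg (2 * z.im - z.re)]

theorem exists_two_mul_abs_sub_mul_le (a : ℤ) {n : ℤ} (hn : 0 < n) :
    ∃ q, 2 * |a - n * q| ≤ n := by
  refine ⟨(2 * a + n) / (2 * n), ?_⟩
  have hnonneg := Int.emod_nonneg (2 * a + n) (by positivity : 2 * n ≠ 0)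
  have hlt := Int.emod_lt_of_pos (2 * a + n) (by positivity : 0 < 2 * n)
  rw [Int.emod_def] at hnonneg hlt
  suffices |2 * (a - n * ((2 * a + n) / (2 * n)))| ≤ n by rwa [abs_mul, abs_two] at this
  rw [abs_le]
  constructor <;> linarith

theorem norm_lt_mul_self_of_two_mul_abs_le {z : QuadraticAlgebra ℤ (-1) (-1)} {n : ℤ} (hn : 0 < n)
    (hre : 2 * |z.re| ≤ n) (him : 2 * |z.im| ≤ n) : z.norm < n * n := by
  have hre' : 4 * z.re ^ 2 ≤ n ^ 2 := by nlinarith [sq_abs z.re, abs_nonneg z.re]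
  have him' : 4 * z.im ^ 2 ≤ n ^ 2 := by nlinarith [sq_abs z.im, abs_nonneg z.im]
  rw [QuadraticAlgebra.norm_def]
  nlinarith [sq_nonneg (z.re + z.im), sq_pos_of_pos hn]

theorem exists_norm_sub_mul_lt (a : QuadraticAlgebra ℤ (-1) (-1))
    {b : QuadraticAlgebra ℤ (-1) (-1)} (hb : b ≠ 0) : ∃ q, (a - q * b).norm < b.norm := by
  have hn := quadraticNorm_pos hb
  obtain ⟨m, hm⟩ := exists_two_mul_abs_sub_mul_le (a * star b).re hn
  obtain ⟨k, hk⟩ := exists_two_mul_abs_sub_mul_le (a * star b).im hn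
  refine ⟨⟨m, k⟩, lt_of_mul_lt_mul_right ?_ hn.le⟩
  have hmul : (a - ⟨m, k⟩ * b) * star b =
      ⟨(a * star b).re - b.norm * m, (a * star b).im - b.norm * k⟩ := by
    rw [sub_mul, mul_assoc, ← QuadraticAlgebra.algebraMap_norm_eq_mul_star]
    ext <;> simp [mul_comm]
  calc (a - ⟨m, k⟩ * b).norm * b.norm = ((a - ⟨m, k⟩ * b) * star b).norm := by
        rw [map_mul, QuadraticAlgebra.norm_star]
    _ < b.norm * b.norm := by
        rw [hmul]
        exact norm_lt_mul_self_of_two_mul_abs_le hn hm hk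

variable {R : Type*} [CommRing R] {ω : R}

/-- The map to `R` from the abstract ring `ℤ[ω]` given by a root `ω` of `X² + X + 1`. -/
def rootHom (hω : ω ^ 2 + ω + 1 = 0) : QuadraticAlgebra ℤ (-1) (-1) →ₐ[ℤ] R :=
  QuadraticAlgebra.lift ⟨ω, by simp only [neg_smul, one_smul]; linear_combination hω⟩

theorem rootHom_apply (hω : ω ^ 2 + ω + 1 = 0) (z : QuadraticAlgebra ℤ (-1) (-1)) :
    rootHom hω z = z.re + z.im * ω := by
  simp [rootHom]

theorem rootHom_injective [CharZero R] (hω : ω ^ 2 + ω + 1 = 0) :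
    Function.Injective (rootHom hω) := by
  refine (injective_iff_map_eq_zero _).mpr fun z hz ↦ ?_
  by_contra hne
  have hnorm : (z.norm : R) = 0 := by
    simpa [hz] using congrArg (rootHom hω) (QuadraticAlgebra.algebraMap_norm_eq_mul_star z)
  exact (quadraticNorm_pos hne).ne' (Int.cast_eq_zero.mp hnorm)

theorem exists_euclidean_function [CharZero R] (hω : ω ^ 2 + ω + 1 = 0)
    (hR : ∀ r : R, ∃ m n : ℤ, r = m + n * ω) :
    ∃ N : R → ℕ, ∀ a b : R, b ≠ 0 → ∃ q, N (a - q * b) < N b := by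
  have hsurj : Function.Surjective (rootHom hω) := fun r ↦ by
    obtain ⟨m, n, rfl⟩ := hR r
    exact ⟨⟨m, n⟩, rootHom_apply hω _⟩
  let e := RingEquiv.ofBijective (rootHom hω) ⟨rootHom_injective hω, hsurj⟩
  refine ⟨fun r ↦ (e.symm r).norm.toNat, fun a b hb ↦ ?_⟩
  have hb' : e.symm b ≠ 0 := by simpa using hb
  obtain ⟨q, hq⟩ := exists_norm_sub_mul_lt (e.symm a) hb'
  refine ⟨e q, ?_⟩
  simp only [map_sub, map_mul, RingEquiv.symm_apply_apply]
  exact (Int.toNat_lt_toNat (quadraticNorm_pos hb')).mpr hq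

end Euclid

section Bianchi

open Matrix (SpecialLinearGroup)

variable {R : Type*} [CommRing R] {ω : R}

/-- The order-three generator `x` of the tetrahedral triple, as a matrix over a ring with a root
`ω` of `X² + X + 1`. -/
def cubicGen (hω : ω ^ 2 + ω + 1 = 0) : SpecialLinearGroup (Fin 2) R :=
  ⟨!![0, -ω ^ 2; ω, 1], by simp only [Matrix.det_fin_two_of]; linear_combination (ω - 1) * hω⟩

/-- The conjugate of the Weyl element by `diag(ω², ω)`. -/
def twistedWeyl (hω : ω ^ 2 + ω + 1 = 0) : SpecialLinearGroup (Fin 2) R :=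
  ⟨!![0, -ω; ω ^ 2, 0], by simp only [Matrix.det_fin_two_of]; linear_combination (ω - 1) * hω⟩

theorem coe_cubicGen (hω : ω ^ 2 + ω + 1 = 0) :
    (cubicGen hω : Matrix (Fin 2) (Fin 2) R) = !![0, -ω ^ 2; ω, 1] :=
  rfl

theorem coe_twistedWeyl (hω : ω ^ 2 + ω + 1 = 0) :
    (twistedWeyl hω : Matrix (Fin 2) (Fin 2) R) = !![0, -ω; ω ^ 2, 0] :=
  rfl

theorem upperUnipotent_root_eq (hω : ω ^ 2 + ω + 1 = 0) :
    upperUnipotent ω = weyl R * cubicGen hω * weyl R * twistedWeyl hω := by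
  refine Subtype.ext ?_
  simp only [Matrix.SpecialLinearGroup.coe_mul, coe_weyl, coe_cubicGen, coe_twistedWeyl,
    coe_upperUnipotent, Matrix.mul_fin_two]
  congr! 4 <;> grind

theorem weyl_mul_twistedWeyl_mul_upperUnipotent_one (hω : ω ^ 2 + ω + 1 = 0) :
    weyl R * twistedWeyl hω * upperUnipotent 1 =
      upperUnipotent ω * (weyl R * twistedWeyl hω) := by
  refine Subtype.ext ?_
  simp only [Matrix.SpecialLinearGroup.coe_mul, coe_weyl, coe_twistedWeyl,
    coe_upperUnipotent, Matrix.mul_fin_two]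
  congr! 4 <;> grind

theorem upperUnipotent_mem {H : Subgroup (SpecialLinearGroup (Fin 2) R)}
    (hR : ∀ r : R, ∃ m n : ℤ, r = m + n * ω) (h1 : upperUnipotent 1 ∈ H)
    (hroot : upperUnipotent ω ∈ H) (c : R) : upperUnipotent c ∈ H := by
  let A : AddSubgroup R :=
    { carrier := {c | upperUnipotent c ∈ H}
      zero_mem' := by simp
      add_mem' := fun ha hb ↦ by
        simpa [Matrix.SpecialLinearGroup.transvection_add] using H.mul_mem ha hb
      neg_mem' := fun ha ↦ by
        simpa [Matrix.SpecialLinearGroup.transvection_inv] using H.inv_mem ha }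
  obtain ⟨m, n, rfl⟩ := hR c
  rw [← zsmul_one m, ← zsmul_eq_mul]
  exact A.add_mem (A.zsmul_mem h1 m) (A.zsmul_mem hroot n)

theorem closure_generators_eq_top [CharZero R] (hω : ω ^ 2 + ω + 1 = 0)
    (hR : ∀ r : R, ∃ m n : ℤ, r = m + n * ω) :
    closure {cubicGen hω, weyl R} ⊔ closure {cubicGen hω, twistedWeyl hω} = ⊤ := by
  set H := closure {cubicGen hω, weyl R} ⊔ closure {cubicGen hω, twistedWeyl hω}
  have hx : cubicGen hω ∈ H := mem_sup_left (subset_closure (by simp))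
  have ht : weyl R ∈ H := mem_sup_left (subset_closure (by simp))
  have hs : twistedWeyl hω ∈ H := mem_sup_right (subset_closure (by simp))
  have hroot : upperUnipotent ω ∈ H := by
    rw [upperUnipotent_root_eq hω]
    exact H.mul_mem (H.mul_mem (H.mul_mem ht hx) ht) hs
  have hone : upperUnipotent 1 ∈ H := by
    rw [← H.mul_mem_cancel_left (H.mul_mem ht hs), weyl_mul_twistedWeyl_mul_upperUnipotent_one]
    exact H.mul_mem hroot (H.mul_mem ht hs)
  obtain ⟨N, hN⟩ := exists_euclidean_function hω hR
  exact eq_top_iff.mpr fun M _ ↦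
    mem_of_upperUnipotent_mem_of_weyl_mem hN (upperUnipotent_mem hR hone hroot) ht M

theorem mul_self_eq_trace_smul_sub_one (M : SpecialLinearGroup (Fin 2) R) :
    (M : Matrix (Fin 2) (Fin 2) R) * M = (M : Matrix (Fin 2) (Fin 2) R).trace • M.1 - 1 := by
  nontriviality R
  have h := Matrix.aeval_self_charpoly (M : Matrix (Fin 2) (Fin 2) R)
  simpa only [Matrix.charpoly_fin_two, M.det_coe, map_one, map_add, map_sub, map_mul,
    Polynomial.aeval_X, Polynomial.aeval_C, Algebra.algebraMap_eq_smul_one, smul_mul_assoc, one_mul,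
    sq, sub_add, sub_eq_zero] using h

theorem mk_eq_one_of_eq_neg_one {M : SpecialLinearGroup (Fin 2) R} (hM : M = -1) :
    (M : PSL2 R) = 1 := by
  rw [QuotientGroup.eq_one_iff, mem_center_iff, hM]
  simp

theorem mk_mul_self_of_trace_eq_zero {M : SpecialLinearGroup (Fin 2) R}
    (hM : (M : Matrix (Fin 2) (Fin 2) R).trace = 0) : (M * M : PSL2 R) = 1 := by
  refine mk_eq_one_of_eq_neg_one (M := M * M) (Subtype.ext ?_)
  simpa [hM] using mul_self_eq_trace_smul_sub_one M

theorem mk_pow_three_of_trace_eq_one {M : SpecialLinearGroup (Fin 2) R}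
    (hM : (M : Matrix (Fin 2) (Fin 2) R).trace = 1) : (M : PSL2 R) ^ 3 = 1 := by
  refine mk_eq_one_of_eq_neg_one (M := M ^ 3) (Subtype.ext ?_)
  have hsq : (M : Matrix (Fin 2) (Fin 2) R) * M = M - 1 := by
    rw [mul_self_eq_trace_smul_sub_one, hM, one_smul]
  rw [pow_three, Matrix.SpecialLinearGroup.coe_mul, Matrix.SpecialLinearGroup.coe_mul, hsq,
    mul_sub, hsq]
  simp

theorem isTetrahedralTriple_mk (hω : ω ^ 2 + ω + 1 = 0) :
    IsTetrahedralTriple (cubicGen hω : PSL2 R) (weyl R : PSL2 R) (twistedWeyl hω : PSL2 R) where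
  left :=
    { pow_three := mk_pow_three_of_trace_eq_one (by simp [coe_cubicGen])
      mul_self := mk_mul_self_of_trace_eq_zero (by simp [coe_weyl])
      mul_pow_three := mk_pow_three_of_trace_eq_one (M := weyl R * cubicGen hω) <| by
        simp only [Matrix.SpecialLinearGroup.coe_mul, coe_weyl, coe_cubicGen,
          Matrix.mul_fin_two, Matrix.trace_fin_two_of]
        grind }
  right :=
    { pow_three := mk_pow_three_of_trace_eq_one (by simp [coe_cubicGen])
      mul_self := mk_mul_self_of_trace_eq_zero (by simp [coe_twistedWeyl])
      mul_pow_three := mk_pow_three_of_trace_eq_one (M := twistedWeyl hω * cubicGen hω) <| by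
        simp only [Matrix.SpecialLinearGroup.coe_mul, coe_twistedWeyl, coe_cubicGen,
          Matrix.mul_fin_two, Matrix.trace_fin_two_of]
        grind }
  mul_pow_three := mk_pow_three_of_trace_eq_one (M := twistedWeyl hω * weyl R) <| by
    simp only [Matrix.SpecialLinearGroup.coe_mul, coe_twistedWeyl, coe_weyl,
      Matrix.mul_fin_two, Matrix.trace_fin_two_of]
    grind

theorem closure_mk_generators_eq_top [CharZero R] (hω : ω ^ 2 + ω + 1 = 0)
    (hR : ∀ r : R, ∃ m n : ℤ, r = m + n * ω) :
    closure {(cubicGen hω : PSL2 R), (weyl R : PSL2 R)} ⊔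
      closure {(cubicGen hω : PSL2 R), (twistedWeyl hω : PSL2 R)} = ⊤ := by
  have hmap := congrArg (map (QuotientGroup.mk' (center (SpecialLinearGroup (Fin 2) R))))
    (closure_generators_eq_top hω hR)
  rwa [Subgroup.map_sup, MonoidHom.map_closure, MonoidHom.map_closure, Set.image_pair,
    Set.image_pair, map_top_of_surjective _ (QuotientGroup.mk'_surjective _)] at hmap

end Bianchi

section CyclotomicField

-- `CyclotomicField.isCyclotomicExtension` uses a different, propositionally equal, `ℚ`-algebra
-- structure.
instance : IsCyclotomicExtension {3} ℚ (CyclotomicField 3 ℚ) := by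
  convert! CyclotomicField.isCyclotomicExtension 3 ℚ

theorem exists_eq_intCast_add_intCast_mul {ζ : CyclotomicField 3 ℚ} (hζ : IsPrimitiveRoot ζ 3)
    (r : Eisenstein) : ∃ m n : ℤ, r = m + n * hζ.toInteger := by
  have hdim : hζ.integralPowerBasis.dim = 2 := by
    rw [IsPrimitiveRoot.integralPowerBasis_dim, Nat.totient_prime Nat.prime_three]
  obtain ⟨f, hf, hr⟩ := hζ.integralPowerBasis.exists_eq_aeval r
  obtain ⟨n, m, rfl⟩ :=
    Polynomial.exists_eq_X_add_C_of_natDegree_le_one (Nat.le_of_lt_succ (hdim ▸ hf))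
  refine ⟨m, n, ?_⟩
  rw [hr, IsPrimitiveRoot.integralPowerBasis_gen]
  simp [add_comm]

end CyclotomicField

end EisensteinPSL2

/-- Every subgroup of `PSL(2, ℤ[ω])` of finite index at most `12` has first
Betti number at most `1`: it admits no surjection onto `ℤ × ℤ`. -/
theorem b1_le_one_of_small_index (Δ : Subgroup (PSL2 Eisenstein))
    (hfin : Δ.FiniteIndex) (h12 : Δ.index ≤ 12) :
    ¬ ∃ f : Δ →* Multiplicative ℤ × Multiplicative ℤ, Function.Surjective f := by
  have hζ := IsCyclotomicExtension.zeta_spec 3 ℚ (CyclotomicField 3 ℚ)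
  have hω : hζ.toInteger ^ 2 + hζ.toInteger + 1 = 0 :=
    IsCyclotomicExtension.Rat.Three.eta_sq_add_eta_add_one hζ
  exact (EisensteinPSL2.isTetrahedralTriple_mk hω).not_exists_surjective
    (EisensteinPSL2.closure_mk_generators_eq_top hω
      (EisensteinPSL2.exists_eq_intCast_add_intCast_mul hζ)) h12
end
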